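/- arXiv:2304.01998 — 2 statements merged into one kernel-verified Lean document; each statement's English description precedes it below -/
import Mathlib

section
/- The dimension of 𝒞_n(v) as a ℂ(v)-vector space equals 3, 20, 217, 3364, 71098, 1960867 for n = 1, 2, 3, 4, 5, 6 respectively. -/
noncomputable section

/-- The field `K = ℂ(v)` of rational functions over `ℂ`. -/
abbrev Kv : Type := RatFunc ℂ

/-- The variable `v ∈ ℂ(v)`. -/
noncomputable def vv : Kv := RatFunc.X

/-- The generator `g_i` of the free algebra (`.inl i ↦ g_i`). -/
noncomputable def bgF (n : ℕ) (i : Fin n) : FreeAlgebra Kv (Fin n ⊕ Fin n) :=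
  FreeAlgebra.ι Kv (Sum.inl i)

/-- The generator `e_i` of the free algebra (`.inr i ↦ e_i`). -/
noncomputable def beF (n : ℕ) (i : Fin n) : FreeAlgebra Kv (Fin n ⊕ Fin n) :=
  FreeAlgebra.ι Kv (Sum.inr i)

/-- Defining relations of the (type `A_n`) generalized algebra of braids and ties
`ℰ_n(v)`, for generators `g_1, …, g_n, e_1, …, e_n` (indexed here by `Fin n`,
with `|i − j|` rendered as `Nat.dist i j`). -/
inductive BTRel (n : ℕ) :
    FreeAlgebra Kv (Fin n ⊕ Fin n) → FreeAlgebra Kv (Fin n ⊕ Fin n) → Prop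
  | gg_comm (i j : Fin n) (h : 2 ≤ Nat.dist i j) :
      BTRel n (bgF n i * bgF n j) (bgF n j * bgF n i)
  | eg_comm (i j : Fin n) (h : 2 ≤ Nat.dist i j) :
      BTRel n (beF n i * bgF n j) (bgF n j * beF n i)
  | braid (i j : Fin n) (h : Nat.dist i j = 1) :
      BTRel n (bgF n i * bgF n j * bgF n i) (bgF n j * bgF n i * bgF n j)
  | egg (i j : Fin n) (h : Nat.dist i j = 1) :
      BTRel n (beF n i * bgF n j * bgF n i) (bgF n j * bgF n i * beF n j)
  | ee_comm (i j : Fin n) :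
      BTRel n (beF n i * beF n j) (beF n j * beF n i)
  | e_idem (i : Fin n) :
      BTRel n (beF n i * beF n i) (beF n i)
  | eg_same (i : Fin n) :
      BTRel n (beF n i * bgF n i) (bgF n i * beF n i)
  | eeg₁ (i j : Fin n) (h : Nat.dist i j = 1) :
      BTRel n (beF n i * beF n j * bgF n j) (beF n i * bgF n j * beF n i)
  | eeg₂ (i j : Fin n) (h : Nat.dist i j = 1) :
      BTRel n (beF n i * bgF n j * beF n i) (bgF n j * beF n i * beF n j)
  | quad (i : Fin n) :
      BTRel n (bgF n i * bgF n i)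
        (1 + (vv ^ 2 - 1) • (beF n i * (1 + bgF n i)))

/-- The generalized algebra of braids and ties `ℰ_n(v)` in type `A_n`. -/
abbrev BT (n : ℕ) := RingQuot (BTRel n)

/-- The generator `g_i` of `ℰ_n(v)`. -/
noncomputable def bg (n : ℕ) (i : Fin n) : BT n :=
  RingQuot.mkAlgHom Kv (BTRel n) (bgF n i)

/-- The generator `e_i` of `ℰ_n(v)`. -/
noncomputable def be (n : ℕ) (i : Fin n) : BT n :=
  RingQuot.mkAlgHom Kv (BTRel n) (beF n i)

/-- The subalgebra `𝒞_n(v) ⊆ ℰ_n(v)` generated by `g_1, …, g_n`. -/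
noncomputable def BTC (n : ℕ) : Subalgebra Kv (BT n) :=
  Algebra.adjoin Kv (Set.range (bg n))

/-!
On `e_i = 0` the generator `g_i` is an involution, and on `e_i = 1` it is a Hecke generator with
eigenvalues `v²` and `-1`. Accordingly `ℰ_n(v)` acts on the functions on pairs (set partition,
arrangement) of `n + 1` values: `e_i` tests whether the values at the positions `i` and `i + 1` lie
in the same block, and `g_i` exchanges them, with the Hecke relation inside a block. The orbit map
of the indicator of the identity arrangement is onto, and `ℰ_n(v)` is spanned by the products of a
tie element and a normal form of a permutation, one for each pair. So that map is injective and
identifies `𝒞_n(v)` with the cyclic module which the vector generates over the `g_i`.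

Antisymmetrizing an element of that module over a block gives the same result whether the values of
the block are tied or not. This determines the element from its values on the good pairs, in which
no block with at least two values is arranged in decreasing order. Conversely, the braid relation
puts enough elements of the form `e (1 + g)` into `𝒞_n(v)` to produce a vector with leading term at
every good pair. Hence `dim 𝒞_n(v)` is the number of good pairs, which satisfies a recursion
obtained by removing the block of one value.
-/

/-- Functions on pairs `(π, τ)` of a partition `π` of a set of values and an arrangement `τ` of
these values (`τ p` is the value at position `p`). Every `π` contributes an invariant direct summand
to the representation below. -/
abbrev TieModule (k α : Type*) : Type _ := Setoid α × Equiv.Perm α → k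

namespace TieModule

open Equiv

variable {k α : Type*} [CommRing k]

section Tie

open Classical in
/-- The indicator of `a` and `b` lying in the same block of `π`. -/
def tieCoeff (k : Type*) [CommRing k] (π : Setoid α) (a b : α) : k := if π a b then 1 else 0

/-- The tie between positions `p` and `r`: the projection onto the functions supported on the pairs
`(π, τ)` with `τ p` and `τ r` in the same block of `π`. -/
def tieOp (p r : α) : Module.End k (TieModule k α) where
  toFun x z := tieCoeff k z.1 (z.2 p) (z.2 r) * x z
  map_add' x y := by ext z; simp only [Pi.add_apply, mul_add]
  map_smul' c x := by ext z; simp only [Pi.smul_apply, smul_eq_mul, RingHom.id_apply, mul_left_comm]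

lemma tieOp_apply (p r : α) (x : TieModule k α) (π : Setoid α) (τ : Perm α) :
    tieOp p r x (π, τ) = tieCoeff k π (τ p) (τ r) * x (π, τ) := rfl

lemma tieCoeff_of_rel {π : Setoid α} {a b : α} (h : π a b) : tieCoeff k π a b = 1 := if_pos h

lemma tieCoeff_of_not_rel {π : Setoid α} {a b : α} (h : ¬ π a b) : tieCoeff k π a b = 0 := if_neg h

lemma tieCoeff_congr {π : Setoid α} {a b c d : α} (h : π a b ↔ π c d) :
    tieCoeff k π a b = tieCoeff k π c d := by
  by_cases h' : π a b
  · rw [tieCoeff_of_rel h', tieCoeff_of_rel (h.1 h')]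
  · rw [tieCoeff_of_not_rel h', tieCoeff_of_not_rel (mt h.2 h')]

lemma tieOp_mul_self (p r : α) : tieOp p r * tieOp p r = (tieOp p r : Module.End k _) := by
  ext1 x; funext ⟨π, τ⟩
  simp only [Module.End.mul_apply, tieOp_apply, tieCoeff]
  split_ifs <;> simp only [one_mul, zero_mul]

lemma tieOp_comm (p r s t : α) :
    tieOp p r * tieOp s t = (tieOp s t * tieOp p r : Module.End k (TieModule k α)) := by
  ext1 x; funext ⟨π, τ⟩
  simp only [Module.End.mul_apply, tieOp_apply, mul_left_comm]

lemma tieOp_symm (p r : α) : tieOp p r = (tieOp r p : Module.End k (TieModule k α)) := by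
  ext1 x; funext ⟨π, τ⟩
  simp only [tieOp_apply, tieCoeff_congr (π.comm' (x := τ p) (y := τ r))]

lemma tieOp_mul_tieOp (p r s : α) :
    tieOp p r * tieOp r s = (tieOp p s * tieOp r s : Module.End k (TieModule k α)) := by
  ext1 x; funext ⟨π, τ⟩
  simp only [Module.End.mul_apply, tieOp_apply]
  by_cases h : π (τ r) (τ s)
  · rw [tieCoeff_congr ⟨fun h' => π.trans' h' h, fun h' => π.trans' h' (π.symm' h)⟩]
  · simp only [tieCoeff_of_not_rel h, zero_mul, mul_zero]

section Conj

variable [DecidableEq α] {f g : Module.End k (TieModule k α)} {p r s : α}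

lemma tieOp_mul_mul_of_conj (hf : ∀ x y, f * tieOp x y = tieOp (swap p r x) (swap p r y) * f)
    (hg : ∀ x y, g * tieOp x y = tieOp (swap r s x) (swap r s y) * g)
    (hpr : p ≠ r) (hps : p ≠ s) (hrs : r ≠ s) : tieOp p r * g * f = g * f * tieOp r s := by
  rw [mul_assoc g, hf, swap_apply_right, swap_apply_of_ne_of_ne hps.symm hrs.symm, ← mul_assoc g,
    hg, swap_apply_of_ne_of_ne hpr hps, swap_apply_right]

lemma tieOp_mul_mul_tieOp_of_conj (hg : ∀ x y, g * tieOp x y = tieOp (swap r s x) (swap r s y) * g)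
    (hpr : p ≠ r) (hps : p ≠ s) : tieOp p r * g * tieOp p r = tieOp p r * tieOp r s * g := by
  have hties : tieOp p r * tieOp p s = (tieOp p r * tieOp r s : Module.End k (TieModule k α)) := by
    rw [tieOp_comm, tieOp_symm p s, tieOp_mul_tieOp, tieOp_comm, tieOp_symm s r]
  rw [mul_assoc, hg, swap_apply_of_ne_of_ne hpr hps, swap_apply_left, ← mul_assoc, hties]

lemma mul_tieOp_mul_tieOp_of_conj (hg : ∀ x y, g * tieOp x y = tieOp (swap r s x) (swap r s y) * g)
    (hpr : p ≠ r) (hps : p ≠ s) : g * tieOp p r * tieOp r s = tieOp p r * tieOp r s * g := by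
  rw [hg, mul_assoc, hg, swap_apply_of_ne_of_ne hpr hps, swap_apply_left, swap_apply_right,
    ← mul_assoc, tieOp_symm s r, ← tieOp_mul_tieOp]

end Conj

end Tie

variable [LinearOrder α]

open Classical in
/-- The coefficient of the exchange of two values in `braidOp`. -/
def swapCoeff (q : k) (π : Setoid α) (a b : α) : k := if π a b ∧ a < b then q else 1

open Classical in
/-- The diagonal coefficient in `braidOp`. -/
def diagCoeff (q : k) (π : Setoid α) (a b : α) : k := if π a b ∧ b < a then q - 1 else 0

/-- The braid generator exchanging the positions `p` and `r`: a Hecke generator with eigenvalues `q`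
and `-1` where the two values lie in the same block, the exchange itself elsewhere. -/
def braidOp (q : k) (p r : α) : Module.End k (TieModule k α) where
  toFun x z := swapCoeff q z.1 (z.2 p) (z.2 r) * x (z.1, z.2 * swap p r)
    + diagCoeff q z.1 (z.2 p) (z.2 r) * x z
  map_add' x y := by ext z; simp only [Pi.add_apply]; ring
  map_smul' c x := by ext z; simp only [Pi.smul_apply, smul_eq_mul, RingHom.id_apply]; ring

lemma braidOp_apply (q : k) (p r : α) (x : TieModule k α) (π : Setoid α) (τ : Perm α) :
    braidOp q p r x (π, τ) = swapCoeff q π (τ p) (τ r) * x (π, τ * swap p r)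
      + diagCoeff q π (τ p) (τ r) * x (π, τ) := rfl

lemma diagCoeff_of_not_rel {q : k} {π : Setoid α} {a b : α} (h : ¬ π a b) :
    diagCoeff q π a b = 0 := if_neg fun h' => h h'.1

lemma swapCoeff_of_not_rel {q : k} {π : Setoid α} {a b : α} (h : ¬ π a b) :
    swapCoeff q π a b = 1 := if_neg fun h' => h h'.1

lemma rel_apply_swap {π : Setoid α} {τ : Perm α} {p r : α} (h : π (τ p) (τ r)) (s : α) :
    π (τ s) (τ (swap p r s)) := by
  by_cases hp : s = p
  · rwa [hp, swap_apply_left]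
  by_cases hr : s = r
  · rw [hr, swap_apply_right]; exact π.symm' h
  · rw [swap_apply_of_ne_of_ne hp hr]

lemma braidOp_mul_tieOp (q : k) (p r s t : α) :
    braidOp q p r * tieOp s t = tieOp (swap p r s) (swap p r t) * braidOp q p r := by
  ext1 x; funext ⟨π, τ⟩
  simp only [Module.End.mul_apply, braidOp_apply, tieOp_apply, Perm.mul_apply]
  by_cases h : π (τ p) (τ r)
  · have hst : π (τ (swap p r s)) (τ (swap p r t)) ↔ π (τ s) (τ t) :=
      ⟨fun h' => π.trans' (rel_apply_swap h s) (π.trans' h' (π.symm' (rel_apply_swap h t))),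
        fun h' => π.trans' (π.symm' (rel_apply_swap h s)) (π.trans' h' (rel_apply_swap h t))⟩
    rw [tieCoeff_congr hst]
    ring
  · rw [diagCoeff_of_not_rel h]
    ring

lemma braidOp_mul_tieOp' (q : k) (p r s t : α) :
    braidOp q p r * tieOp s t = tieOp (swap r p s) (swap r p t) * braidOp q p r := by
  rw [swap_comm r p, braidOp_mul_tieOp]

lemma braidOp_comm (q : k) {p r s t : α} (hps : p ≠ s) (hpt : p ≠ t) (hrs : r ≠ s) (hrt : r ≠ t) :
    braidOp q p r * braidOp q s t = braidOp q s t * braidOp q p r := by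
  have hswap : swap p r * swap s t = swap s t * swap p r := by
    rw [mul_swap_eq_swap_mul, swap_apply_of_ne_of_ne hps.symm hrs.symm,
      swap_apply_of_ne_of_ne hpt.symm hrt.symm]
  ext1 x; funext ⟨π, τ⟩
  simp only [Module.End.mul_apply, braidOp_apply, Perm.mul_apply,
    swap_apply_of_ne_of_ne hps hpt, swap_apply_of_ne_of_ne hrs hrt,
    swap_apply_of_ne_of_ne hps.symm hrs.symm, swap_apply_of_ne_of_ne hpt.symm hrt.symm,
    mul_assoc τ, hswap]
  ring

lemma braidOp_mul_self (q : k) {p r : α} (h : p ≠ r) :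
    braidOp q p r * braidOp q p r = 1 + (q - 1) • (tieOp p r * (1 + braidOp q p r)) := by
  ext1 x; funext ⟨π, τ⟩
  simp only [Module.End.mul_apply, tieOp_apply, braidOp_apply, Perm.mul_apply, swap_apply_left,
    swap_apply_right, LinearMap.add_apply, LinearMap.smul_apply, Module.End.one_apply, Pi.add_apply,
    Pi.smul_apply, smul_eq_mul, mul_assoc τ, swap_mul_self, mul_one]
  unfold swapCoeff diagCoeff tieCoeff
  rw [π.comm' (x := τ r)]
  by_cases hπ : π (τ p) (τ r)
  · rcases lt_or_gt_of_ne (τ.injective.ne h) with hlt | hlt <;>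
      simp only [hπ, hlt, hlt.not_gt, and_true, and_false, if_true, if_false] <;> ring
  · simp [hπ]

lemma swap_mul_swap_mul_swap_braid {p r s : α} (hpr : p ≠ r) (hps : p ≠ s) (hrs : r ≠ s) :
    swap p r * swap r s * swap p r = swap r s * swap p r * swap r s := by
  rw [swap_mul_swap_mul_swap hpr hps, swap_comm p r, swap_comm r s,
    swap_mul_swap_mul_swap hrs.symm hps.symm, swap_comm]

lemma braidOp_braid (q : k) {p r s : α} (hpr : p ≠ r) (hps : p ≠ s) (hrs : r ≠ s) :
    braidOp q p r * braidOp q r s * braidOp q p r =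
      braidOp q r s * braidOp q p r * braidOp q r s := by
  ext1 x; funext ⟨π, τ⟩
  have hτ : τ * swap r s * swap p r * swap r s = τ * swap p r * swap r s * swap p r := by
    simp only [mul_assoc τ, swap_mul_swap_mul_swap_braid hpr hps hrs]
  have hcancel (ω : Perm α) (t u : α) : ω * swap t u * swap t u = ω := by
    rw [mul_assoc, swap_mul_self, mul_one]
  simp only [Module.End.mul_apply, braidOp_apply, Perm.mul_apply, swap_apply_left, swap_apply_right,
    swap_apply_of_ne_of_ne hpr hps, swap_apply_of_ne_of_ne hps.symm hrs.symm, hcancel, hτ]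
  have hab := τ.injective.ne hpr
  have hac := τ.injective.ne hps
  have hbc := τ.injective.ne hrs
  generalize τ p = a at *
  generalize τ r = b at *
  generalize τ s = c at *
  unfold swapCoeff diagCoeff
  rw [π.comm' (x := b) (y := a), π.comm' (x := c) (y := b)]
  have h₁ : π a b → π b c → π a c := π.trans'
  have h₂ : π a b → π a c → π b c := fun u v => π.trans' (π.symm' u) v
  have h₃ : π a c → π b c → π a b := fun u v => π.trans' u (π.symm' v)
  -- Up to transitivity `π` ties no, one or all pairs among `a`, `b`, `c`; go through their orders.
  by_cases πab : π a b <;> by_cases πbc : π b c <;> by_cases πac : π a c <;>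
  first
  | (exfalso; tauto)
  | (clear h₁ h₂ h₃
     rcases lt_or_gt_of_ne hab with o₁ | o₁ <;> rcases lt_or_gt_of_ne hac with o₂ | o₂ <;>
      rcases lt_or_gt_of_ne hbc with o₃ | o₃ <;>
      first
      | (exfalso; order)
      | (simp only [πab, πbc, πac, o₁, o₂, o₃, o₁.not_gt, o₂.not_gt, o₃.not_gt, and_true, and_false,
          if_true, if_false]; ring))

end TieModule

namespace BT

open TieModule

/-- The images of the generators `g_i` and `e_i` in the representation on `TieModule`. -/
def repGen (n : ℕ) : Fin n ⊕ Fin n → Module.End Kv (TieModule Kv (Fin (n + 1))) :=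
  Sum.elim (fun i => braidOp (vv ^ 2) i.castSucc i.succ) (fun i => tieOp i.castSucc i.succ)

lemma castSucc_succ_cases_of_dist_eq_one {n : ℕ} {i j : Fin n} (h : Nat.dist i j = 1) :
    i.succ = j.castSucc ∧ i.castSucc ≠ j.succ ∨ j.succ = i.castSucc ∧ j.castSucc ≠ i.succ := by
  simp only [Nat.dist, ne_eq, Fin.ext_iff, Fin.val_succ, Fin.val_castSucc] at *
  omega

lemma castSucc_succ_ne_of_two_le_dist {n : ℕ} {i j : Fin n} (h : 2 ≤ Nat.dist i j) :
    i.castSucc ≠ j.castSucc ∧ i.castSucc ≠ j.succ ∧ i.succ ≠ j.castSucc ∧ i.succ ≠ j.succ := by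
  simp only [Nat.dist, ne_eq, Fin.ext_iff, Fin.val_succ, Fin.val_castSucc] at *
  omega

section AdjacentTies

variable {k : Type*} [CommRing k] {q : k} {n : ℕ} {i j : Fin n}

lemma tieOp_mul_braidOp_mul_tieOp (h : Nat.dist i j = 1) :
    tieOp i.castSucc i.succ * braidOp q j.castSucc j.succ * tieOp i.castSucc i.succ =
      tieOp i.castSucc i.succ * tieOp j.castSucc j.succ * braidOp q j.castSucc j.succ := by
  have hne : i.castSucc ≠ i.succ := i.castSucc_lt_succ.ne
  rcases castSucc_succ_cases_of_dist_eq_one h with ⟨h, hij⟩ | ⟨h, hij⟩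
  · rw [h, tieOp_mul_mul_tieOp_of_conj (braidOp_mul_tieOp _ _ _) (h ▸ hne) hij]
  · rw [h, tieOp_symm i.castSucc, tieOp_symm j.castSucc,
      tieOp_mul_mul_tieOp_of_conj (braidOp_mul_tieOp' _ _ _) hne.symm hij.symm]

lemma braidOp_mul_tieOp_mul_tieOp (h : Nat.dist i j = 1) :
    braidOp q j.castSucc j.succ * tieOp i.castSucc i.succ * tieOp j.castSucc j.succ =
      tieOp i.castSucc i.succ * tieOp j.castSucc j.succ * braidOp q j.castSucc j.succ := by
  have hne : i.castSucc ≠ i.succ := i.castSucc_lt_succ.ne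
  rcases castSucc_succ_cases_of_dist_eq_one h with ⟨h, hij⟩ | ⟨h, hij⟩
  · rw [h, mul_tieOp_mul_tieOp_of_conj (braidOp_mul_tieOp _ _ _) (h ▸ hne) hij]
  · rw [h, tieOp_symm i.castSucc, tieOp_symm j.castSucc,
      mul_tieOp_mul_tieOp_of_conj (braidOp_mul_tieOp' _ _ _) hne.symm hij.symm]

end AdjacentTies

open Equiv in
lemma lift_repGen_eq_of_rel {n : ℕ} {x y : FreeAlgebra Kv (Fin n ⊕ Fin n)} (h : BTRel n x y) :
    FreeAlgebra.lift Kv (repGen n) x = FreeAlgebra.lift Kv (repGen n) y := by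
  have hne (i : Fin n) : i.castSucc ≠ i.succ := i.castSucc_lt_succ.ne
  cases h <;>
    simp only [bgF, beF, map_mul, map_add, map_one, map_smul, FreeAlgebra.lift_ι_apply, repGen,
      Sum.elim_inl, Sum.elim_inr]
  case gg_comm i j h =>
    obtain ⟨h₁, h₂, h₃, h₄⟩ := castSucc_succ_ne_of_two_le_dist h
    exact braidOp_comm _ h₁ h₂ h₃ h₄
  case eg_comm i j h =>
    obtain ⟨h₁, h₂, h₃, h₄⟩ := castSucc_succ_ne_of_two_le_dist h
    rw [braidOp_mul_tieOp, swap_apply_of_ne_of_ne h₁ h₂, swap_apply_of_ne_of_ne h₃ h₄]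
  case braid i j h =>
    rcases castSucc_succ_cases_of_dist_eq_one h with ⟨h, hij⟩ | ⟨h, hij⟩
    · simpa only [h] using braidOp_braid _ (h ▸ hne i) hij (hne j)
    · simpa only [h] using (braidOp_braid _ (h ▸ hne j) hij (hne i)).symm
  case egg i j h =>
    rcases castSucc_succ_cases_of_dist_eq_one h with ⟨h, hij⟩ | ⟨h, hij⟩
    · rw [h]
      exact tieOp_mul_mul_of_conj (braidOp_mul_tieOp _ _ _) (braidOp_mul_tieOp _ _ _)
        (h ▸ hne i) hij (hne j)
    · rw [h, tieOp_symm, tieOp_symm j.castSucc]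
      exact tieOp_mul_mul_of_conj (braidOp_mul_tieOp' _ _ _) (braidOp_mul_tieOp' _ _ _)
        (hne i).symm hij.symm (h ▸ hne j).symm
  case ee_comm i j => exact tieOp_comm _ _ _ _
  case e_idem i => exact tieOp_mul_self _ _
  case eg_same i =>
    rw [braidOp_mul_tieOp, swap_apply_left, swap_apply_right, tieOp_symm]
  case eeg₁ i j h => exact (tieOp_mul_braidOp_mul_tieOp h).symm
  case eeg₂ i j h => rw [tieOp_mul_braidOp_mul_tieOp h, braidOp_mul_tieOp_mul_tieOp h]
  case quad i => exact braidOp_mul_self _ (hne i)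

/-- The representation of `ℰ_n(v)` on `TieModule`. -/
def rep (n : ℕ) : BT n →ₐ[Kv] Module.End Kv (TieModule Kv (Fin (n + 1))) :=
  RingQuot.liftAlgHom Kv ⟨FreeAlgebra.lift Kv (repGen n), fun _ _ => lift_repGen_eq_of_rel⟩

lemma rep_bg {n : ℕ} (i : Fin n) : rep n (bg n i) = braidOp (vv ^ 2) i.castSucc i.succ := by
  simp [rep, bg, bgF, repGen]

lemma rep_be {n : ℕ} (i : Fin n) : rep n (be n i) = tieOp i.castSucc i.succ := by
  simp [rep, be, beF, repGen]

end BT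

section BraidSMul

variable {G X : Type*} [Monoid G] [MulAction G X] {a b : G} {x : X}

lemma smul_smul_smul_of_braid (hab : a * b * a = b * a * b) (hx : b • x = x) :
    a • b • a • x = b • a • x := by
  rw [smul_smul, smul_smul, hab, mul_smul, mul_smul, hx]

lemma smul_smul_smul_eq_of_braid (hab : a * b * a = b * a * b) (hb : b • x = x)
    (ha : a • a • x = x) : b • b • a • x = a • x := by
  rw [← smul_smul_smul_of_braid hab hb, smul_smul a b, smul_smul b, ← mul_assoc, ← hab, mul_smul,
    mul_smul, ha, hb]

end BraidSMul

open ConjAct in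
lemma toConjAct_smul_eq_iff {R : Type*} [Ring R] {u : Rˣ} {x y : R} :
    toConjAct u • x = y ↔ (u : R) * x = y * u := by
  rw [ConjAct.units_smul_def, ofConjAct_toConjAct, Units.mul_inv_eq_iff_eq_mul]

/-- The defining relations of the algebra of braids and ties, with parameter `q` in place of `v²`,
for units `g 0, …, g (n - 1)` and elements `e 0, …, e (n - 1)` of an algebra. -/
structure BraidTieRelations {k R : Type*} [CommRing k] [Ring R] [Algebra k R] (q : k) (n : ℕ)
    (g : ℕ → Rˣ) (e : ℕ → R) : Prop where
  g_comm : ∀ i j, i + 2 ≤ j → j < n → g i * g j = g j * g i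
  e_mul_g : ∀ i j, i + 2 ≤ j → j < n → e i * g j = g j * e i
  g_mul_e : ∀ i j, i + 2 ≤ j → j < n → g i * e j = e j * g i
  braid : ∀ i, i + 1 < n → g i * g (i + 1) * g i = g (i + 1) * g i * g (i + 1)
  e_succ_mul_g_mul_g : ∀ i, i + 1 < n → e (i + 1) * g i * g (i + 1) = g i * g (i + 1) * e i
  e_comm : ∀ i j, i < n → j < n → e i * e j = e j * e i
  e_idem : ∀ i, i < n → e i * e i = e i
  e_mul_g_self : ∀ i, i < n → e i * g i = g i * e i
  e_mul_e_mul_g : ∀ i, i + 1 < n → e i * e (i + 1) * g (i + 1) = e i * g (i + 1) * e i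
  e_mul_g_mul_e : ∀ i, i + 1 < n → e i * g (i + 1) * e i = g (i + 1) * e i * e (i + 1)
  g_sq : ∀ i, i < n → (g i : R) * g i = 1 + (q - 1) • (e i * (1 + g i))

namespace BraidTieRelations

open ConjAct Equiv

variable {k R : Type*} [CommRing k] [Ring R] [Algebra k R] {q : k} {n : ℕ} {g : ℕ → Rˣ} {e : ℕ → R}

/-- The tie between the positions `i` and `i + d + 1`, obtained from `e i` by moving its right end
with conjugations. -/
def rightTie (g : ℕ → Rˣ) (e : ℕ → R) (i : ℕ) : ℕ → R
  | 0 => e i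
  | d + 1 => toConjAct (g (i + d + 1)) • rightTie g e i d

lemma rightTie_zero (i : ℕ) : rightTie g e i 0 = e i := rfl

lemma rightTie_succ (i d : ℕ) :
    rightTie g e i (d + 1) = toConjAct (g (i + d + 1)) • rightTie g e i d := rfl

lemma toConjAct_comm (H : BraidTieRelations q n g e) {i j : ℕ} (hij : i + 2 ≤ j) (hj : j < n) :
    toConjAct (g i) * toConjAct (g j) = toConjAct (g j) * toConjAct (g i) :=
  congrArg toConjAct (H.g_comm i j hij hj)

lemma toConjAct_braid (H : BraidTieRelations q n g e) {i : ℕ} (hi : i + 1 < n) :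
    toConjAct (g i) * toConjAct (g (i + 1)) * toConjAct (g i) =
      toConjAct (g (i + 1)) * toConjAct (g i) * toConjAct (g (i + 1)) :=
  congrArg toConjAct (H.braid i hi)

lemma smul_e_self (H : BraidTieRelations q n g e) {i : ℕ} (hi : i < n) :
    toConjAct (g i) • e i = e i :=
  toConjAct_smul_eq_iff.2 (H.e_mul_g_self i hi).symm

lemma smul_smul_e (H : BraidTieRelations q n g e) {i : ℕ} (hi : i + 1 < n) :
    toConjAct (g (i + 1)) • toConjAct (g (i + 1)) • e i = e i := by
  have hcomm : e (i + 1) * g (i + 1) * e i = e i * (e (i + 1) * g (i + 1)) := by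
    rw [← mul_assoc (e i), H.e_mul_e_mul_g i hi, H.e_mul_g_mul_e i hi, mul_assoc (g (i + 1) : R),
      H.e_comm i (i + 1) (by omega) hi, ← mul_assoc, H.e_mul_g_self (i + 1) hi]
  rw [smul_smul, ← toConjAct_mul, toConjAct_smul_eq_iff, Units.val_mul, H.g_sq (i + 1) hi]
  simp only [mul_add, add_mul, mul_one, one_mul, smul_add, mul_smul_comm, smul_mul_assoc, hcomm,
    H.e_comm i (i + 1) (by omega) hi]

lemma smul_rightTie_of_gt (H : BraidTieRelations q n g e) {i d j : ℕ} (h : i + d + 2 ≤ j)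
    (hj : j < n) : toConjAct (g j) • rightTie g e i d = rightTie g e i d := by
  induction d with
  | zero => exact toConjAct_smul_eq_iff.2 (H.e_mul_g i j h hj).symm
  | succ d ih =>
    rw [rightTie_succ, smul_smul, ← H.toConjAct_comm (by omega) hj, mul_smul, ih (by omega)]

lemma smul_rightTie_of_lt (H : BraidTieRelations q n g e) {i d j : ℕ} (h : j + 2 ≤ i)
    (hd : i + d < n) : toConjAct (g j) • rightTie g e i d = rightTie g e i d := by
  induction d with
  | zero => exact toConjAct_smul_eq_iff.2 (H.g_mul_e j i h hd)
  | succ d ih =>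
    rw [rightTie_succ, smul_smul, H.toConjAct_comm (by omega) (by omega), mul_smul, ih (by omega)]

lemma smul_smul_rightTie_right (H : BraidTieRelations q n g e) {i d : ℕ} (h : i + d + 1 < n) :
    toConjAct (g (i + d + 1)) • toConjAct (g (i + d + 1)) • rightTie g e i d =
      rightTie g e i d := by
  induction d with
  | zero => exact H.smul_smul_e h
  | succ d ih =>
    exact smul_smul_smul_eq_of_braid (H.toConjAct_braid (by omega))
      (H.smul_rightTie_of_gt le_rfl (by omega)) (ih (by omega))

lemma smul_rightTie_of_between (H : BraidTieRelations q n g e) {i d j : ℕ} (hij : i < j)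
    (hjd : j + 1 ≤ i + d) (hd : i + d < n) :
    toConjAct (g j) • rightTie g e i d = rightTie g e i d := by
  induction d with
  | zero => omega
  | succ d ih =>
    rcases hjd.lt_or_eq with hjd | hjd
    · rw [rightTie_succ, smul_smul, H.toConjAct_comm (by omega) (by omega), mul_smul,
        ih (by omega) (by omega)]
    · obtain ⟨d, rfl⟩ : ∃ d', d = d' + 1 := ⟨d - 1, by omega⟩
      obtain rfl : j = i + d + 1 := by omega
      exact smul_smul_smul_of_braid (H.toConjAct_braid (by omega))
        (H.smul_rightTie_of_gt le_rfl (by omega))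

lemma smul_rightTie_of_ne (H : BraidTieRelations q n g e) {i d j : ℕ} (hd : i + d < n) (hj : j < n)
    (h₁ : j ≠ i) (h₂ : j + 1 ≠ i) (h₃ : j ≠ i + d) (h₄ : j ≠ i + d + 1) :
    toConjAct (g j) • rightTie g e i d = rightTie g e i d := by
  by_cases hlt : j < i
  · exact H.smul_rightTie_of_lt (by omega) hd
  by_cases hle : j ≤ i + d
  · exact H.smul_rightTie_of_between (by omega) (by omega) hd
  · exact H.smul_rightTie_of_gt (by omega) hj

lemma smul_rightTie_left (H : BraidTieRelations q n g e) {i d : ℕ} (h : i + d + 1 < n) :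
    toConjAct (g i) • rightTie g e i (d + 1) = rightTie g e (i + 1) d := by
  induction d with
  | zero =>
    rw [rightTie_succ, smul_smul, ← toConjAct_mul, rightTie_zero, rightTie_zero,
      toConjAct_smul_eq_iff, Units.val_mul, ← mul_assoc]
    exact (H.e_succ_mul_g_mul_g i h).symm
  | succ d ih =>
    rw [rightTie_succ, smul_smul, H.toConjAct_comm (by omega) (by omega), mul_smul, ih (by omega),
      rightTie_succ, add_right_comm i 1, add_assoc i d 1]

lemma smul_smul_rightTie_left (H : BraidTieRelations q n g e) {i d : ℕ} (h : i + d + 1 < n) :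
    toConjAct (g i) • toConjAct (g i) • rightTie g e i (d + 1) = rightTie g e i (d + 1) := by
  induction d with
  | zero =>
    exact smul_smul_smul_eq_of_braid (H.toConjAct_braid h).symm (H.smul_e_self (by omega))
      (H.smul_smul_e h)
  | succ d ih =>
    have hcomm := H.toConjAct_comm (i := i) (j := i + (d + 1) + 1) (by omega) (by omega)
    rw [rightTie_succ, smul_smul _ _ (rightTie g e i (d + 1)), hcomm, mul_smul, smul_smul, hcomm,
      mul_smul, ih (by omega)]

/-- The tie between two arbitrary positions. -/
def tie (g : ℕ → Rˣ) (e : ℕ → R) (i j : Fin (n + 1)) : R :=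
  if (i : ℕ) < j then rightTie g e i (j - i - 1)
  else if (j : ℕ) < i then rightTie g e j (i - j - 1) else 1

lemma tie_symm (i j : Fin (n + 1)) : tie g e i j = tie g e j i := by
  unfold tie; split_ifs <;> first | rfl | omega

lemma tie_self (i : Fin (n + 1)) : tie g e i i = 1 := by simp [tie]

lemma tie_eq_rightTie {i j : Fin (n + 1)} {d : ℕ} (h : (j : ℕ) = i + d + 1) :
    tie g e i j = rightTie g e i d := by
  rw [tie, if_pos (by omega), h, Nat.sub_sub, add_assoc, Nat.add_sub_add_left, Nat.add_sub_cancel]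

lemma tie_castSucc_succ (i : Fin n) : tie g e i.castSucc i.succ = e i :=
  tie_eq_rightTie (d := 0) rfl

lemma smul_tie_of_lt (H : BraidTieRelations q n g e) (m : Fin n) {i j : Fin (n + 1)} (hij : i < j) :
    toConjAct (g m) • tie g e i j =
      tie g e (swap m.castSucc m.succ i) (swap m.castSucc m.succ j) := by
  obtain ⟨d, hd⟩ := Nat.exists_eq_add_of_lt hij
  have hcast := Fin.val_castSucc m
  have hsucc := Fin.val_succ m
  rw [tie_eq_rightTie hd]
  by_cases hi₀ : i = m.castSucc
  · subst hi₀
    rw [swap_apply_left]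
    by_cases hj : j = m.succ
    · subst hj
      obtain rfl : d = 0 := by omega
      rw [swap_apply_right, tie_symm, tie_castSucc_succ]
      exact H.smul_e_self m.2
    · have hj' : (j : ℕ) ≠ m + 1 := fun h => hj (Fin.ext h)
      obtain ⟨d, rfl⟩ := Nat.exists_eq_succ_of_ne_zero (show d ≠ 0 by rintro rfl; exact hj' hd)
      rw [swap_apply_of_ne_of_ne hij.ne' hj, tie_eq_rightTie (d := d) (by omega)]
      exact H.smul_rightTie_left (by omega)
  by_cases hi₁ : i = m.succ
  · subst hi₁
    rw [swap_apply_right, swap_apply_of_ne_of_ne ((m.castSucc_lt_succ.trans hij).ne') hij.ne',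
      tie_eq_rightTie (d := d + 1) (by omega), Fin.val_succ, Fin.val_castSucc,
      ← H.smul_rightTie_left (by omega), H.smul_smul_rightTie_left (by omega)]
  rw [swap_apply_of_ne_of_ne hi₀ hi₁]
  by_cases hj₀ : j = m.castSucc
  · subst hj₀
    rw [swap_apply_left, tie_eq_rightTie (d := d + 1) (by omega), rightTie_succ, ← hd,
      Fin.val_castSucc]
  simp only [Fin.ext_iff, Fin.val_succ, Fin.val_castSucc] at hi₀ hi₁ hj₀
  by_cases hj₁ : j = m.succ
  · subst hj₁
    obtain ⟨d, rfl⟩ := Nat.exists_eq_succ_of_ne_zero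
      (show d ≠ 0 by omega)
    rw [swap_apply_right, tie_eq_rightTie (d := d) (by omega), rightTie_succ,
      show (m : ℕ) = i + d + 1 by omega]
    exact H.smul_smul_rightTie_right (by omega)
  · rw [swap_apply_of_ne_of_ne (Fin.ne_of_val_ne hj₀) hj₁, tie_eq_rightTie hd]
    simp only [Fin.ext_iff, Fin.val_succ] at hj₁
    exact H.smul_rightTie_of_ne (by omega) m.2 (by omega) (by omega) (by omega) (by omega)

lemma smul_tie (H : BraidTieRelations q n g e) (m : Fin n) (i j : Fin (n + 1)) :
    toConjAct (g m) • tie g e i j =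
      tie g e (swap m.castSucc m.succ i) (swap m.castSucc m.succ j) := by
  rcases lt_trichotomy i j with h | rfl | h
  · exact H.smul_tie_of_lt m h
  · rw [tie_self, tie_self, smul_one]
  · rw [tie_symm, tie_symm (swap _ _ i)]
    exact H.smul_tie_of_lt m h

/-- The units whose conjugation permutes the ties by a permutation of the positions. -/
def permutesTies (n : ℕ) (g : ℕ → Rˣ) (e : ℕ → R) : Submonoid Rˣ where
  carrier := {u | ∃ w : Perm (Fin (n + 1)), ∀ i j,
    toConjAct u • tie g e i j = tie g e (w i) (w j)}
  one_mem' := ⟨1, fun i j => by simp⟩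
  mul_mem' := by
    rintro u u' ⟨w, hw⟩ ⟨w', hw'⟩
    exact ⟨w * w', fun i j => by rw [toConjAct_mul, mul_smul, hw', hw]; rfl⟩

lemma g_mem_permutesTies (H : BraidTieRelations q n g e) {i : ℕ} (hi : i < n) :
    g i ∈ permutesTies n g e :=
  ⟨_, H.smul_tie ⟨i, hi⟩⟩

lemma exists_smul_tie_perm (H : BraidTieRelations q n g e) (w : Perm (Fin (n + 1))) :
    ∃ u : Rˣ, ∀ i j, toConjAct u • tie g e i j = tie g e (w i) (w j) := by
  have hw : w ∈ Submonoid.closure (Set.range fun i : Fin n => swap i.castSucc i.succ) := by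
    rw [Perm.mclosure_swap_castSucc_succ]; trivial
  induction hw using Submonoid.closure_induction with
  | mem w hw => obtain ⟨m, rfl⟩ := hw; exact ⟨g m, H.smul_tie m⟩
  | one => exact ⟨1, fun i j => by simp⟩
  | mul w w' _ _ hw hw' =>
    obtain ⟨u, hu⟩ := hw
    obtain ⟨u', hu'⟩ := hw'
    exact ⟨u * u', fun i j => by rw [toConjAct_mul, mul_smul, hu', hu]; rfl⟩

lemma exists_smul_tie_castLE (H : BraidTieRelations q n g e) {m : ℕ} {f : Fin m → Fin (n + 1)}
    (hf : Function.Injective f) (hm : m ≤ n + 1) :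
    ∃ u : Rˣ, ∀ a b, toConjAct u • tie g e (a.castLE hm) (b.castLE hm) = tie g e (f a) (f b) := by
  obtain ⟨w, hw⟩ := (Perm.isMultiplyPretransitive (Fin (n + 1)) m).exists_smul_eq
    (Fin.castLEEmb hm) ⟨f, hf⟩
  obtain ⟨u, hu⟩ := H.exists_smul_tie_perm w
  have hwf (a : Fin m) : w (a.castLE hm) = f a := DFunLike.congr_fun hw a
  exact ⟨u, fun a b => by rw [hu, hwf, hwf]⟩

end BraidTieRelations

lemma injective_vecCons_iff {α : Type*} {m : ℕ} {a : α} {f : Fin m → α} :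
    Function.Injective (Matrix.vecCons a f) ↔ a ∉ Set.range f ∧ Function.Injective f :=
  Fin.cons_injective_iff

namespace BraidTieRelations

open ConjAct Equiv

variable {k R : Type*} [CommRing k] [Ring R] [Algebra k R] {q : k} {n : ℕ} {g : ℕ → Rˣ} {e : ℕ → R}

lemma rightTie_mul_self (H : BraidTieRelations q n g e) {i : ℕ} (hi : i < n) (d : ℕ) :
    rightTie g e i d * rightTie g e i d = rightTie g e i d := by
  induction d with
  | zero => exact H.e_idem i hi
  | succ d ih => rw [rightTie_succ, ← smul_mul', ih]

lemma tie_mul_self (H : BraidTieRelations q n g e) (i j : Fin (n + 1)) :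
    tie g e i j * tie g e i j = tie g e i j := by
  unfold tie
  split_ifs
  · exact H.rightTie_mul_self (by omega) _
  · exact H.rightTie_mul_self (by omega) _
  · exact one_mul 1

lemma tie_commute_of_common (H : BraidTieRelations q n g e) (i j l : Fin (n + 1)) :
    Commute (tie g e i j) (tie g e j l) := by
  rcases eq_or_ne i j with rfl | hij
  · rw [tie_self]; exact .one_left _
  rcases eq_or_ne i l with rfl | hil
  · rw [tie_symm]
  rcases eq_or_ne j l with rfl | hjl
  · rw [tie_self]; exact .one_right _
  have hinj : Function.Injective ![i, j, l] := by
    simp [injective_vecCons_iff, Function.injective_of_subsingleton, *]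
  have hle : 3 ≤ n + 1 := by simpa using Fintype.card_le_of_injective _ hinj
  obtain ⟨u, hu⟩ := H.exists_smul_tie_castLE hinj hle
  have h₀₁ := hu 0 1
  have h₁₂ := hu 1 2
  rw [tie_eq_rightTie (d := 0) rfl] at h₀₁ h₁₂
  have hcomm := congrArg (toConjAct u • ·) (H.e_comm 0 1 (by omega) (by omega))
  simp only [smul_mul'] at hcomm
  exact (h₀₁.symm ▸ h₁₂.symm ▸ hcomm : _)

lemma tie_commute (H : BraidTieRelations q n g e) (i j l m : Fin (n + 1)) :
    Commute (tie g e i j) (tie g e l m) := by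
  rcases eq_or_ne i j with rfl | hij
  · rw [tie_self]; exact .one_left _
  rcases eq_or_ne l m with rfl | hlm
  · rw [tie_self]; exact .one_right _
  rcases eq_or_ne i l with rfl | hil
  · rw [tie_symm i j]; exact H.tie_commute_of_common _ _ _
  rcases eq_or_ne j l with rfl | hjl
  · exact H.tie_commute_of_common _ _ _
  rcases eq_or_ne i m with rfl | him
  · rw [tie_symm i j, tie_symm l]; exact H.tie_commute_of_common _ _ _
  rcases eq_or_ne j m with rfl | hjm
  · rw [tie_symm l]; exact H.tie_commute_of_common _ _ _
  have hinj : Function.Injective ![i, j, l, m] := by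
    simp [injective_vecCons_iff, Function.injective_of_subsingleton, *]
  have hle : 4 ≤ n + 1 := by simpa using Fintype.card_le_of_injective _ hinj
  obtain ⟨u, hu⟩ := H.exists_smul_tie_castLE hinj hle
  have h₀₁ := hu 0 1
  have h₂₃ := hu 2 3
  rw [tie_eq_rightTie (d := 0) rfl] at h₀₁ h₂₃
  have hcomm := congrArg (toConjAct u • ·) (H.e_comm 0 2 (by omega) (by omega))
  simp only [smul_mul'] at hcomm
  exact (h₀₁.symm ▸ h₂₃.symm ▸ hcomm : _)

lemma e_mul_e_mul_rightTie (H : BraidTieRelations q n g e) (hn : 1 < n) :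
    e 0 * e 1 * rightTie g e 0 1 = e 0 * e 1 := by
  have hconj : rightTie g e 0 1 = g 1 * e 0 * ↑(g 1)⁻¹ := rfl
  have habsorb : e 0 * rightTie g e 0 1 = e 0 * e 1 := by
    rw [hconj, ← mul_assoc, ← mul_assoc, ← H.e_mul_e_mul_g 0 hn, Units.mul_inv_cancel_right]
  rw [H.e_comm 0 1 (by omega) hn, mul_assoc, habsorb, H.e_comm 0 1 (by omega) hn, ← mul_assoc,
    H.e_idem 1 hn]

lemma tie_mul_tie_mul_tie (H : BraidTieRelations q n g e) (i j l : Fin (n + 1)) :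
    tie g e i j * tie g e j l * tie g e i l = tie g e i j * tie g e j l := by
  rcases eq_or_ne i j with rfl | hij
  · rw [mul_assoc, H.tie_mul_self]
  rcases eq_or_ne i l with rfl | hil
  · rw [tie_self, mul_one]
  rcases eq_or_ne j l with rfl | hjl
  · rw [tie_self, mul_one, H.tie_mul_self]
  have hinj : Function.Injective ![i, j, l] := by
    simp [injective_vecCons_iff, Function.injective_of_subsingleton, *]
  have hle : 3 ≤ n + 1 := by simpa using Fintype.card_le_of_injective _ hinj
  obtain ⟨u, hu⟩ := H.exists_smul_tie_castLE hinj hle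
  have h₀₁ := hu 0 1
  have h₁₂ := hu 1 2
  have h₀₂ := hu 0 2
  rw [tie_eq_rightTie (d := 0) rfl] at h₀₁ h₁₂
  rw [tie_eq_rightTie (d := 1) rfl] at h₀₂
  have hmul := congrArg (toConjAct u • ·) (H.e_mul_e_mul_rightTie (by omega))
  simp only [smul_mul'] at hmul
  exact (h₀₁.symm ▸ h₁₂.symm ▸ h₀₂.symm ▸ hmul : _)

/-- The monoid generated by the ties. -/
def tieMonoid (n : ℕ) (g : ℕ → Rˣ) (e : ℕ → R) : Submonoid R :=
  Submonoid.closure (Set.range fun p : Fin (n + 1) × Fin (n + 1) => tie g e p.1 p.2)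

lemma tie_mem_tieMonoid (i j : Fin (n + 1)) : tie g e i j ∈ tieMonoid n g e :=
  Submonoid.subset_closure ⟨(i, j), rfl⟩

lemma commute_of_mem_tieMonoid (H : BraidTieRelations q n g e) {z z' : R}
    (hz : z ∈ tieMonoid n g e) (hz' : z' ∈ tieMonoid n g e) : Commute z z' := by
  induction hz, hz' using Submonoid.closure_induction₂ with
  | mem x y hx hy =>
    obtain ⟨⟨i, j⟩, rfl⟩ := hx
    obtain ⟨⟨l, m⟩, rfl⟩ := hy
    exact H.tie_commute i j l m
  | one_left y _ => exact .one_left y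
  | one_right x _ => exact .one_right x
  | mul_left x y z _ _ _ hx hy => exact hx.mul_left hy
  | mul_right x y z _ _ _ hx hy => exact hx.mul_right hy

/-- The partition of the positions attached to an element of the tie monoid: two positions are in
the same block when the element absorbs their tie. -/
def absorbedTies (H : BraidTieRelations q n g e) (z : tieMonoid n g e) :
    Setoid (Fin (n + 1)) where
  r i j := (z : R) * tie g e i j = z
  iseqv.refl i := by rw [tie_self, mul_one]
  iseqv.symm h := by rwa [tie_symm]
  iseqv.trans {i j l} hij hjl := by
    have hz : (z : R) = z * (tie g e i j * tie g e j l) := by rw [← mul_assoc, hij, hjl]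
    rw [hz, mul_assoc, H.tie_mul_tie_mul_tie]

lemma mul_eq_of_absorbedTies_le (H : BraidTieRelations q n g e) {z z' : tieMonoid n g e}
    (h : H.absorbedTies z' ≤ H.absorbedTies z) : (z : R) * z' = z := by
  obtain ⟨z', hz'⟩ := z'
  induction hz' using Submonoid.closure_induction with
  | mem x hx => obtain ⟨⟨i, j⟩, rfl⟩ := hx; exact h (H.tie_mul_self i j)
  | one => exact mul_one _
  | mul x y hx hy ihx ihy =>
    have hxz := ihx fun i j (hij : x * tie g e i j = x) => h <|
      show x * y * tie g e i j = x * y by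
        rw [(H.commute_of_mem_tieMonoid hx hy).eq, mul_assoc, hij]
    have hyz := ihy fun i j (hij : y * tie g e i j = y) => h <|
      show x * y * tie g e i j = x * y by rw [mul_assoc, hij]
    exact (mul_assoc _ _ _).symm.trans (hxz.symm ▸ hyz)

lemma absorbedTies_injective (H : BraidTieRelations q n g e) :
    Function.Injective H.absorbedTies := fun z z' h => Subtype.ext <| by
  rw [← H.mul_eq_of_absorbedTies_le h.ge, (H.commute_of_mem_tieMonoid z.2 z'.2).eq,
    H.mul_eq_of_absorbedTies_le h.le]

end BraidTieRelations

lemma finite_setoid (α : Type*) [Finite α] : Finite (Setoid α) :=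
  Finite.of_injective (fun π : Setoid α => fun a b => π a b) fun _ _ h =>
    Setoid.ext fun a b => iff_of_eq (congrFun₂ h a b)

namespace BraidTieRelations

open ConjAct Equiv

variable {k R : Type*} [CommRing k] [Ring R] [Algebra k R] {q : k} {n : ℕ} {g : ℕ → Rˣ} {e : ℕ → R}

/-- The descending product `g (m - 1) * g (m - 2) * ⋯ * g (m - c)`. -/
def descending (g : ℕ → Rˣ) (m : ℕ) : ℕ → Rˣ
  | 0 => 1
  | c + 1 => descending g m c * g (m - c - 1)

lemma descending_succ (m c : ℕ) : descending g m (c + 1) = descending g m c * g (m - c - 1) := rfl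

open Classical in
/-- The normal forms of the elements of the symmetric group on `m` letters, read as words in `g`. -/
def normalWords (g : ℕ → Rˣ) : ℕ → Finset Rˣ
  | 0 => {1}
  | m + 1 =>
    Finset.image₂ (fun x c => x * descending g m c) (normalWords g m) (Finset.range (m + 1))

lemma mem_normalWords_succ {m : ℕ} {y : Rˣ} : y ∈ normalWords g (m + 1) ↔
    ∃ x ∈ normalWords g m, ∃ c ≤ m, x * descending g m c = y := by
  simp only [normalWords, Finset.mem_image₂, Finset.mem_range, Nat.lt_succ_iff]

open Classical in
lemma card_normalWords_le (m : ℕ) : (normalWords g m).card ≤ m.factorial := by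
  induction m with
  | zero => simp [normalWords]
  | succ m ih =>
    rw [normalWords, Nat.factorial_succ, mul_comm]
    refine (Finset.card_image₂_le _ _ _).trans ?_
    rw [Finset.card_range]
    exact Nat.mul_le_mul_right _ ih

lemma one_mem_normalWords (m : ℕ) : 1 ∈ normalWords g m := by
  induction m with
  | zero => exact Finset.mem_singleton_self 1
  | succ m ih => exact mem_normalWords_succ.2 ⟨1, ih, 0, m.zero_le, mul_one 1⟩

lemma descending_mem_permutesTies (H : BraidTieRelations q n g e) {m c : ℕ} (hm : m ≤ n)
    (hc : c ≤ m) : descending g m c ∈ permutesTies n g e := by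
  induction c with
  | zero => exact one_mem _
  | succ c ih => exact mul_mem (ih (by omega)) (H.g_mem_permutesTies (by omega))

lemma normalWords_subset_permutesTies (H : BraidTieRelations q n g e) {m : ℕ} (hm : m ≤ n + 1)
    {x : Rˣ} (hx : x ∈ normalWords g m) : x ∈ permutesTies n g e := by
  induction m generalizing x with
  | zero => rw [Finset.mem_singleton.1 hx]; exact one_mem _
  | succ m ih =>
    obtain ⟨y, hy, c, hc, rfl⟩ := mem_normalWords_succ.1 hx
    exact mul_mem (ih (by omega) hy) (H.descending_mem_permutesTies (by omega) hc)

/-- The span of the products of a product of ties and a normal form in `m` letters. -/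
def normalSpan (k : Type*) [CommRing k] [Algebra k R] (n : ℕ) (g : ℕ → Rˣ) (e : ℕ → R) (m : ℕ) :
    Submodule k R :=
  Submodule.span k {y | ∃ z ∈ tieMonoid n g e, ∃ x ∈ normalWords g m, z * x = y}

lemma mul_mem_normalSpan {m : ℕ} {z : R} {x : Rˣ} (hz : z ∈ tieMonoid n g e)
    (hx : x ∈ normalWords g m) : z * x ∈ normalSpan k n g e m :=
  Submodule.subset_span ⟨z, hz, x, hx, rfl⟩

lemma one_mem_normalSpan (m : ℕ) : (1 : R) ∈ normalSpan k n g e m := by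
  simpa using mul_mem_normalSpan (k := k) (one_mem (tieMonoid n g e)) (one_mem_normalWords m)

lemma mul_mem_normalSpan_of_forall {l m : ℕ} {r s : R} (hs : s ∈ normalSpan k n g e l)
    (h : ∀ z ∈ tieMonoid n g e, ∀ x ∈ normalWords g l, z * x * r ∈ normalSpan k n g e m) :
    s * r ∈ normalSpan k n g e m := by
  have hle : normalSpan k n g e l ≤ (normalSpan k n g e m).comap (LinearMap.mulRight k r) := by
    rw [normalSpan, Submodule.span_le]
    rintro _ ⟨z, hz, x, hx, rfl⟩
    exact h z hz x hx
  exact hle hs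

lemma mul_e_mem_normalSpan (H : BraidTieRelations q n g e) {m i : ℕ} (hm : m ≤ n + 1) (hi : i < n)
    {s : R} (hs : s ∈ normalSpan k n g e m) : s * e i ∈ normalSpan k n g e m := by
  refine mul_mem_normalSpan_of_forall hs fun z hz x hx => ?_
  obtain ⟨w, hw⟩ := H.normalWords_subset_permutesTies hm hx
  rw [← tie_castSucc_succ (g := g) (e := e) ⟨i, hi⟩, mul_assoc,
    toConjAct_smul_eq_iff.1 (hw _ _), ← mul_assoc]
  exact mul_mem_normalSpan (mul_mem hz (tie_mem_tieMonoid _ _)) hx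

lemma mul_descending_mem_normalSpan {m c : ℕ} (hc : c ≤ m) {s : R}
    (hs : s ∈ normalSpan k n g e m) : s * descending g m c ∈ normalSpan k n g e (m + 1) := by
  refine mul_mem_normalSpan_of_forall hs fun z hz x hx => ?_
  rw [mul_assoc, ← Units.val_mul]
  exact mul_mem_normalSpan hz (mem_normalWords_succ.2 ⟨x, hx, c, hc, rfl⟩)

lemma descending_mul_of_add_lt (H : BraidTieRelations q n g e) {m c i : ℕ} (hm : m ≤ n)
    (h : i + c + 2 ≤ m) : descending g m c * g i = g i * descending g m c := by
  induction c with
  | zero => rw [descending, one_mul, mul_one]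
  | succ c ih =>
    rw [descending_succ, mul_assoc, ← H.g_comm i (m - c - 1) (by omega) (by omega), ← mul_assoc,
      ih (by omega), mul_assoc]

lemma descending_mul_succ_of_lt_add (H : BraidTieRelations q n g e) {m c i : ℕ} (hm : m ≤ n)
    (hc : c ≤ m) (hi : i + 2 ≤ m) (h : m < i + 1 + c) :
    descending g m c * g (i + 1) = g i * descending g m c := by
  induction c with
  | zero => omega
  | succ c ih =>
    by_cases hlt : m < i + 1 + c
    · rw [descending_succ, mul_assoc, H.g_comm (m - c - 1) (i + 1) (by omega) (by omega),
        ← mul_assoc, ih (by omega) hlt, mul_assoc]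
    · obtain ⟨c, rfl⟩ : ∃ c', c = c' + 1 := ⟨c - 1, by omega⟩
      have hcomm : descending g m c * g i = g i * descending g m c := by
        rcases Nat.eq_zero_or_pos c with rfl | _
        · rw [descending, one_mul, mul_one]
        · exact H.descending_mul_of_add_lt hm (by omega)
      rw [descending_succ, descending_succ, show m - c - 1 = i + 1 by omega,
        show m - (c + 1) - 1 = i by omega, mul_assoc (descending g m c), mul_assoc,
        ← H.braid i (by omega), mul_assoc, ← mul_assoc _ (g i), hcomm]
      simp only [mul_assoc]

lemma mul_descending_mul_g_mem_normalSpan (H : BraidTieRelations q n g e) {m c i : ℕ} (hm : m ≤ n)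
    (h : i + c + 1 = m) {s : R} (hs : s ∈ normalSpan k n g e m) :
    s * descending g m (c + 1) * g i ∈ normalSpan k n g e (m + 1) := by
  have hlast : descending g m (c + 1) = descending g m c * g i := by
    rw [descending_succ, show m - c - 1 = i by omega]
  have hexpand : s * descending g m (c + 1) * g i = s * descending g m c
      + (q - 1) • (s * descending g m c * e i) + (q - 1) • (s * descending g m (c + 1) * e i) := by
    rw [hlast, Units.val_mul, mul_assoc, mul_assoc (descending g m c : R), H.g_sq i (by omega),
      mul_add (e i), mul_one, H.e_mul_g_self i (by omega)]
    simp only [mul_add, smul_add, mul_smul_comm, mul_assoc, mul_one]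
    rw [add_assoc]
  have hc := mul_descending_mem_normalSpan (m := m) (c := c) (by omega) hs
  have hc' := mul_descending_mem_normalSpan (m := m) (c := c + 1) (by omega) hs
  rw [hexpand]
  exact add_mem
    (add_mem hc (Submodule.smul_mem _ _ (H.mul_e_mem_normalSpan (by omega) (by omega) hc)))
    (Submodule.smul_mem _ _ (H.mul_e_mem_normalSpan (by omega) (by omega) hc'))

lemma mul_g_mem_normalSpan (H : BraidTieRelations q n g e) {m i : ℕ} (hm : m ≤ n + 1)
    (hi : i + 2 ≤ m) {s : R} (hs : s ∈ normalSpan k n g e m) :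
    s * g i ∈ normalSpan k n g e m := by
  induction m generalizing i s with
  | zero => omega
  | succ m ih =>
    refine mul_mem_normalSpan_of_forall hs fun z hz y hy => ?_
    obtain ⟨x, hx, c, hc, rfl⟩ := mem_normalWords_succ.1 hy
    have hzx : z * x ∈ normalSpan k n g e m := mul_mem_normalSpan hz hx
    rw [Units.val_mul, ← mul_assoc]
    rcases lt_trichotomy (i + c) m with hlt | heq | hgt
    · rw [mul_assoc _ _ (g i : R), ← Units.val_mul]
      by_cases hic : i + c + 1 = m
      · rw [show g i = g (m - c - 1) by rw [show m - c - 1 = i by omega], ← descending_succ]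
        exact mul_descending_mem_normalSpan (by omega) hzx
      · rw [H.descending_mul_of_add_lt (by omega) (by omega), Units.val_mul, ← mul_assoc]
        exact mul_descending_mem_normalSpan hc (ih (by omega) (by omega) hzx)
    · obtain ⟨c, rfl⟩ : ∃ c', c = c' + 1 := ⟨c - 1, by omega⟩
      exact H.mul_descending_mul_g_mem_normalSpan (by omega) heq hzx
    · obtain ⟨i, rfl⟩ : ∃ i', i = i' + 1 := ⟨i - 1, by omega⟩
      rw [mul_assoc _ _ (g (i + 1) : R), ← Units.val_mul,
        H.descending_mul_succ_of_lt_add (by omega) hc (by omega) (by omega), Units.val_mul,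
        ← mul_assoc]
      exact mul_descending_mem_normalSpan hc (ih (by omega) (by omega) hzx)

lemma exists_span_eq_normalSpan (H : BraidTieRelations q n g e) (m : ℕ) :
    ∃ s : Finset R, Submodule.span k (s : Set R) = normalSpan k n g e m ∧
      s.card ≤ Nat.card (Setoid (Fin (n + 1))) * m.factorial := by
  classical
  have := finite_setoid (Fin (n + 1))
  have := Finite.of_injective _ H.absorbedTies_injective
  have := Fintype.ofFinite (tieMonoid n g e)
  refine ⟨Finset.image₂ (fun (z : tieMonoid n g e) (x : Rˣ) => (z : R) * x) Finset.univ
    (normalWords g m), ?_, ?_⟩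
  · congr 1
    ext y
    simp only [Finset.coe_image₂, Finset.coe_univ, Set.mem_image2, Set.mem_univ, true_and,
      SetLike.mem_coe, Subtype.exists, Set.mem_ofPred_eq, exists_prop]
  · refine (Finset.card_image₂_le _ _ _).trans (Nat.mul_le_mul ?_ (card_normalWords_le m))
    rw [Finset.card_univ, ← Nat.card_eq_fintype_card]
    exact Nat.card_le_card_of_injective _ H.absorbedTies_injective

end BraidTieRelations

lemma mul_add_smul_eq_one {k R : Type*} [CommRing k] [Ring R] [Algebra k R] {q q' : k} {g e : R}
    (hq : q' * q = 1) (he : e * e = e) (heg : e * g = g * e)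
    (hg : g * g = 1 + (q - 1) • (e * (1 + g))) : g * (g + (q' - 1) • (e * (1 + g))) = 1 := by
  have heigen : g * (e * (1 + g)) = q • (e * (1 + g)) := by
    rw [← mul_assoc, ← heg, mul_assoc, mul_add g, mul_one, hg]
    simp only [mul_add, mul_smul_comm, ← mul_assoc, he]
    module
  rw [mul_add, hg, mul_smul_comm, heigen, smul_smul, add_assoc, ← add_smul, sub_mul, hq, one_mul,
    sub_add_sub_cancel', sub_self, zero_smul, add_zero]

lemma vv_sq_ne_zero : (vv ^ 2 : Kv) ≠ 0 := pow_ne_zero 2 RatFunc.X_ne_zero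

namespace BT

variable {n : ℕ}

lemma bg_mul_self (i : Fin n) :
    bg n i * bg n i = 1 + (vv ^ 2 - 1) • (be n i * (1 + bg n i)) := by
  simpa only [bg, be, map_mul, map_add, map_one, map_smul] using
    RingQuot.mkAlgHom_rel Kv (BTRel.quad i)

lemma be_mul_bg_self (i : Fin n) : be n i * bg n i = bg n i * be n i := by
  simpa only [bg, be, map_mul] using RingQuot.mkAlgHom_rel Kv (BTRel.eg_same i)

lemma be_mul_self (i : Fin n) : be n i * be n i = be n i := by
  simpa only [bg, be, map_mul] using RingQuot.mkAlgHom_rel Kv (BTRel.e_idem i)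

/-- The generator `g_i` as a unit. -/
def bgUnit (n : ℕ) (i : Fin n) : (BT n)ˣ where
  val := bg n i
  inv := bg n i + ((vv ^ 2)⁻¹ - 1) • (be n i * (1 + bg n i))
  val_inv := mul_add_smul_eq_one (inv_mul_cancel₀ vv_sq_ne_zero) (be_mul_self i) (be_mul_bg_self i)
    (bg_mul_self i)
  inv_val := by
    have hcomm : Commute (bg n i) (bg n i + ((vv ^ 2)⁻¹ - 1) • (be n i * (1 + bg n i))) := by
      have hbe : Commute (bg n i) (be n i) := (be_mul_bg_self i).symm
      exact .add_right (.refl _)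
        (.smul_right (hbe.mul_right (.add_right (.one_right _) (.refl _))) _)
    rw [← hcomm.eq]
    exact mul_add_smul_eq_one (inv_mul_cancel₀ vv_sq_ne_zero) (be_mul_self i) (be_mul_bg_self i)
      (bg_mul_self i)

/-- The generators `g_i` indexed by the natural numbers, with the value `1` outside the range. -/
def bgNat (n i : ℕ) : (BT n)ˣ := if h : i < n then bgUnit n ⟨i, h⟩ else 1

/-- The generators `e_i` indexed by the natural numbers, with the value `1` outside the range. -/
def beNat (n i : ℕ) : BT n := if h : i < n then be n ⟨i, h⟩ else 1

lemma val_bgNat {i : ℕ} (h : i < n) : (bgNat n i : BT n) = bg n ⟨i, h⟩ := by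
  rw [bgNat, dif_pos h]; rfl

lemma beNat_of_lt {i : ℕ} (h : i < n) : beNat n i = be n ⟨i, h⟩ := dif_pos h

lemma braidTieRelations (n : ℕ) : BraidTieRelations (vv ^ 2) n (bgNat n) (beNat n) where
  g_comm i j h hj := Units.ext <| by
    rw [Units.val_mul, Units.val_mul, val_bgNat (by omega), val_bgNat hj]
    simpa only [bg, be, map_mul] using RingQuot.mkAlgHom_rel Kv
      (BTRel.gg_comm ⟨i, by omega⟩ ⟨j, hj⟩ (by simp only [Nat.dist]; omega))
  e_mul_g i j h hj := by
    rw [beNat_of_lt (by omega), val_bgNat hj]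
    simpa only [bg, be, map_mul] using RingQuot.mkAlgHom_rel Kv
      (BTRel.eg_comm ⟨i, by omega⟩ ⟨j, hj⟩ (by simp only [Nat.dist]; omega))
  g_mul_e i j h hj := by
    rw [beNat_of_lt hj, val_bgNat (by omega)]
    simpa only [bg, be, map_mul] using (RingQuot.mkAlgHom_rel Kv
      (BTRel.eg_comm ⟨j, hj⟩ ⟨i, by omega⟩ (by simp only [Nat.dist]; omega))).symm
  braid i h := Units.ext <| by
    simp only [Units.val_mul, val_bgNat h, val_bgNat (Nat.lt_of_succ_lt h)]
    simpa only [bg, be, map_mul] using RingQuot.mkAlgHom_rel Kv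
      (BTRel.braid ⟨i, by omega⟩ ⟨i + 1, h⟩ (by simp only [Nat.dist]; omega))
  e_succ_mul_g_mul_g i h := by
    simp only [beNat_of_lt, val_bgNat, h, Nat.lt_of_succ_lt h]
    simpa only [bg, be, map_mul] using RingQuot.mkAlgHom_rel Kv
      (BTRel.egg ⟨i + 1, h⟩ ⟨i, by omega⟩ (by simp only [Nat.dist]; omega))
  e_comm i j hi hj := by
    rw [beNat_of_lt hi, beNat_of_lt hj]
    simpa only [bg, be, map_mul] using RingQuot.mkAlgHom_rel Kv (BTRel.ee_comm ⟨i, hi⟩ ⟨j, hj⟩)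
  e_idem i hi := by rw [beNat_of_lt hi, be_mul_self]
  e_mul_g_self i hi := by rw [beNat_of_lt hi, val_bgNat hi, be_mul_bg_self]
  e_mul_e_mul_g i h := by
    simp only [beNat_of_lt, val_bgNat, h, Nat.lt_of_succ_lt h]
    simpa only [bg, be, map_mul] using RingQuot.mkAlgHom_rel Kv
      (BTRel.eeg₁ ⟨i, by omega⟩ ⟨i + 1, h⟩ (by simp only [Nat.dist]; omega))
  e_mul_g_mul_e i h := by
    simp only [beNat_of_lt, val_bgNat, h, Nat.lt_of_succ_lt h]
    simpa only [bg, be, map_mul] using RingQuot.mkAlgHom_rel Kv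
      (BTRel.eeg₂ ⟨i, by omega⟩ ⟨i + 1, h⟩ (by simp only [Nat.dist]; omega))
  g_sq i hi := by rw [beNat_of_lt hi, val_bgNat hi, bg_mul_self]

lemma adjoin_bg_be (n : ℕ) : Algebra.adjoin Kv (Set.range (bg n) ∪ Set.range (be n)) = ⊤ := by
  rw [← (AlgHom.range_eq_top _).2 (RingQuot.mkAlgHom_surjective Kv (BTRel n)), ← Algebra.map_top,
    ← FreeAlgebra.adjoin_range_ι, AlgHom.map_adjoin, ← Set.range_comp, ← Set.Sum.elim_range]
  congr 2
  funext i
  cases i <;> rfl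

lemma normalSpan_eq_top (n : ℕ) :
    BraidTieRelations.normalSpan Kv n (bgNat n) (beNat n) (n + 1) = ⊤ := by
  have hmul {x : BT n} (hx : x ∈ Algebra.adjoin Kv (Set.range (bg n) ∪ Set.range (be n))) :
      ∀ s ∈ BraidTieRelations.normalSpan Kv n (bgNat n) (beNat n) (n + 1),
        s * x ∈ BraidTieRelations.normalSpan Kv n (bgNat n) (beNat n) (n + 1) := by
    induction hx using Algebra.adjoin_induction with
    | mem x hx =>
      intro s hs
      rcases hx with ⟨i, rfl⟩ | ⟨i, rfl⟩
      · rw [← val_bgNat i.2]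
        exact (braidTieRelations n).mul_g_mem_normalSpan le_rfl (by omega) hs
      · rw [← beNat_of_lt i.2]
        exact (braidTieRelations n).mul_e_mem_normalSpan le_rfl i.2 hs
    | algebraMap r =>
      intro s hs
      rw [← Algebra.commutes, ← Algebra.smul_def]
      exact Submodule.smul_mem _ _ hs
    | add x y _ _ hx hy => intro s hs; rw [mul_add]; exact add_mem (hx s hs) (hy s hs)
    | mul x y _ _ hx hy => intro s hs; rw [← mul_assoc]; exact hy _ (hx s hs)
  rw [eq_top_iff]
  intro x _
  rw [← one_mul x]
  exact hmul (adjoin_bg_be n ▸ Algebra.mem_top) 1 (BraidTieRelations.one_mem_normalSpan _)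

instance finite (n : ℕ) : Module.Finite Kv (BT n) := by
  obtain ⟨s, hs, -⟩ := (braidTieRelations n).exists_span_eq_normalSpan (n + 1)
  exact ⟨⟨s, hs.trans (normalSpan_eq_top n)⟩⟩

lemma finrank_le (n : ℕ) :
    Module.finrank Kv (BT n) ≤ Module.finrank Kv (TieModule Kv (Fin (n + 1))) := by
  obtain ⟨s, hs, hcard⟩ := (braidTieRelations n).exists_span_eq_normalSpan (n + 1)
  have := finite_setoid (Fin (n + 1))
  have := Fintype.ofFinite (Setoid (Fin (n + 1)))
  have hle := finrank_span_finset_le_card (R := Kv) s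
  rw [Set.finrank, hs, normalSpan_eq_top, finrank_top] at hle
  rw [Module.finrank_fintype_fun_eq_card, Fintype.card_prod, Fintype.card_perm, Fintype.card_fin,
    ← Nat.card_eq_fintype_card]
  exact hle.trans hcard

end BT

open Equiv in
lemma perm_induction_on_descents {n : ℕ} {β : Type*} [LinearOrder β] [WellFoundedLT β]
    (f : Fin (n + 1) → β)
    {P : Perm (Fin (n + 1)) → Prop} (base : ∀ τ : Perm (Fin (n + 1)), Monotone (f ∘ τ) → P τ)
    (step : ∀ (τ : Perm (Fin (n + 1))) (i : Fin n), f (τ i.succ) < f (τ i.castSucc) →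
      P (τ * swap i.castSucc i.succ) → P τ) (τ : Perm (Fin (n + 1))) : P τ := by
  induction hl : toLex (f ∘ τ) using WellFoundedLT.induction generalizing τ with
  | ind l ih =>
    subst hl
    by_cases hτ : Monotone (f ∘ τ)
    · exact base τ hτ
    · simp only [Fin.monotone_iff_le_succ, not_forall, not_le, Function.comp_apply] at hτ
      obtain ⟨i, hi⟩ := hτ
      exact step τ i hi (ih _ (Pi.lex_desc (f := f ∘ τ) i.castSucc_lt_succ.le hi) _ rfl)

/-- A representative of the block of `a`, used as a label of that block. -/
def blockLabel {α : Type*} (π : Setoid α) (a : α) : α := (Quotient.mk π a).out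

lemma blockLabel_eq_iff {α : Type*} {π : Setoid α} {a b : α} :
    blockLabel π a = blockLabel π b ↔ π a b := Quotient.out_inj.trans Quotient.eq

lemma setoid_le_of_adjacent {n : ℕ} {π ρ : Setoid (Fin (n + 1))} {τ : Equiv.Perm (Fin (n + 1))}
    (hτ : Monotone (blockLabel π ∘ τ))
    (h : ∀ i : Fin n, π (τ i.castSucc) (τ i.succ) → ρ (τ i.castSucc) (τ i.succ)) : π ≤ ρ := by
  have hle (k l : Fin (n + 1)) : k ≤ l → π (τ k) (τ l) → ρ (τ k) (τ l) := by
    induction l using Fin.induction with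
    | zero => intro hk _; rw [Fin.le_zero_iff.1 hk]
    | succ i ih =>
      intro hk hπ
      rcases hk.eq_or_lt with rfl | hk
      · exact ρ.refl' _
      have hk : k ≤ i.castSucc := Fin.le_castSucc_iff.2 hk
      have hki : π (τ k) (τ i.castSucc) := blockLabel_eq_iff.1 <| (hτ hk).antisymm <|
        (hτ i.castSucc_lt_succ.le).trans_eq (blockLabel_eq_iff.2 hπ).symm
      exact ρ.trans' (ih hk hki) (h i (π.trans' (π.symm' hki) hπ))
  intro a b hab
  obtain ⟨k, rfl⟩ := τ.surjective a
  obtain ⟨l, rfl⟩ := τ.surjective b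
  rcases le_total k l with hkl | hkl
  · exact hle k l hkl hab
  · exact ρ.symm' (hle l k hkl (π.symm' hab))

namespace TieModule

open Equiv

section Generation

variable {k : Type*} [CommRing k] {n : ℕ} {q : k}

/-- The indicator of the pairs `(π, τ)` with arrangement `τ`. For `τ = 1` it is the cyclic vector
from which both algebras act faithfully. -/
def slice (k : Type*) [CommRing k] {n : ℕ} (τ : Perm (Fin (n + 1))) : TieModule k (Fin (n + 1)) :=
  fun z => if z.2 = τ then 1 else 0

lemma slice_apply (τ ω : Perm (Fin (n + 1))) (π : Setoid (Fin (n + 1))) :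
    slice k τ (π, ω) = if ω = τ then 1 else 0 := rfl

open Classical in
lemma braidOp_single_of_not_rel {π : Setoid (Fin (n + 1))} {τ : Perm (Fin (n + 1))}
    {p r : Fin (n + 1)} (h : ¬ π (τ p) (τ r)) :
    braidOp q p r (Pi.single (π, τ * swap p r) 1) = Pi.single (π, τ) 1 := by
  funext ⟨ρ, ω⟩
  simp only [braidOp_apply, Pi.single_apply, Prod.mk.injEq, mul_left_inj]
  by_cases hρ : ρ = π
  swap
  · simp only [hρ, false_and, if_false, mul_zero, add_zero]
  subst hρ
  by_cases hω : ω = τ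
  · rw [hω, swapCoeff_of_not_rel h, diagCoeff_of_not_rel h, zero_mul, add_zero, one_mul]
  by_cases hω' : ω = τ * swap p r
  · have h' : ¬ ρ (ω p) (ω r) := by
      rw [hω', Perm.mul_apply, Perm.mul_apply, swap_apply_left, swap_apply_right]
      exact fun h' => h (ρ.symm' h')
    rw [diagCoeff_of_not_rel h', zero_mul, add_zero, if_neg fun h => hω h.2, mul_zero]
  · simp only [hω, hω', and_false, if_false, mul_zero, add_zero]

lemma braidOp_slice_of_lt {τ : Perm (Fin (n + 1))} {p r : Fin (n + 1)} (h : τ r < τ p) :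
    braidOp q p r (slice k (τ * swap p r)) = slice k τ := by
  funext ⟨π, ω⟩
  simp only [braidOp_apply, slice_apply, mul_left_inj]
  by_cases hω : ω = τ
  · subst hω
    have hne : ω ≠ ω * swap p r := fun heq => h.ne <| by
      nth_rw 2 [heq]; rw [Perm.mul_apply, swap_apply_left]
    simp only [swapCoeff, h.not_gt, hne, and_false, if_false, if_true, mul_zero, mul_one, add_zero]
  by_cases hω' : ω = τ * swap p r
  · have hdiag : diagCoeff q π (ω p) (ω r) = 0 := by
      rw [hω', Perm.mul_apply, Perm.mul_apply, swap_apply_left, swap_apply_right]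
      exact if_neg fun h' => h.not_gt h'.2
    rw [if_neg hω, hdiag, mul_zero, zero_mul, add_zero]
  · simp only [hω, hω', if_false, mul_zero, add_zero]

lemma slice_mem {W : Submodule k (TieModule k (Fin (n + 1)))}
    (hG : ∀ i : Fin n, ∀ x ∈ W, braidOp q i.castSucc i.succ x ∈ W) (h1 : slice k 1 ∈ W)
    (τ : Perm (Fin (n + 1))) : slice k τ ∈ W := by
  refine perm_induction_on_descents id (P := fun τ => slice k τ ∈ W) (fun τ hτ => ?_)
    (fun τ i hi hP => ?_) τ
  · have h : (τ : Fin (n + 1) → Fin (n + 1)) = id :=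
      ((hτ.strictMono_of_injective τ.injective).range_inj strictMono_id).1 <| by
        rw [Function.id_comp, τ.surjective.range_eq, Set.range_id]
    rwa [show τ = 1 from Equiv.ext (congrFun h)]
  · rw [← braidOp_slice_of_lt (q := q) hi]
    exact hG i _ hP

lemma mem_of_single_mem {ι : Type*} [Finite ι] [DecidableEq ι] {W : Submodule k (ι → k)} {x : ι → k}
    (hx : ∀ z, x z ≠ 0 → Pi.single z 1 ∈ W) : x ∈ W := by
  have := Fintype.ofFinite ι
  rw [← Finset.univ_sum_single x]
  refine sum_mem fun z _ => ?_
  by_cases h0 : x z = 0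
  · rw [h0, Pi.single_zero]; exact zero_mem _
  · rw [← mul_one (x z), ← smul_eq_mul, Pi.single_smul]; exact W.smul_mem _ (hx z h0)

open Classical in
lemma slice_inter_mem {W : Submodule k (TieModule k (Fin (n + 1)))}
    (hE : ∀ i : Fin n, ∀ x ∈ W, tieOp i.castSucc i.succ x ∈ W) {τ : Perm (Fin (n + 1))}
    (hτ : slice k τ ∈ W) (S : Finset (Fin n)) :
    (fun z => if z.2 = τ ∧ ∀ i ∈ S, z.1 (τ i.castSucc) (τ i.succ) then 1 else 0) ∈ W := by
  induction S using Finset.induction_on with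
  | empty => simpa only [Finset.notMem_empty, false_imp_iff, implies_true, and_true] using! hτ
  | insert i S _ ih =>
    convert hE i _ ih using 1
    funext ⟨π, ω⟩
    rw [tieOp_apply, tieCoeff]
    by_cases hω : ω = τ
    · subst hω
      by_cases hi : π (ω i.castSucc) (ω i.succ) <;> simp [hi]
    · simp only [hω, false_and, if_false, mul_zero]

open Classical in
lemma single_mem_of_monotone {W : Submodule k (TieModule k (Fin (n + 1)))}
    (hE : ∀ i : Fin n, ∀ x ∈ W, tieOp i.castSucc i.succ x ∈ W) {π : Setoid (Fin (n + 1))}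
    {τ : Perm (Fin (n + 1))} (hτ : slice k τ ∈ W) (hmono : Monotone (blockLabel π ∘ τ))
    (hcoarser : ∀ ρ > π, Pi.single (ρ, τ) 1 ∈ W) : Pi.single (π, τ) 1 ∈ W := by
  have := finite_setoid (Fin (n + 1))
  -- The indicator of all `(ρ, τ)` with `π ≤ ρ`.
  set x : TieModule k (Fin (n + 1)) := fun z => if z.2 = τ ∧
    ∀ i ∈ Finset.univ.filter fun i : Fin n => π (τ i.castSucc) (τ i.succ),
      z.1 (τ i.castSucc) (τ i.succ) then 1 else 0 with hx
  have hxπ : x (π, τ) = 1 := if_pos ⟨rfl, fun i hi => (Finset.mem_filter.1 hi).2⟩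
  have hdiff : x - Pi.single (π, τ) 1 ∈ W := by
    refine mem_of_single_mem fun ⟨ρ, ω⟩ hne => ?_
    rw [Pi.sub_apply, Pi.single_apply] at hne
    by_cases hz : (ρ, ω) = (π, τ)
    · rw [if_pos hz, hz, hxπ, sub_self] at hne; exact absurd rfl hne
    · rw [if_neg hz, sub_zero, hx] at hne
      obtain ⟨rfl, hρ⟩ : ω = τ ∧ _ := of_not_not fun h => hne (if_neg h)
      refine hcoarser ρ (lt_of_le_of_ne (setoid_le_of_adjacent hmono fun i hi =>
        hρ i (Finset.mem_filter.2 ⟨Finset.mem_univ i, hi⟩)) ?_)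
      rintro rfl
      exact hz rfl
  rw [← sub_sub_cancel x (Pi.single (π, τ) 1)]
  exact sub_mem (slice_inter_mem hE hτ _) hdiff

lemma eq_top_of_braidOp_tieOp_mem {W : Submodule k (TieModule k (Fin (n + 1)))}
    (hG : ∀ i : Fin n, ∀ x ∈ W, braidOp q i.castSucc i.succ x ∈ W)
    (hE : ∀ i : Fin n, ∀ x ∈ W, tieOp i.castSucc i.succ x ∈ W) (h1 : slice k 1 ∈ W) : W = ⊤ := by
  classical
  have := finite_setoid (Fin (n + 1))
  have hsingle (π : Setoid (Fin (n + 1))) : ∀ τ, Pi.single (π, τ) 1 ∈ W := by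
    induction π using WellFoundedGT.induction with
    | ind π ih =>
      refine perm_induction_on_descents (blockLabel π)
        (fun τ hτ => single_mem_of_monotone hE (slice_mem hG h1 τ) hτ fun ρ hρ => ih ρ hρ τ)
        fun τ i hi hP => ?_
      rw [← braidOp_single_of_not_rel (q := q) fun h => hi.ne (blockLabel_eq_iff.2 h).symm]
      exact hG i _ hP
  exact eq_top_iff.2 fun x _ => mem_of_single_mem fun z _ => hsingle z.1 z.2

/-- The algebra of operators generated by the braid generators. -/
def braidAlgebra (q : k) (n : ℕ) : Subalgebra k (Module.End k (TieModule k (Fin (n + 1)))) :=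
  Algebra.adjoin k (Set.range fun i : Fin n => braidOp q i.castSucc i.succ)

/-- The cyclic module generated by `slice k 1` over the braid generators. -/
def braidModule (q : k) (n : ℕ) : Submodule k (TieModule k (Fin (n + 1))) :=
  (Subalgebra.toSubmodule (braidAlgebra q n)).map (LinearMap.applyₗ (slice k 1))

lemma apply_mem_braidModule {T : Module.End k (TieModule k (Fin (n + 1)))}
    (hT : T ∈ braidAlgebra q n) {x : TieModule k (Fin (n + 1))} (hx : x ∈ braidModule q n) :
    T x ∈ braidModule q n := by
  obtain ⟨S, hS, rfl⟩ := hx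
  exact ⟨T * S, (braidAlgebra q n).mul_mem hT hS, rfl⟩

lemma braidOp_apply_mem_braidModule (i : Fin n) {x : TieModule k (Fin (n + 1))}
    (hx : x ∈ braidModule q n) : braidOp q i.castSucc i.succ x ∈ braidModule q n :=
  apply_mem_braidModule (Algebra.subset_adjoin ⟨i, rfl⟩) hx

lemma slice_mem_braidModule (τ : Perm (Fin (n + 1))) : slice k τ ∈ braidModule q n :=
  slice_mem (fun i _ hx => braidOp_apply_mem_braidModule i hx)
    ⟨1, (braidAlgebra q n).one_mem, rfl⟩ τ

end Generation

end TieModule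

namespace BT

open TieModule

variable {n : ℕ}

/-- The orbit map of the cyclic vector. -/
def orbitMap (n : ℕ) : BT n →ₗ[Kv] TieModule Kv (Fin (n + 1)) :=
  (LinearMap.applyₗ (slice Kv 1)).comp (rep n).toLinearMap

lemma orbitMap_mul (x y : BT n) : orbitMap n (x * y) = rep n x (orbitMap n y) := by
  simp only [orbitMap, LinearMap.comp_apply, AlgHom.toLinearMap_apply, map_mul,
    LinearMap.applyₗ_apply_apply, Module.End.mul_apply]

lemma range_orbitMap : LinearMap.range (orbitMap n) = ⊤ := by
  refine eq_top_of_braidOp_tieOp_mem (q := vv ^ 2) ?_ ?_ ⟨1, by simp [orbitMap]⟩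
  · rintro i _ ⟨x, rfl⟩
    exact ⟨bg n i * x, by rw [orbitMap_mul, rep_bg]⟩
  · rintro i _ ⟨x, rfl⟩
    exact ⟨be n i * x, by rw [orbitMap_mul, rep_be]⟩

lemma orbitMap_injective : Function.Injective (orbitMap n) := by
  have hrank := LinearMap.finrank_range_add_finrank_ker (orbitMap n)
  rw [range_orbitMap, finrank_top] at hrank
  rw [← LinearMap.ker_eq_bot, ← Submodule.finrank_eq_zero (R := Kv)]
  have := finrank_le n
  omega

lemma map_rep_BTC : (BTC n).map (rep n) = braidAlgebra (vv ^ 2) n := by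
  rw [BTC, AlgHom.map_adjoin, braidAlgebra, ← Set.range_comp]
  exact congrArg _ (congrArg Set.range (funext rep_bg))

lemma finrank_BTC : Module.finrank Kv (BTC n) = Module.finrank Kv (braidModule (vv ^ 2) n) := by
  have hmap : braidModule (vv ^ 2) n = (Subalgebra.toSubmodule (BTC n)).map (orbitMap n) := by
    rw [braidModule, ← map_rep_BTC, orbitMap, Submodule.map_comp]
    rfl
  rw [hmap]
  exact (Submodule.equivMapOfInjective _ orbitMap_injective
    (Subalgebra.toSubmodule (BTC n))).finrank_eq

end BT

section Block

open Equiv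

variable {α : Type*}

/-- The partition obtained from `π` by splitting the block of `a` into singletons. -/
def isolateBlock (π : Setoid α) (a : α) : Setoid α where
  r b c := b = c ∨ π b c ∧ ¬ π a b
  iseqv := by
    refine ⟨fun b => .inl rfl, ?_, ?_⟩
    · rintro b c (rfl | ⟨hbc, hab⟩)
      · exact .inl rfl
      · exact .inr ⟨π.symm' hbc, fun hac => hab (π.trans' hac (π.symm' hbc))⟩
    · rintro b c d (rfl | ⟨hbc, hab⟩) (rfl | ⟨hcd, hac⟩)
      · exact .inl rfl
      · exact .inr ⟨hcd, hac⟩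
      · exact .inr ⟨hbc, hab⟩
      · exact .inr ⟨π.trans' hbc hcd, hab⟩

lemma isolateBlock_le (π : Setoid α) (a : α) : isolateBlock π a ≤ π := by
  rintro b c (rfl | ⟨hbc, -⟩)
  · exact π.refl' b
  · exact hbc

lemma isolateBlock_lt {π : Setoid α} {a b : α} (hab : π a b) (hne : b ≠ a) :
    isolateBlock π a < π := by
  refine lt_of_le_not_ge (isolateBlock_le π a) fun hle => ?_
  rcases hle hab with rfl | ⟨-, ha⟩
  · exact hne rfl
  · exact ha (π.refl' a)

/-- The permutations supported on the block of `a`. -/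
def blockPerms (π : Setoid α) (a : α) : Subgroup (Perm α) := fixingSubgroup (Perm α) {c | ¬ π a c}

lemma mem_blockPerms {π : Setoid α} {a : α} {σ : Perm α} :
    σ ∈ blockPerms π a ↔ ∀ c, ¬ π a c → σ c = c := mem_fixingSubgroup_iff (Perm α)

lemma rel_apply_of_mem_blockPerms {π : Setoid α} {a c : α} {σ : Perm α} (hσ : σ ∈ blockPerms π a)
    (hc : π a c) : π a (σ c) := by
  by_contra hσc
  rw [σ.injective (mem_blockPerms.1 hσ _ hσc)] at hσc
  exact hσc hc

lemma rel_or_apply_eq {π : Setoid α} {a b c : α} (h : ¬ (π a b ∧ π a c)) {σ : Perm α}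
    (hσ : σ ∈ blockPerms π a) :
    (¬ π b c ∧ ¬ π (σ b) (σ c)) ∨ (σ b = b ∧ σ c = c ∧ ¬ π a b) := by
  by_cases hb : π a b
  · have hσb := rel_apply_of_mem_blockPerms hσ hb
    have hc : ¬ π a c := fun hc => h ⟨hb, hc⟩
    rw [mem_blockPerms.1 hσ c hc]
    exact .inl ⟨fun hbc => hc (π.trans' hb hbc), fun hbc => hc (π.trans' hσb hbc)⟩
  rw [mem_blockPerms.1 hσ b hb]
  by_cases hc : π a c
  · have hσc := rel_apply_of_mem_blockPerms hσ hc
    exact .inl ⟨fun hbc => hb (π.trans' hc (π.symm' hbc)),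
      fun hbc => hb (π.trans' hσc (π.symm' hbc))⟩
  · exact .inr ⟨rfl, mem_blockPerms.1 hσ c hc, hb⟩

instance [Finite α] (π : Setoid α) (a : α) : Fintype (blockPerms π a) := Fintype.ofFinite _

lemma swap_mem_blockPerms [DecidableEq α] {π : Setoid α} {a b c : α} (hb : π a b) (hc : π a c) :
    swap b c ∈ blockPerms π a :=
  mem_blockPerms.2 fun _ hd => swap_apply_of_ne_of_ne (fun h => hd (h ▸ hb)) fun h => hd (h ▸ hc)

/-- The block of `a` is not a singleton, and its values occur in `τ` in decreasing order. -/
def IsDescendingBlock [LT α] (π : Setoid α) (τ : Perm α) (a : α) : Prop :=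
  (∃ b, π a b ∧ b ≠ a) ∧ ∀ b c, π a b → π a c → b < c → τ.symm c < τ.symm b

/-- The pairs `(π, τ)` without descending block. They will index a basis of the braid algebra. -/
def goodPairs (α : Type*) [LT α] : Set (Setoid α × Perm α) :=
  {z | ∀ a, ¬ IsDescendingBlock z.1 z.2 a}

lemma toLex_symm_mul_lt [LinearOrder α] [WellFoundedLT α] {π : Setoid α} {a : α} {σ τ : Perm α}
    (hσ : σ ∈ blockPerms π a) (hne : σ ≠ 1) (hτ : IsDescendingBlock π τ a) :
    toLex ⇑(σ * τ).symm < toLex ⇑τ.symm := by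
  have hinv : toLex ⇑(σ * τ).symm ≠ toLex ⇑τ.symm := fun h =>
    hne <| mul_eq_right.1 <| Equiv.symm_bijective.injective <| DFunLike.coe_injective h
  refine (lt_or_gt_of_ne hinv).resolve_right ?_
  rintro ⟨b, hfix, hlt⟩
  have hfix' (c : α) (hc : c < b) : σ⁻¹ c = c := τ.symm.injective (hfix c hc).symm
  have hb : σ⁻¹ b ≠ b := fun hb => hlt.ne (congrArg τ.symm hb).symm
  have hbσ : b < σ⁻¹ b :=
    (lt_or_gt_of_ne hb).resolve_left fun hlt => hb (σ⁻¹.injective (hfix' _ hlt))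
  have hab : π a b := by
    by_contra hab
    exact hb (mem_blockPerms.1 (inv_mem hσ) b hab)
  exact (hτ.2 b _ hab (rel_apply_of_mem_blockPerms (inv_mem hσ) hab) hbσ).not_gt hlt

end Block

namespace TieModule

open Equiv

lemma diagCoeff_sub_swapCoeff {k α : Type*} [CommRing k] [LinearOrder α] {q : k} (ρ : Setoid α)
    {a b : α} (h : a ≠ b) : diagCoeff q ρ a b - swapCoeff q ρ b a = -1 := by
  unfold diagCoeff swapCoeff
  rw [ρ.comm' (x := b)]
  by_cases hρ : ρ a b
  · rcases lt_or_gt_of_ne h with hlt | hlt <;>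
      simp only [hρ, hlt, hlt.not_gt, and_true, and_false, if_true, if_false] <;> ring
  · simp only [hρ, false_and, if_false, zero_sub]

lemma coeff_apply_of_mem_blockPerms {k α : Type*} [CommRing k] [LinearOrder α] {q : k}
    {π ρ : Setoid α} {a b c : α} (hbc : b ≠ c) (h : ¬ (π a b ∧ π a c))
    (hρ : ρ = π ∨ ρ = isolateBlock π a) {σ : Perm α} (hσ : σ ∈ blockPerms π a) :
    swapCoeff q ρ (σ b) (σ c) = swapCoeff q π b c ∧
      diagCoeff q ρ (σ b) (σ c) = diagCoeff q π b c := by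
  have hρπ {d e : α} (hde : d ≠ e) : ρ d e → π d e := by
    rcases hρ with rfl | rfl
    · exact id
    · exact fun hde' => (hde'.resolve_left hde).1
  rcases rel_or_apply_eq h hσ with ⟨hπ, hπσ⟩ | ⟨hb, hc, hab⟩
  · have hρσ : ¬ ρ (σ b) (σ c) := mt (hρπ (σ.injective.ne hbc)) hπσ
    rw [swapCoeff_of_not_rel hπ, swapCoeff_of_not_rel hρσ, diagCoeff_of_not_rel hπ,
      diagCoeff_of_not_rel hρσ]
    exact ⟨rfl, rfl⟩
  · have hiff : ρ b c ↔ π b c := by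
      refine ⟨hρπ hbc, ?_⟩
      rcases hρ with rfl | rfl
      · exact id
      · exact fun hπ => .inr ⟨hπ, hab⟩
    rw [hb, hc]
    unfold swapCoeff diagCoeff
    by_cases hπ : π b c <;> simp only [hπ, hiff.2, mt hiff.1, not_false_eq_true, and_self]

section SignedSum

variable {k α : Type*} [CommRing k] [LinearOrder α] [Fintype α] {q : k}

/-- The antisymmetrization of `x` over the arrangements of the block of `a`, evaluated with the ties
of `ρ`. -/
def signedSum (k : Type*) [CommRing k] (π : Setoid α) (a : α) (ρ : Setoid α) (τ : Perm α) :
    TieModule k α →ₗ[k] k :=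
  ∑ σ : blockPerms π a, ((Perm.sign (σ : Perm α) : ℤ) : k) • LinearMap.proj (ρ, σ * τ)

lemma signedSum_apply (π : Setoid α) (a : α) (ρ : Setoid α) (τ : Perm α) (x : TieModule k α) :
    signedSum k π a ρ τ x =
      ∑ σ : blockPerms π a, ((Perm.sign (σ : Perm α) : ℤ) : k) * x (ρ, σ * τ) := by
  simp only [signedSum, LinearMap.sum_apply, LinearMap.smul_apply, LinearMap.proj_apply,
    smul_eq_mul]

/-- The functions whose antisymmetrization over a block does not depend on whether the values of
this block are tied. -/
def tieBlindModule (k α : Type*) [CommRing k] [LinearOrder α] [Fintype α] :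
    Submodule k (TieModule k α) :=
  ⨅ (π : Setoid α) (a : α) (τ : Perm α),
    LinearMap.eqLocus (signedSum k π a π τ) (signedSum k π a (isolateBlock π a) τ)

lemma mem_tieBlindModule {x : TieModule k α} : x ∈ tieBlindModule k α ↔
    ∀ π a τ, signedSum k π a π τ x = signedSum k π a (isolateBlock π a) τ x := by
  simp only [tieBlindModule, Submodule.mem_iInf, LinearMap.mem_eqLocus]

lemma signedSum_braidOp_of_rel {π : Setoid α} {a : α} {τ : Perm α} {p r : α} (hpr : p ≠ r)
    (hp : π a (τ p)) (hr : π a (τ r)) (ρ : Setoid α) (x : TieModule k α) :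
    signedSum k π a ρ τ (braidOp q p r x) = - signedSum k π a ρ τ x := by
  have hτ (σ : Perm α) : σ * swap (τ p) (τ r) * τ = σ * τ * swap p r := by
    rw [mul_assoc, ← mul_swap_eq_swap_mul, mul_assoc]
  have hreindex : ∑ σ : blockPerms π a, ((Perm.sign (σ : Perm α) : ℤ) : k) *
        (swapCoeff q ρ ((σ * τ) p) ((σ * τ) r) * x (ρ, σ * τ * swap p r)) =
      ∑ σ : blockPerms π a, -((Perm.sign (σ : Perm α) : ℤ) : k) *
        (swapCoeff q ρ ((σ * τ) r) ((σ * τ) p) * x (ρ, σ * τ)) := by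
    rw [← Equiv.sum_comp (Equiv.mulRight ⟨swap (τ p) (τ r), swap_mem_blockPerms hp hr⟩)]
    refine Finset.sum_congr rfl fun σ _ => ?_
    simp only [coe_mulRight, Subgroup.coe_mul, hτ, Perm.sign_mul,
      Perm.sign_swap (τ.injective.ne hpr), mul_neg_one, Units.val_neg, Int.cast_neg]
    rw [mul_assoc _ (swap p r), swap_mul_self, mul_one]
    simp only [Perm.mul_apply, swap_apply_left, swap_apply_right]
  simp only [signedSum_apply, braidOp_apply, mul_add, Finset.sum_add_distrib]
  rw [hreindex, ← Finset.sum_add_distrib, ← Finset.sum_neg_distrib]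
  refine Finset.sum_congr rfl fun σ _ => ?_
  linear_combination ((Perm.sign (σ : Perm α) : ℤ) : k) * x (ρ, σ * τ) *
    diagCoeff_sub_swapCoeff (q := q) ρ (((σ : Perm α) * τ).injective.ne hpr)

lemma signedSum_braidOp_of_coeff {π ρ : Setoid α} {a : α} {τ : Perm α} {p r : α} {A B : k}
    (hA : ∀ σ ∈ blockPerms π a, swapCoeff q ρ (σ (τ p)) (σ (τ r)) = A)
    (hB : ∀ σ ∈ blockPerms π a, diagCoeff q ρ (σ (τ p)) (σ (τ r)) = B) (x : TieModule k α) :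
    signedSum k π a ρ τ (braidOp q p r x) =
      A * signedSum k π a ρ (τ * swap p r) x + B * signedSum k π a ρ τ x := by
  simp only [signedSum_apply]
  rw [Finset.mul_sum, Finset.mul_sum, ← Finset.sum_add_distrib]
  refine Finset.sum_congr rfl fun σ _ => ?_
  rw [braidOp_apply, Perm.mul_apply, Perm.mul_apply, hA σ σ.2, hB σ σ.2, mul_assoc σ.1]
  ring

lemma braidOp_mem_tieBlindModule {p r : α} (hpr : p ≠ r) {x : TieModule k α}
    (hx : x ∈ tieBlindModule k α) : braidOp q p r x ∈ tieBlindModule k α := by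
  rw [mem_tieBlindModule] at hx ⊢
  intro π a τ
  by_cases h : π a (τ p) ∧ π a (τ r)
  · rw [signedSum_braidOp_of_rel hpr h.1 h.2, signedSum_braidOp_of_rel hpr h.1 h.2, hx]
  · have hne := τ.injective.ne hpr
    have hcoeff (ρ : Setoid α) (hρ : ρ = π ∨ ρ = isolateBlock π a) :=
      signedSum_braidOp_of_coeff (x := x)
        (fun σ hσ => (coeff_apply_of_mem_blockPerms (q := q) hne h hρ hσ).1)
        (fun σ hσ => (coeff_apply_of_mem_blockPerms hne h hρ hσ).2)
    rw [hcoeff π (.inl rfl), hcoeff _ (.inr rfl), hx, hx]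

-- Among the arrangements summed over, the descending one is the largest in the order of induction,
-- so the relation for its block determines its coefficient from smaller ones.
lemma eq_zero_of_mem_tieBlindModule {x : TieModule k α} (hx : x ∈ tieBlindModule k α)
    (hgood : ∀ z ∈ goodPairs α, x z = 0) : x = 0 := by
  have := finite_setoid α
  suffices h : ∀ π τ, x (π, τ) = 0 from funext fun z => h z.1 z.2
  intro π
  induction π using WellFoundedLT.induction with
  | ind π ihπ =>
    intro τ
    induction hl : toLex ⇑τ.symm using WellFoundedLT.induction generalizing τ with
    | ind l ihτ =>
      subst hl
      by_cases hz : (π, τ) ∈ goodPairs α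
      · exact hgood _ hz
      obtain ⟨a, ha⟩ : ∃ a, IsDescendingBlock π τ a := by
        simpa only [goodPairs, Set.mem_ofPred_eq, not_forall, not_not] using hz
      obtain ⟨b, hab, hne⟩ := ha.1
      have hrel := mem_tieBlindModule.1 hx π a τ
      have hsplit : signedSum k π a (isolateBlock π a) τ x = 0 := by
        rw [signedSum_apply]
        exact Finset.sum_eq_zero fun σ _ => by rw [ihπ _ (isolateBlock_lt hab hne), mul_zero]
      rw [hsplit, signedSum_apply, Finset.sum_eq_single 1] at hrel
      · simpa only [Subgroup.coe_one, Perm.sign_one, Units.val_one, Int.cast_one,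
          one_mul] using hrel
      · intro σ _ hσ
        rw [ihτ _ (toLex_symm_mul_lt σ.2 (fun h => hσ (Subtype.ext h)) ha) _ rfl, mul_zero]
      · exact fun h => absurd (Finset.mem_univ _) h

end SignedSum

variable {k : Type*} {n : ℕ}

lemma braidModule_le_tieBlindModule [CommRing k] {q : k} :
    braidModule q n ≤ tieBlindModule k (Fin (n + 1)) := by
  rintro _ ⟨T, hT, rfl⟩
  have hstable : ∀ x ∈ tieBlindModule k (Fin (n + 1)), T x ∈ tieBlindModule k (Fin (n + 1)) := by
    induction hT using Algebra.adjoin_induction with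
    | mem T hT =>
      obtain ⟨i, rfl⟩ := hT
      exact fun x hx => braidOp_mem_tieBlindModule i.castSucc_lt_succ.ne hx
    | algebraMap c => exact fun x hx => Submodule.smul_mem _ c hx
    | add _ _ _ _ hS hT => exact fun x hx => add_mem (hS x hx) (hT x hx)
    | mul _ _ _ _ hS hT => exact fun x hx => hS _ (hT x hx)
  refine hstable _ (mem_tieBlindModule.2 fun π a τ => ?_)
  simp only [signedSum_apply, slice_apply]

/-- The restriction of the functions in the cyclic module to the good pairs. -/
def restrictGood [CommRing k] (q : k) (n : ℕ) :
    braidModule q n →ₗ[k] (goodPairs (Fin (n + 1)) → k) :=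
  (LinearMap.funLeft k k Subtype.val).comp (braidModule q n).subtype

lemma restrictGood_injective [CommRing k] {q : k} : Function.Injective (restrictGood q n) := by
  rw [injective_iff_map_eq_zero]
  exact fun x hx => Subtype.ext <| eq_zero_of_mem_tieBlindModule
    (braidModule_le_tieBlindModule x.2) fun z hz => congrFun hx ⟨z, hz⟩

end TieModule

section HeckeElements

variable {k R : Type*} [Field k] [Ring R] [Algebra k R] {C : Subalgebra k R} {q : k} {ε g g' : R}

-- For `h = 1 + g` and `h' = 1 + g'`, under `ε` the braid relation becomes
-- `h h' h - h' h h' = q (h - h')`.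
lemma mul_one_add_sub_mem_of_mul_mem (hg : g ∈ C) (hg' : g' ∈ C) (hε : Commute ε g') (hq : q ≠ 0)
    (hbraid : g * g' * g = g' * g * g')
    (hhecke : ε * ((1 + g) * (1 + g)) = (q + 1) • (ε * (1 + g)))
    (hhecke' : ε * ((1 + g') * (1 + g')) = (q + 1) • (ε * (1 + g')))
    (hmem : ε * ((1 + g) * (1 + g')) ∈ C) : ε * (1 + g) - ε * (1 + g') ∈ C := by
  have hdiff : (1 + g) * (1 + g') * (1 + g) - (1 + g') * ((1 + g) * (1 + g')) =
      (1 + g) * (1 + g) - (1 + g) - ((1 + g') * (1 + g') - (1 + g')) := by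
    rw [← sub_eq_zero, ← sub_eq_zero.2 hbraid]
    noncomm_ring
  have hcomm : (1 + g') * (ε * ((1 + g) * (1 + g'))) = ε * ((1 + g') * ((1 + g) * (1 + g'))) := by
    rw [← mul_assoc, ← ((Commute.one_right ε).add_right hε).eq, mul_assoc]
  have hq_smul : q • (ε * (1 + g) - ε * (1 + g')) =
      ε * ((1 + g) * (1 + g')) * (1 + g) - (1 + g') * (ε * ((1 + g) * (1 + g'))) := by
    rw [hcomm, mul_assoc ε, ← mul_sub ε (_ * _), hdiff, mul_sub, mul_sub, mul_sub ε (_ * _), hhecke,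
      hhecke']
    module
  have h1 (x : R) (hx : x ∈ C) : 1 + x ∈ C := add_mem (one_mem C) hx
  rw [← inv_smul_smul₀ hq (ε * (1 + g) - ε * (1 + g')), hq_smul]
  exact C.smul_mem (sub_mem (mul_mem hmem (h1 g hg)) (mul_mem (h1 g' hg') hmem)) _

lemma mul_one_add_mem_of_mul_mem (hg : g ∈ C) (hg' : g' ∈ C) (hε : Commute ε g') (hq : q ≠ 0)
    (hq1 : q + 1 ≠ 0) (hbraid : g * g' * g = g' * g * g')
    (hhecke : ε * ((1 + g) * (1 + g)) = (q + 1) • (ε * (1 + g)))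
    (hhecke' : ε * ((1 + g') * (1 + g')) = (q + 1) • (ε * (1 + g')))
    (hmem : ε * ((1 + g) * (1 + g')) ∈ C) : ε * (1 + g) ∈ C ∧ ε * (1 + g') ∈ C := by
  have hsub := mul_one_add_sub_mem_of_mul_mem hg hg' hε hq hbraid hhecke hhecke' hmem
  have hmem' : ε * (1 + g') ∈ C := by
    rw [← inv_smul_smul₀ hq1 (ε * (1 + g')), ← hhecke']
    refine C.smul_mem ?_ _
    convert sub_mem hmem (mul_mem hsub (add_mem (one_mem C) hg')) using 1
    rw [sub_mul, mul_assoc, mul_assoc, sub_sub_cancel]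
  exact ⟨by simpa only [sub_add_cancel] using add_mem hsub hmem', hmem'⟩

end HeckeElements

namespace TieModule

open Equiv

section RelTie

variable {k α : Type*} [CommRing k] {P Q : α → α → Prop}

open Classical in
/-- The projection onto the functions supported on the pairs `(π, τ)` in which all pairs of
positions related by `P` are tied. -/
def relTieOp (k : Type*) [CommRing k] (P : α → α → Prop) : Module.End k (TieModule k α) where
  toFun x z := if ∀ s t, P s t → z.1 (z.2 s) (z.2 t) then x z else 0
  map_add' x y := by ext z; simp only [Pi.add_apply]; split_ifs <;> simp only [add_zero]
  map_smul' c x := by ext z; simp only [Pi.smul_apply, RingHom.id_apply]; split_ifs <;>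
    simp only [smul_zero]

lemma relTieOp_apply_of_forall {π : Setoid α} {τ : Perm α} (h : ∀ s t, P s t → π (τ s) (τ t))
    (x : TieModule k α) : relTieOp k P x (π, τ) = x (π, τ) := if_pos h

lemma relTieOp_apply_of_not_forall {π : Setoid α} {τ : Perm α}
    (h : ¬ ∀ s t, P s t → π (τ s) (τ t)) (x : TieModule k α) : relTieOp k P x (π, τ) = 0 := if_neg h

lemma relTieOp_eq_one (hP : ∀ s t, P s t → s = t) : relTieOp k P = 1 := by
  ext1 x; funext ⟨π, τ⟩
  exact relTieOp_apply_of_forall (fun s t h => hP s t h ▸ π.refl' _) x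

lemma relTieOp_mul_of_forall {S : α → α → Prop}
    (h : ∀ K : Setoid α, (∀ s t, S s t → K s t) ↔ (∀ s t, P s t → K s t) ∧ ∀ s t, Q s t → K s t) :
    relTieOp k P * relTieOp k Q = relTieOp k S := by
  ext1 x; funext ⟨π, τ⟩
  have h := h (π.comap τ)
  simp only [Setoid.comap_rel] at h
  rw [Module.End.mul_apply]
  by_cases hP : ∀ s t, P s t → π (τ s) (τ t)
  · rw [relTieOp_apply_of_forall hP]
    by_cases hQ : ∀ s t, Q s t → π (τ s) (τ t)
    · rw [relTieOp_apply_of_forall hQ, relTieOp_apply_of_forall (h.2 ⟨hP, hQ⟩)]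
    · rw [relTieOp_apply_of_not_forall hQ, relTieOp_apply_of_not_forall fun hS => hQ (h.1 hS).2]
  · rw [relTieOp_apply_of_not_forall hP, relTieOp_apply_of_not_forall fun hS => hP (h.1 hS).1]

lemma tieOp_eq_relTieOp (p r : α) : tieOp p r = relTieOp k fun s t => s = p ∧ t = r := by
  ext1 x; funext ⟨π, τ⟩
  rw [tieOp_apply]
  by_cases h : π (τ p) (τ r)
  · rw [tieCoeff_of_rel h, one_mul,
      relTieOp_apply_of_forall fun s t hst => by rw [hst.1, hst.2]; exact h]
  · rw [tieCoeff_of_not_rel h, zero_mul,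
      relTieOp_apply_of_not_forall fun hst => h (hst p r ⟨rfl, rfl⟩)]

lemma relTieOp_mul_tieOp {p r : α} (h : P p r) : relTieOp k P * tieOp p r = relTieOp k P := by
  rw [tieOp_eq_relTieOp]
  refine relTieOp_mul_of_forall fun K => ⟨fun hK => ⟨hK, ?_⟩, And.left⟩
  rintro s t ⟨rfl, rfl⟩
  exact hK _ _ h

variable [LinearOrder α] {q : k} {p r : α}

lemma forall_rel_iff_forall_rel_mul_swap {π : Setoid α} {τ : Perm α}
    (h : P p r ∨ ∀ s t, P s t → P (swap p r s) (swap p r t)) :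
    (∀ s t, P s t → π (τ s) (τ t)) ↔
      ∀ s t, P s t → π ((τ * swap p r) s) ((τ * swap p r) t) := by
  simp only [Perm.mul_apply]
  by_cases hπ : π (τ p) (τ r)
  · have hrel (s : α) := rel_apply_swap hπ s
    exact ⟨fun hP s t hst => π.trans' (π.symm' (hrel s)) (π.trans' (hP s t hst) (hrel t)),
      fun hP s t hst => π.trans' (hrel s) (π.trans' (hP s t hst) (π.symm' (hrel t)))⟩
  rcases h with h | h
  · refine iff_of_false (fun hP => hπ (hP p r h)) fun hP => hπ (π.symm' ?_)
    simpa only [swap_apply_left, swap_apply_right] using hP p r h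
  · refine ⟨fun hP s t hst => hP _ _ (h s t hst), fun hP s t hst => ?_⟩
    simpa only [swap_apply_self] using hP _ _ (h s t hst)

lemma commute_relTieOp_braidOp (h : P p r ∨ ∀ s t, P s t → P (swap p r s) (swap p r t)) :
    Commute (relTieOp k P) (braidOp q p r) := by
  ext1 x; funext ⟨π, τ⟩
  simp only [Module.End.mul_apply]
  by_cases hτ : ∀ s t, P s t → π (τ s) (τ t)
  · rw [relTieOp_apply_of_forall hτ, braidOp_apply, braidOp_apply, relTieOp_apply_of_forall hτ,
      relTieOp_apply_of_forall ((forall_rel_iff_forall_rel_mul_swap h).1 hτ)]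
  · rw [relTieOp_apply_of_not_forall hτ, braidOp_apply, relTieOp_apply_of_not_forall hτ,
      relTieOp_apply_of_not_forall (mt (forall_rel_iff_forall_rel_mul_swap h).2 hτ), mul_zero,
      mul_zero, add_zero]

lemma relTieOp_mul_hecke (hpr : p ≠ r) (h : P p r) :
    relTieOp k P * ((1 + braidOp q p r) * (1 + braidOp q p r)) =
      (q + 1) • (relTieOp k P * (1 + braidOp q p r)) := by
  have hsq : (1 + braidOp q p r) * (1 + braidOp q p r) = (2 : k) • (1 + braidOp q p r) +
      (q - 1) • (tieOp p r * (1 + braidOp q p r)) := by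
    rw [mul_add, mul_one, add_mul, one_mul, braidOp_mul_self q hpr, two_smul]
    abel
  rw [hsq, mul_add, mul_smul_comm, mul_smul_comm, ← mul_assoc, relTieOp_mul_tieOp h, ← add_smul]
  congr 1
  ring

end RelTie

section Interval

variable {k : Type*} [Field k] {n : ℕ} {q : k}

/-- The simultaneous tie of all positions in the interval from `a` to `b`. -/
abbrev intervalTieOp (k : Type*) [CommRing k] {n : ℕ} (a b : Fin (n + 1)) :
    Module.End k (TieModule k (Fin (n + 1))) :=
  relTieOp k fun p r => p ∈ Set.Icc a b ∧ r ∈ Set.Icc a b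

lemma intervalTieOp_self (a : Fin (n + 1)) : intervalTieOp k a a = 1 := by
  refine relTieOp_eq_one fun s t hst => ?_
  rw [Set.Icc_self, Set.mem_singleton_iff, Set.mem_singleton_iff] at hst
  exact hst.1.trans hst.2.symm

lemma castSucc_mem_Icc_and_succ_mem_Icc {a b : Fin (n + 1)} {i : Fin n} (ha : a ≤ i.castSucc)
    (hb : i.succ ≤ b) : i.castSucc ∈ Set.Icc a b ∧ i.succ ∈ Set.Icc a b :=
  ⟨⟨ha, i.castSucc_lt_succ.le.trans hb⟩, ha.trans i.castSucc_lt_succ.le, hb⟩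

lemma commute_intervalTieOp {a b : Fin (n + 1)} {i : Fin n} (ha : a ≤ i.castSucc)
    (hb : i.succ ≤ b) : Commute (intervalTieOp k a b) (1 + braidOp q i.castSucc i.succ) :=
  (Commute.one_right _).add_right
    (commute_relTieOp_braidOp (.inl (castSucc_mem_Icc_and_succ_mem_Icc ha hb)))

lemma intervalTieOp_mul_tieOp {a : Fin (n + 1)} {i : Fin n} (ha : a ≤ i.castSucc) :
    intervalTieOp k a i.castSucc * tieOp i.castSucc i.succ = intervalTieOp k a i.succ := by
  rw [tieOp_eq_relTieOp]
  refine relTieOp_mul_of_forall fun K => ⟨fun hK => ⟨fun s t hst => hK s t ?_, ?_⟩, ?_⟩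
  · exact ⟨⟨hst.1.1, hst.1.2.trans i.castSucc_lt_succ.le⟩,
      hst.2.1, hst.2.2.trans i.castSucc_lt_succ.le⟩
  · rintro s t ⟨rfl, rfl⟩
    exact hK _ _ ⟨⟨ha, i.castSucc_lt_succ.le⟩, ha.trans i.castSucc_lt_succ.le, le_rfl⟩
  · rintro ⟨hK, hi⟩
    have hrel (s : Fin (n + 1)) (hs : s ∈ Set.Icc a i.succ) : K i.castSucc s := by
      rcases hs.2.eq_or_lt with rfl | hlt
      · exact hi _ _ ⟨rfl, rfl⟩
      · exact hK _ _ ⟨⟨ha, le_rfl⟩, hs.1, Fin.le_castSucc_iff.2 hlt⟩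
    exact fun s t hst => K.trans' (K.symm' (hrel s hst.1)) (hrel t hst.2)

lemma braidOp_mem_braidAlgebra (q : k) (i : Fin n) :
    braidOp q i.castSucc i.succ ∈ braidAlgebra q n := Algebra.subset_adjoin ⟨i, rfl⟩

lemma tieOp_mul_one_add_braidOp_mem (hq : q - 1 ≠ 0) (i : Fin n) :
    tieOp i.castSucc i.succ * (1 + braidOp q i.castSucc i.succ) ∈ braidAlgebra q n := by
  have hmem := braidOp_mem_braidAlgebra q i
  have hsq := braidOp_mul_self q i.castSucc_lt_succ.ne
  rw [← inv_smul_smul₀ hq (_ * _), ← sub_eq_iff_eq_add'.2 hsq]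
  exact Subalgebra.smul_mem _ (sub_mem (mul_mem hmem hmem) (one_mem _)) _

lemma relTieOp_mul_mem_of_mul_mem (hq : q ≠ 0) (hq1 : q + 1 ≠ 0)
    {P : Fin (n + 1) → Fin (n + 1) → Prop} {i j : Fin n} (hij : i.succ = j.castSucc)
    (hi : P i.castSucc i.succ) (hj : P j.castSucc j.succ)
    (hmem : relTieOp k P * ((1 + braidOp q i.castSucc i.succ) * (1 + braidOp q j.castSucc j.succ)) ∈
      braidAlgebra q n) :
    relTieOp k P * (1 + braidOp q i.castSucc i.succ) ∈ braidAlgebra q n ∧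
      relTieOp k P * (1 + braidOp q j.castSucc j.succ) ∈ braidAlgebra q n := by
  have hilt := i.castSucc_lt_succ
  have hjlt := j.castSucc_lt_succ
  have hbraid := braidOp_braid q (hij ▸ hilt.ne) ((hij ▸ hilt).trans hjlt).ne hjlt.ne
  rw [← hij] at hbraid
  refine mul_one_add_mem_of_mul_mem (braidOp_mem_braidAlgebra q i) (braidOp_mem_braidAlgebra q j)
    (commute_relTieOp_braidOp (.inl hj)) hq hq1 ?_ (relTieOp_mul_hecke hilt.ne hi)
    (relTieOp_mul_hecke hjlt.ne hj) hmem
  rw [← hij]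
  exact hbraid

lemma intervalTieOp_succ_mul_mem (hq : q ≠ 0) (hq1 : q + 1 ≠ 0) (hqs : q - 1 ≠ 0) {a : Fin (n + 1)}
    {j : Fin n} (ha : a ≤ j.castSucc)
    (ih : ∀ i : Fin n, a ≤ i.castSucc → i.succ ≤ j.castSucc →
      intervalTieOp k a j.castSucc * (1 + braidOp q i.castSucc i.succ) ∈ braidAlgebra q n) :
    intervalTieOp k a j.succ * (1 + braidOp q j.castSucc j.succ) ∈ braidAlgebra q n := by
  have htie := tieOp_mul_one_add_braidOp_mem hqs j
  have hmul := intervalTieOp_mul_tieOp (k := k) ha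
  rcases ha.eq_or_lt with rfl | hlt
  · rwa [← hmul, intervalTieOp_self, one_mul]
  obtain ⟨i, hi⟩ := Fin.exists_succ_eq_of_ne_zero ((Fin.zero_le a).trans_lt hlt).ne'
  have hai : a ≤ i.castSucc := Fin.le_castSucc_iff.2 (hi ▸ hlt)
  refine (relTieOp_mul_mem_of_mul_mem hq hq1 hi (castSucc_mem_Icc_and_succ_mem_Icc hai ?_)
    (castSucc_mem_Icc_and_succ_mem_Icc ha le_rfl) ?_).2
  · exact hi ▸ j.castSucc_lt_succ.le
  convert mul_mem (ih i hai hi.le) htie using 1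
  rw [(commute_intervalTieOp hai hi.le).eq, mul_assoc, ← mul_assoc (intervalTieOp k a j.castSucc),
    hmul, ← mul_assoc, ← mul_assoc, (commute_intervalTieOp hai (hi ▸ j.castSucc_lt_succ.le)).eq]

lemma intervalTieOp_mul_mem_of_succ (hq : q ≠ 0) (hq1 : q + 1 ≠ 0) {a b : Fin (n + 1)} {i j : Fin n}
    (hij : i.succ = j.castSucc) (ha : a ≤ i.castSucc) (hb : j.succ ≤ b)
    (hj : intervalTieOp k a b * (1 + braidOp q j.castSucc j.succ) ∈ braidAlgebra q n) :
    intervalTieOp k a b * (1 + braidOp q i.castSucc i.succ) ∈ braidAlgebra q n := by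
  have hib : i.succ ≤ b := hij ▸ j.castSucc_lt_succ.le.trans hb
  refine (relTieOp_mul_mem_of_mul_mem hq hq1 hij (castSucc_mem_Icc_and_succ_mem_Icc ha hib)
    (castSucc_mem_Icc_and_succ_mem_Icc (hij ▸ ha.trans i.castSucc_lt_succ.le) hb) ?_).1
  rw [← mul_assoc, (commute_intervalTieOp ha hib).eq, mul_assoc]
  exact mul_mem (add_mem (one_mem _) (braidOp_mem_braidAlgebra q i)) hj

lemma intervalTieOp_mul_mem (hq : q ≠ 0) (hq1 : q + 1 ≠ 0) (hqs : q - 1 ≠ 0) (a b : Fin (n + 1)) :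
    ∀ i : Fin n, a ≤ i.castSucc → i.succ ≤ b →
      intervalTieOp k a b * (1 + braidOp q i.castSucc i.succ) ∈ braidAlgebra q n := by
  induction b using Fin.induction with
  | zero => exact fun i _ hi => absurd (Fin.le_zero_iff.1 hi) (Fin.succ_ne_zero i)
  | succ j ih =>
    have hdescend (m : ℕ) : ∀ i : Fin n, (i : ℕ) + m = j → a ≤ i.castSucc →
        intervalTieOp k a j.succ * (1 + braidOp q i.castSucc i.succ) ∈ braidAlgebra q n := by
      induction m with
      | zero =>
        intro i hi ha
        obtain rfl : i = j := Fin.ext hi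
        exact intervalTieOp_succ_mul_mem hq hq1 hqs ha ih
      | succ m ihm =>
        intro i hi ha
        obtain ⟨l, hl⟩ : ∃ l : Fin n, (l : ℕ) = i + 1 := ⟨⟨i + 1, by omega⟩, rfl⟩
        have hil : i.succ = l.castSucc := Fin.ext hl.symm
        exact intervalTieOp_mul_mem_of_succ hq hq1 hil ha
          (Fin.succ_le_succ_iff.2 (Fin.le_def.2 (by omega)))
          (ihm l (by omega) (hil ▸ ha.trans i.castSucc_lt_succ.le))
    exact fun i ha hi => hdescend (j - i) i (Nat.add_sub_cancel' (Fin.succ_le_succ_iff.1 hi)) ha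

end Interval

section RightShift

variable {α : Type*} [LinearOrder α] {π : Setoid α} {τ ω : Perm α}

/-- The arrangement `ω` is obtained from `τ` by permuting the values of every block of `π` in such a
way that a value replacing a larger one comes from the left. -/
def IsRightShift (π : Setoid α) (τ ω : Perm α) : Prop :=
  ∀ p, π (τ p) (ω p) ∧ (ω p < τ p → τ.symm (ω p) < p)

lemma IsRightShift.mono {ρ : Setoid α} (h : IsRightShift ρ τ ω) (hρ : ρ ≤ π) :
    IsRightShift π τ ω := fun p => ⟨hρ (h p).1, (h p).2⟩

lemma IsRightShift.toLex_symm_lt [WellFoundedLT α] (h : IsRightShift π τ ω) (hne : ω ≠ τ) :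
    toLex ⇑τ.symm < toLex ⇑ω.symm := by
  have hsymm : toLex ⇑τ.symm ≠ toLex ⇑ω.symm := fun h =>
    hne (Equiv.symm_bijective.injective (DFunLike.coe_injective h)).symm
  refine (lt_or_gt_of_ne hsymm).resolve_right ?_
  rintro ⟨b, hfix, hlt⟩
  have hb : b < τ (ω.symm b) := by
    rcases lt_trichotomy b (τ (ω.symm b)) with hb | hb | hb
    · exact hb
    · exact absurd (τ.symm_apply_eq.2 hb) hlt.ne'
    · have hfix_b : ω.symm (τ (ω.symm b)) = τ.symm (τ (ω.symm b)) := hfix _ hb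
      rw [symm_apply_apply] at hfix_b
      exact absurd (ω.symm.injective hfix_b) hb.ne
  have hshift := (h (ω.symm b)).2
  rw [apply_symm_apply] at hshift
  exact hlt.not_gt (hshift hb)

end RightShift

lemma setOf_rel_eq_Icc {α : Type*} [LinearOrder α] [Finite α] {κ : Setoid α}
    (hκ : ∀ p r s, p ≤ r → r ≤ s → κ p s → κ p r) (a : α) :
    ∃ b c, {x | κ a x} = Set.Icc b c := by
  obtain ⟨b, hb, hmin⟩ := Set.exists_min_image {x | κ a x} id (Set.toFinite _) ⟨a, κ.refl' a⟩
  obtain ⟨c, hc, hmax⟩ := Set.exists_max_image {x | κ a x} id (Set.toFinite _) ⟨a, κ.refl' a⟩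
  refine ⟨b, c, Set.ext fun x => ⟨fun hx => ⟨hmin x hx, hmax x hx⟩, fun hx => ?_⟩⟩
  exact κ.trans' hb (hκ b x c hx.1 hx.2 (κ.trans' (κ.symm' hb) hc))

lemma relTieOp_comap_isolateBlock {k α : Type*} [CommRing k] {π : Setoid α} {τ : Perm α} {a : α}
    {S : Set α} (hS : ∀ p, p ∈ S ↔ π a (τ p)) :
    (relTieOp k fun p r => p ∈ S ∧ r ∈ S) * relTieOp k ((isolateBlock π a).comap τ) =
      relTieOp k (π.comap τ) := by
  refine relTieOp_mul_of_forall fun K => ⟨fun hK => ⟨fun s t hst => hK s t ?_, fun s t hst => ?_⟩,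
    fun hK s t hst => ?_⟩
  · exact π.trans' (π.symm' ((hS s).1 hst.1)) ((hS t).1 hst.2)
  · rcases hst with hst | ⟨hst, -⟩
    · rw [τ.injective hst]
    · exact hK s t hst
  · by_cases hs : π a (τ s)
    · exact hK.1 s t ⟨(hS s).2 hs, (hS t).2 (π.trans' hs hst)⟩
    · exact hK.2 s t (.inr ⟨hst, hs⟩)

section Ascent

variable {k : Type*} [CommRing k] {n : ℕ} {q : k} {π : Setoid (Fin (n + 1))}
  {τ : Perm (Fin (n + 1))} {a : Fin (n + 1)}

lemma commute_relTieOp_isolateBlock_braidOp {i : Fin n} (hi : π a (τ i.castSucc))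
    (hi' : π a (τ i.succ)) :
    Commute (relTieOp k ((isolateBlock π a).comap τ)) (braidOp q i.castSucc i.succ) := by
  refine commute_relTieOp_braidOp (.inr ?_)
  have hfix (s : Fin (n + 1)) (hs : ¬ π a (τ s)) : swap i.castSucc i.succ s = s :=
    swap_apply_of_ne_of_ne (fun h => hs (h ▸ hi)) fun h => hs (h ▸ hi')
  rintro s t (hst | ⟨hst, hs⟩)
  · exact .inl (by rw [τ.injective hst])
  · rw [hfix s hs, hfix t fun ht => hs (π.trans' ht (π.symm' hst))]
    exact .inr ⟨hst, hs⟩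

lemma isRightShift_one_add_braidOp {i : Fin n} (hi : π a (τ i.castSucc)) (hi' : π a (τ i.succ))
    (hlt : τ i.castSucc < τ i.succ) {y : TieModule k (Fin (n + 1))} (hτ : ∀ ρ, y (ρ, τ) = 1)
    (hy : ∀ ρ ω, y (ρ, ω) ≠ 0 → IsRightShift (isolateBlock π a) τ ω) :
    (∀ ρ, (1 + braidOp q i.castSucc i.succ) y (ρ, τ) = 1) ∧
      ∀ ρ ω, (1 + braidOp q i.castSucc i.succ) y (ρ, ω) ≠ 0 → IsRightShift π τ ω := by
  have hfix {ρ} {ω : Perm (Fin (n + 1))} (h : y (ρ, ω) ≠ 0) :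
      ω i.castSucc = τ i.castSucc ∧ ω i.succ = τ i.succ :=
    ⟨((hy ρ ω h i.castSucc).1.resolve_right fun h => h.2 hi).symm,
      ((hy ρ ω h i.succ).1.resolve_right fun h => h.2 hi').symm⟩
  have hle := isolateBlock_le π a
  simp only [LinearMap.add_apply, Module.End.one_apply, Pi.add_apply, braidOp_apply]
  constructor
  · intro ρ
    have hzero : y (ρ, τ * swap i.castSucc i.succ) = 0 := by
      by_contra h
      have := (hfix h).1
      rw [Perm.mul_apply, swap_apply_left] at this
      exact hlt.ne' this
    have hdiag : diagCoeff q ρ (τ i.castSucc) (τ i.succ) = 0 := if_neg fun h => hlt.not_gt h.2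
    rw [hτ, hzero, hdiag, mul_zero, zero_mul, add_zero, add_zero]
  · intro ρ ω hω
    by_cases h : y (ρ, ω) = 0
    swap
    · exact (hy ρ ω h).mono hle
    rw [h, mul_zero, add_zero, zero_add] at hω
    have hs := right_ne_zero_of_mul hω
    have hfix_s := hfix hs
    simp only [Perm.mul_apply, swap_apply_left, swap_apply_right] at hfix_s
    intro p
    by_cases hp : p = i.castSucc
    · rw [hp, hfix_s.2]
      exact ⟨π.trans' (π.symm' hi) hi', fun h => absurd h hlt.not_gt⟩
    by_cases hp' : p = i.succ
    · rw [hp', hfix_s.1, symm_apply_apply]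
      exact ⟨π.trans' (π.symm' hi') hi, fun _ => i.castSucc_lt_succ⟩
    · simpa only [Perm.mul_apply, swap_apply_of_ne_of_ne hp hp'] using (hy _ _ hs).mono hle p

end Ascent

lemma convex_isolateBlock {α : Type*} [PartialOrder α] {π : Setoid α} {τ : Perm α} {a : α}
    (hconv : ∀ p r s, p ≤ r → r ≤ s → π (τ p) (τ s) → π (τ p) (τ r)) :
    ∀ p r s, p ≤ r → r ≤ s → isolateBlock π a (τ p) (τ s) → isolateBlock π a (τ p) (τ r) := by
  rintro p r s hpr hrs (hps | ⟨hps, ha⟩)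
  · exact .inl (congrArg τ (hpr.antisymm (hrs.trans_eq (τ.injective hps).symm)))
  · exact .inr ⟨hconv p r s hpr hrs hps, ha⟩

lemma exists_ascent_isolateBlock {n : ℕ} {π : Setoid (Fin (n + 1))} {τ : Perm (Fin (n + 1))}
    {a : Fin (n + 1)} (hasc : ∀ b c, π b c → c ≠ b → ∃ i : Fin n, π b (τ i.castSucc) ∧
      π b (τ i.succ) ∧ τ i.castSucc < τ i.succ) :
    ∀ b c, isolateBlock π a b c → c ≠ b → ∃ i : Fin n, isolateBlock π a b (τ i.castSucc) ∧
      isolateBlock π a b (τ i.succ) ∧ τ i.castSucc < τ i.succ := by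
  rintro b c (rfl | ⟨hbc, hab⟩) hne
  · exact absurd rfl hne
  · obtain ⟨i, hi, hi', hlt⟩ := hasc b c hbc hne
    exact ⟨i, .inr ⟨hi, hab⟩, .inr ⟨hi', hab⟩, hlt⟩

lemma exists_relTieOp_mul_mem {k : Type*} [Field k] {n : ℕ} {q : k} (hq : q ≠ 0) (hq1 : q + 1 ≠ 0)
    (hqs : q - 1 ≠ 0) {τ : Perm (Fin (n + 1))} (π : Setoid (Fin (n + 1)))
    (hconv : ∀ p r s, p ≤ r → r ≤ s → π (τ p) (τ s) → π (τ p) (τ r))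
    (hasc : ∀ b c, π b c → c ≠ b → ∃ i : Fin n, π b (τ i.castSucc) ∧ π b (τ i.succ) ∧
      τ i.castSucc < τ i.succ) :
    ∃ M, relTieOp k (π.comap τ) * M ∈ braidAlgebra q n ∧ (∀ ρ, M (slice k τ) (ρ, τ) = 1) ∧
      ∀ ρ ω, M (slice k τ) (ρ, ω) ≠ 0 → IsRightShift π τ ω := by
  have := finite_setoid (Fin (n + 1))
  induction π using WellFoundedLT.induction with
  | ind π ih =>
    by_cases hπ : ∀ b c, π b c → c = b
    · refine ⟨1, ?_, fun ρ => if_pos rfl, fun ρ ω hω p => ?_⟩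
      · rw [relTieOp_eq_one (P := π.comap τ) fun s t h => (τ.injective (hπ _ _ h)).symm, one_mul]
        exact one_mem _
      · rw [Module.End.one_apply, slice_apply, ne_eq, ite_eq_right_iff, Classical.not_imp] at hω
        rw [hω.1]
        exact ⟨π.refl' _, fun h => absurd h (lt_irrefl _)⟩
    simp only [not_forall] at hπ
    obtain ⟨a, b, hab, hne⟩ := hπ
    obtain ⟨i, hleft, hright, hlt⟩ := hasc a b hab hne
    obtain ⟨M, hM, hMτ, hshift⟩ := ih (isolateBlock π a) (isolateBlock_lt hab hne)
      (convex_isolateBlock hconv) (exists_ascent_isolateBlock hasc)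
    obtain ⟨lo, hi, hblock⟩ := setOf_rel_eq_Icc (κ := π.comap τ) hconv (τ.symm a)
    have hmem (p : Fin (n + 1)) : p ∈ Set.Icc lo hi ↔ π a (τ p) := by
      rw [← hblock, Set.mem_ofPred_eq, Setoid.comap_rel, apply_symm_apply]
    have hinterval := intervalTieOp_mul_mem hq hq1 hqs lo hi i ((hmem _).2 hleft).1
      ((hmem _).2 hright).2
    have hcomm := commute_relTieOp_isolateBlock_braidOp (k := k) (q := q) hleft hright
    refine ⟨(1 + braidOp q i.castSucc i.succ) * M, ?_,
      isRightShift_one_add_braidOp hleft hright hlt hMτ hshift⟩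
    convert mul_mem hinterval hM using 1
    rw [← relTieOp_comap_isolateBlock hmem, mul_assoc, mul_assoc, ← mul_assoc _ _ M,
      ((Commute.one_right _).add_right hcomm).eq, mul_assoc]

lemma exists_ascent {β : Type*} [LinearOrder β] {n : ℕ} {f : Fin (n + 1) → β} {p r : Fin (n + 1)}
    (hpr : p ≤ r) (hf : f p < f r) :
    ∃ i : Fin n, p ≤ i.castSucc ∧ i.succ ≤ r ∧ f i.castSucc < f i.succ := by
  induction r using Fin.induction with
  | zero => rw [Fin.le_zero_iff.1 hpr] at hf; exact absurd hf (lt_irrefl _)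
  | succ i ih =>
    have hpi : p ≤ i.castSucc := Fin.le_castSucc_iff.2 (hpr.lt_of_ne fun h => hf.ne (congrArg f h))
    rcases lt_or_ge (f i.castSucc) (f i.succ) with hi | hi
    · exact ⟨i, hpi, le_rfl, hi⟩
    · obtain ⟨j, hpj, hji, hj⟩ := ih hpi (hf.trans_le hi)
      exact ⟨j, hpj, hji.trans i.castSucc_lt_succ.le, hj⟩

section Leading

variable {k : Type*} {n : ℕ} {q : k} {π : Setoid (Fin (n + 1))} {τ : Perm (Fin (n + 1))}

lemma rel_of_monotone_blockLabel (hτ : Monotone (blockLabel π ∘ τ)) {p r s : Fin (n + 1)}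
    (hpr : p ≤ r) (hrs : r ≤ s) (hps : π (τ p) (τ s)) : π (τ p) (τ r) :=
  blockLabel_eq_iff.1 <| (hτ hpr).antisymm <| (hτ hrs).trans_eq (blockLabel_eq_iff.2 hps).symm

lemma exists_ascent_of_mem_goodPairs (hgood : (π, τ) ∈ goodPairs (Fin (n + 1)))
    (hτ : Monotone (blockLabel π ∘ τ)) {b c : Fin (n + 1)} (hbc : π b c) (hne : c ≠ b) :
    ∃ i : Fin n, π b (τ i.castSucc) ∧ π b (τ i.succ) ∧ τ i.castSucc < τ i.succ := by
  obtain ⟨d, e, hbd, hbe, hlt, hpos⟩ : ∃ d e, π b d ∧ π b e ∧ d < e ∧ τ.symm d ≤ τ.symm e := by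
    by_contra! hdesc
    exact hgood b ⟨⟨c, hbc, hne⟩, hdesc⟩
  obtain ⟨i, hi, hi', hasc⟩ := exists_ascent (f := τ) hpos (by simpa only [apply_symm_apply])
  have hrel {r : Fin (n + 1)} (hr : τ.symm d ≤ r) (hr' : r ≤ τ.symm e) : π b (τ r) := by
    have hdr := rel_of_monotone_blockLabel hτ hr hr' <| by
      simpa only [apply_symm_apply] using π.trans' (π.symm' hbd) hbe
    rw [apply_symm_apply] at hdr
    exact π.trans' hbd hdr
  exact ⟨i, hrel hi (i.castSucc_lt_succ.le.trans hi'), hrel (hi.trans i.castSucc_lt_succ.le) hi',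
    hasc⟩

/-- The vector `x` has leading term `(π, τ)` with coefficient one: the other pairs in its support
have a strictly coarser partition, or the same partition and an arrangement shifted to the right. -/
def IsLeading [CommRing k] (π : Setoid (Fin (n + 1))) (τ : Perm (Fin (n + 1)))
    (x : TieModule k (Fin (n + 1))) : Prop :=
  x (π, τ) = 1 ∧ ∀ ρ ω, x (ρ, ω) ≠ 0 → π ≤ ρ ∧ (ρ = π → IsRightShift π τ ω)

lemma exists_isLeading_of_monotone [Field k] (hq : q ≠ 0) (hq1 : q + 1 ≠ 0) (hqs : q - 1 ≠ 0)
    (hgood : (π, τ) ∈ goodPairs (Fin (n + 1))) (hτ : Monotone (blockLabel π ∘ τ)) :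
    ∃ x ∈ braidModule q n, IsLeading π τ x := by
  obtain ⟨M, hM, hMτ, hshift⟩ := exists_relTieOp_mul_mem hq hq1 hqs π
    (fun _ _ _ => rel_of_monotone_blockLabel hτ)
    fun _ _ => exists_ascent_of_mem_goodPairs hgood hτ
  refine ⟨_, apply_mem_braidModule hM (slice_mem_braidModule τ), ?_, fun ρ ω hne => ?_⟩
  · rw [Module.End.mul_apply, relTieOp_apply_of_forall (P := π.comap τ) fun _ _ => id, hMτ]
  rw [Module.End.mul_apply] at hne
  have htied : ∀ s t, π (τ s) (τ t) → ρ (ω s) (ω t) := by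
    by_contra h
    exact hne (relTieOp_apply_of_not_forall h _)
  rw [relTieOp_apply_of_forall (P := π.comap τ) htied] at hne
  have hω := hshift ρ ω hne
  refine ⟨fun b c hbc => ?_, fun _ => hω⟩
  obtain ⟨s, rfl⟩ := ω.surjective b
  obtain ⟨t, rfl⟩ := ω.surjective c
  exact htied s t (π.trans' (hω s).1 (π.trans' hbc (π.symm' (hω t).1)))

lemma lt_of_swap_lt_swap {i : Fin n} {p r : Fin (n + 1)}
    (h : swap i.castSucc i.succ r < swap i.castSucc i.succ p)
    (hpr : ¬ (p = i.castSucc ∧ r = i.succ)) : r < p := by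
  simp only [swap_apply_def] at h
  split_ifs at h <;> simp only [Fin.lt_def, Fin.ext_iff, Fin.val_castSucc, Fin.val_succ] at * <;>
    omega

lemma IsRightShift.of_mul_swap {i : Fin n} (hi : ¬ π (τ i.castSucc) (τ i.succ))
    {ω : Perm (Fin (n + 1))} (h : IsRightShift π (τ * swap i.castSucc i.succ) ω) :
    IsRightShift π τ (ω * swap i.castSucc i.succ) := by
  intro p
  have hp := h (swap i.castSucc i.succ p)
  rw [Perm.mul_apply, swap_apply_self] at hp
  rw [Perm.mul_apply]
  refine ⟨hp.1, fun hlt => lt_of_swap_lt_swap (i := i) (by simpa using! hp.2 hlt) ?_⟩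
  rintro ⟨rfl, hr⟩
  rw [symm_apply_eq] at hr
  exact hi (hr ▸ hp.1)

lemma IsLeading.braidOp [CommRing k] {i : Fin n} (hi : ¬ π (τ i.castSucc) (τ i.succ))
    {x : TieModule k (Fin (n + 1))} (hx : IsLeading π (τ * swap i.castSucc i.succ) x) :
    IsLeading π τ (braidOp q i.castSucc i.succ x) := by
  refine ⟨?_, fun ρ ω hne => ?_⟩
  · rw [braidOp_apply, swapCoeff_of_not_rel hi, diagCoeff_of_not_rel hi, hx.1, one_mul, zero_mul,
      add_zero]
  rw [braidOp_apply] at hne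
  by_cases hswap : x (ρ, ω * swap i.castSucc i.succ) = 0
  · rw [hswap, mul_zero, zero_add] at hne
    have hω := hx.2 ρ ω (right_ne_zero_of_mul hne)
    refine ⟨hω.1, ?_⟩
    rintro rfl
    have hrel (p : Fin (n + 1)) := (hω.2 rfl p).1
    have hcast := hrel i.castSucc
    have hsucc := hrel i.succ
    rw [Perm.mul_apply, swap_apply_left] at hcast
    rw [Perm.mul_apply, swap_apply_right] at hsucc
    refine absurd (diagCoeff_of_not_rel fun h => hi ?_) (left_ne_zero_of_mul hne)
    exact ρ.trans' hsucc (ρ.trans' (ρ.symm' h) (ρ.symm' hcast))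
  · have hω := hx.2 ρ _ hswap
    refine ⟨hω.1, fun hρ => ?_⟩
    simpa only [mul_assoc, swap_mul_self, mul_one] using (hω.2 hρ).of_mul_swap hi

lemma mem_goodPairs_mul_swap {i : Fin n} (hi : ¬ π (τ i.castSucc) (τ i.succ))
    (hgood : (π, τ) ∈ goodPairs (Fin (n + 1))) :
    (π, τ * swap i.castSucc i.succ) ∈ goodPairs (Fin (n + 1)) := by
  rintro a ⟨hb, hdesc⟩
  refine hgood a ⟨hb, fun b c hab hac hbc => ?_⟩
  refine lt_of_swap_lt_swap (i := i) (by simpa using! hdesc b c hab hac hbc) ?_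
  rintro ⟨hb, hc⟩
  rw [symm_apply_eq] at hb hc
  exact hi (hb ▸ hc ▸ π.trans' (π.symm' hab) hac)

lemma exists_isLeading [Field k] (hq : q ≠ 0) (hq1 : q + 1 ≠ 0) (hqs : q - 1 ≠ 0)
    (hgood : (π, τ) ∈ goodPairs (Fin (n + 1))) : ∃ x ∈ braidModule q n, IsLeading π τ x := by
  induction τ using perm_induction_on_descents (blockLabel π) with
  | base τ hτ => exact exists_isLeading_of_monotone hq hq1 hqs hgood hτ
  | step τ i hi ih =>
    have hi' : ¬ π (τ i.castSucc) (τ i.succ) := fun h => hi.ne (blockLabel_eq_iff.2 h).symm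
    obtain ⟨x, hx, hlead⟩ := ih (mem_goodPairs_mul_swap hi' hgood)
    exact ⟨_, braidOp_apply_mem_braidModule i hx, hlead.braidOp hi'⟩

open Classical in
lemma eq_top_of_braidModule_le [Field k] (hq : q ≠ 0) (hq1 : q + 1 ≠ 0) (hqs : q - 1 ≠ 0)
    {W : Submodule k (TieModule k (Fin (n + 1)))} (hW : braidModule q n ≤ W)
    (hbad : ∀ z ∉ goodPairs (Fin (n + 1)), Pi.single z 1 ∈ W) : W = ⊤ := by
  have := finite_setoid (Fin (n + 1))
  suffices hsingle : ∀ π τ, Pi.single (π, τ) 1 ∈ W from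
    eq_top_iff.2 fun x _ => mem_of_single_mem fun z _ => hsingle z.1 z.2
  intro π
  induction π using WellFoundedGT.induction with
  | ind π ihπ =>
    intro τ
    induction hl : toLex ⇑τ.symm using WellFoundedGT.induction generalizing τ with
    | ind l ihτ =>
      subst hl
      by_cases hgood : (π, τ) ∈ goodPairs (Fin (n + 1))
      swap
      · exact hbad _ hgood
      obtain ⟨x, hx, hlead, hsupp⟩ := exists_isLeading hq hq1 hqs hgood
      rw [← sub_sub_cancel x (Pi.single (π, τ) 1)]
      refine sub_mem (hW hx) (mem_of_single_mem fun ⟨ρ, ω⟩ hne => ?_)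
      have hz : (ρ, ω) ≠ (π, τ) := by
        rintro h
        rw [h, Pi.sub_apply, hlead, Pi.single_eq_same, sub_self] at hne
        exact hne rfl
      rw [Pi.sub_apply, Pi.single_eq_of_ne hz, sub_zero] at hne
      obtain ⟨hle, hshift⟩ := hsupp ρ ω hne
      rcases hle.eq_or_lt with rfl | hlt
      · exact ihτ _ ((hshift rfl).toLex_symm_lt fun h => hz (h ▸ rfl)) ω rfl
      · exact ihπ ρ hlt ω

lemma restrictGood_surjective [Field k] (hq : q ≠ 0) (hq1 : q + 1 ≠ 0) (hqs : q - 1 ≠ 0) :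
    Function.Surjective (restrictGood q n) := by
  classical
  set restrict : TieModule k (Fin (n + 1)) →ₗ[k] (goodPairs (Fin (n + 1)) → k) :=
    LinearMap.funLeft k k Subtype.val
  have htop : braidModule q n ⊔ LinearMap.ker restrict = ⊤ := by
    refine eq_top_of_braidModule_le hq hq1 hqs le_sup_left fun z hz =>
      Submodule.mem_sup_right <| LinearMap.mem_ker.2 <| funext fun w => ?_
    exact Pi.single_eq_of_ne (fun h : w.1 = z => hz (h ▸ w.2)) 1
  intro y
  obtain ⟨x, rfl⟩ := LinearMap.funLeft_surjective_of_injective k k _ Subtype.val_injective y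
  obtain ⟨u, hu, w, hw, rfl⟩ := Submodule.mem_sup.1 (htop ▸ Submodule.mem_top (x := x))
  exact ⟨⟨u, hu⟩, by rw [map_add, LinearMap.mem_ker.1 hw, add_zero]; rfl⟩

lemma finrank_braidModule [Field k] (hq : q ≠ 0) (hq1 : q + 1 ≠ 0) (hqs : q - 1 ≠ 0) :
    Module.finrank k (braidModule q n) = Nat.card (goodPairs (Fin (n + 1))) := by
  have := finite_setoid (Fin (n + 1))
  have := Fintype.ofFinite (goodPairs (Fin (n + 1)))
  rw [(LinearEquiv.ofBijective (restrictGood q n)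
    ⟨restrictGood_injective, restrictGood_surjective hq hq1 hqs⟩).finrank_eq,
    Module.finrank_fintype_fun_eq_card, Nat.card_eq_fintype_card]

end Leading

end TieModule

namespace BT

lemma finrank_BTC_eq_card (n : ℕ) :
    Module.finrank Kv (BTC n) = Nat.card (goodPairs (Fin (n + 1))) := by
  have hX (P : Polynomial ℂ) (hP : P ≠ 0) : algebraMap (Polynomial ℂ) Kv P ≠ 0 :=
    (map_ne_zero_iff _ (RatFunc.algebraMap_injective ℂ)).2 hP
  have hadd : (vv ^ 2 + 1 : Kv) ≠ 0 := by
    simpa only [map_add, map_pow, map_one, RatFunc.algebraMap_X] using!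
      hX _ (Polynomial.X_pow_add_C_ne_zero two_pos (1 : ℂ))
  have hsub : (vv ^ 2 - 1 : Kv) ≠ 0 := by
    simpa only [map_sub, map_pow, map_one, RatFunc.algebraMap_X] using!
      hX _ (Polynomial.X_pow_sub_C_ne_zero two_pos (1 : ℂ))
  rw [finrank_BTC, TieModule.finrank_braidModule vv_sq_ne_zero hadd hsub]

end BT

section Counting

open Equiv Finset

lemma existsUnique_strictAnti_comp_perm {X α : Type*} [LinearOrder X] [Finite X] [LinearOrder α]
    {w : X → α} (hw : Function.Injective w) : ∃! σ : Perm X, StrictAnti (w ∘ σ) := by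
  cases nonempty_fintype X
  set e := Fintype.orderIsoFinOfCardEq X rfl
  set f : Fin (Fintype.card X) → αᵒᵈ := OrderDual.toDual ∘ w ∘ e
  have hf : Function.Injective f := OrderDual.toDual.injective.comp (hw.comp e.injective)
  have hiff (σ : Perm (Fin (Fintype.card X))) :
      StrictAnti (w ∘ e.toEquiv.permCongr σ) ↔ σ = Tuple.sort f := by
    rw [Tuple.eq_sort_iff]
    refine ⟨fun h => ⟨?_, ?_⟩, fun h x y hxy => ?_⟩
    · intro i j hij
      simpa [f] using h.antitone (e.monotone hij)
    · exact fun i j hij h => absurd (σ.injective (hf h)) hij.ne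
    · refine (h.1.strictMono_of_injective (hf.comp σ.injective)) (e.symm.strictMono hxy)
  refine ⟨e.toEquiv.permCongr (Tuple.sort f), (hiff _).2 rfl, fun σ hσ => ?_⟩
  obtain ⟨σ, rfl⟩ := e.toEquiv.permCongr.surjective σ
  rw [(hiff σ).1 hσ]

/-- The number of arrangements of `b` values that are not decreasing, a single value being
never considered as decreasing. -/
def nondescendingCount (b : ℕ) : ℕ := if b ≤ 1 then 1 else b.factorial - 1

open Classical in
lemma card_perm_not_strictAnti_comp {X α : Type*} [LinearOrder X] [Fintype X] [LinearOrder α]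
    {w : X → α} (hw : Function.Injective w) :
    #{σ : Perm X | ¬ (1 < Fintype.card X ∧ StrictAnti (w ∘ σ))} =
      nondescendingCount (Fintype.card X) := by
  rw [nondescendingCount]
  split_ifs with hX
  · have := Fintype.card_le_one_iff_subsingleton.1 hX
    simp only [hX.not_gt, false_and, not_false_eq_true, filter_true, card_univ, Fintype.card_unique]
  · obtain ⟨σ, hσ, huniq⟩ := existsUnique_strictAnti_comp_perm hw
    have hsingle : ({σ : Perm X | ¬ (1 < Fintype.card X ∧ StrictAnti (w ∘ σ))} : Finset (Perm X)) =
        univ.erase σ := by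
      ext σ'
      rw [mem_filter_univ, mem_erase, and_iff_left (mem_univ _), and_iff_right (not_le.1 hX),
        not_iff_not]
      exact ⟨huniq σ', fun h => h ▸ hσ⟩
    rw [hsingle, card_erase_of_mem (mem_univ σ), card_univ, Fintype.card_perm]

-- Double counting of the pairs consisting of a bijection and a family of permutations of the
-- summands, which act by precomposition.
open Classical in
lemma card_sigma_equiv_mul_prod_factorial {ι α : Type*} [Fintype ι] {X : ι → Type*}
    [∀ i, Fintype (X i)] [Fintype α] (e₀ : (Σ i, X i) ≃ α)
    {P : ∀ i, (X i → α) → Prop} {c : ι → ℕ}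
    (hc : ∀ i (w : X i → α), Function.Injective w → #{σ : Perm (X i) | P i (w ∘ σ)} = c i) :
    #{e : (Σ i, X i) ≃ α | ∀ i, P i (e ∘ Sigma.mk i)} * ∏ i, (Fintype.card (X i)).factorial =
      (Fintype.card α).factorial * ∏ i, c i := by
  have hcount := sum_card_bipartiteAbove_eq_sum_card_bipartiteBelow
    (s := (univ : Finset (∀ i, Perm (X i)))) (t := (univ : Finset ((Σ i, X i) ≃ α)))
    fun (g : ∀ i, Perm (X i)) (e : (Σ i, X i) ≃ α) => ∀ i, P i ((e ∘ Sigma.mk i) ∘ g i)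
  have habove (g : ∀ i, Perm (X i)) :
      #{e : (Σ i, X i) ≃ α | ∀ i, P i ((e ∘ Sigma.mk i) ∘ g i)} =
        #{e : (Σ i, X i) ≃ α | ∀ i, P i (e ∘ Sigma.mk i)} := by
    refine card_equiv ((Equiv.sigmaCongrRight g).symm.equivCongr (Equiv.refl α)) fun e => ?_
    rw [mem_filter_univ, mem_filter_univ]
    rfl
  have hbelow (e : (Σ i, X i) ≃ α) :
      #{g : ∀ i, Perm (X i) | ∀ i, P i ((e ∘ Sigma.mk i) ∘ g i)} = ∏ i, c i := by
    have hpi : ({g : ∀ i, Perm (X i) | ∀ i, P i ((e ∘ Sigma.mk i) ∘ g i)} : Finset _) =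
        Fintype.piFinset fun i => {σ : Perm (X i) | P i ((e ∘ Sigma.mk i) ∘ σ)} := by
      ext g
      simp only [mem_filter_univ, Fintype.mem_piFinset]
    rw [hpi, Fintype.card_piFinset]
    exact prod_congr rfl fun i _ => hc i _ (e.injective.comp sigma_mk_injective)
  simp only [bipartiteAbove, bipartiteBelow, habove, hbelow, sum_const, smul_eq_mul, card_univ,
    Fintype.card_pi, Fintype.card_perm, Fintype.card_equiv e₀, Fintype.card_congr e₀] at hcount
  rw [mul_comm, hcount]

end Counting

section Partitions

open Equiv Finset

variable {α : Type*} [DecidableEq α]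

lemma sup_erase_parts {s B : Finset α} (P : Finpartition s) (hB : B ∈ P.parts) :
    (P.parts.erase B).sup id = s \ B := by
  have hdisj : Disjoint B ((P.parts.erase B).sup id) :=
    P.supIndep (erase_subset _ _) hB (notMem_erase _ _)
  have hunion : B ∪ (P.parts.erase B).sup id = s := by
    rw [← sup_eq_union, ← id_eq B, ← sup_insert, id_eq, insert_erase hB, P.sup_parts]
  rw [← union_sdiff_cancel_left hdisj, hunion]

lemma insert_notMem_parts {a : α} {s : Finset α} (ha : a ∉ s) (P : Finpartition s)
    (B : Finset α) : insert a B ∉ P.parts := fun h => ha (P.subset h (mem_insert_self a B))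

lemma sum_finpartition_insert {M : Type*} [AddCommMonoid M] {a : α} {t : Finset α} (ha : a ∉ t)
    (F : Finset (Finset α) → M) :
    ∑ P : Finpartition (insert a t), F P.parts =
      ∑ C ∈ t.powerset, ∑ Q : Finpartition (t \ C), F (insert (insert a C) Q.parts) := by
  rw [sum_sigma']
  symm
  refine sum_bij (fun x hx => x.2.extend (b := insert a x.1) (insert_ne_empty a x.1) ?_ ?_)
    (fun _ _ => mem_univ _) ?_ ?_ fun _ _ => rfl
  · rw [disjoint_insert_right, mem_sdiff, not_and_or]
    exact ⟨.inl ha, sdiff_disjoint⟩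
  · rw [sup_eq_union, union_insert, sdiff_union_of_subset (mem_powerset.1 (mem_sigma.1 hx).1)]
  · rintro ⟨C, Q⟩ hC ⟨C', Q'⟩ hC' h
    have hparts : insert (insert a C) Q.parts = insert (insert a C') Q'.parts :=
      congrArg Finpartition.parts h
    have hblock : insert a C = insert a C' :=
      (mem_insert.1 (hparts ▸ mem_insert_self _ _)).resolve_right
        (insert_notMem_parts (notMem_sdiff_of_notMem_left ha) Q' C)
    obtain rfl : C = C' := by
      have haC : a ∉ C := fun h => ha (mem_powerset.1 (mem_sigma.1 hC).1 h)
      have haC' : a ∉ C' := fun h => ha (mem_powerset.1 (mem_sigma.1 hC').1 h)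
      rw [← erase_insert haC, hblock, erase_insert haC']
    obtain rfl : Q = Q' := by
      ext1
      rw [← erase_insert (insert_notMem_parts (notMem_sdiff_of_notMem_left ha) Q C), hparts,
        erase_insert (insert_notMem_parts (notMem_sdiff_of_notMem_left ha) Q' C)]
    rfl
  · intro P _
    have haP : a ∈ P.part a := P.mem_part (mem_insert_self a t)
    have hP : P.part a ∈ P.parts := P.part_mem.2 (mem_insert_self a t)
    have hsup : (P.parts.erase (P.part a)).sup id = t \ (P.part a).erase a := by
      rw [sup_erase_parts P hP]
      grind
    have hsub : (P.part a).erase a ⊆ t := subset_insert_iff.1 (P.part_subset a)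
    refine ⟨⟨(P.part a).erase a, P.ofSubset (erase_subset (P.part a) P.parts) hsup⟩,
      mem_sigma.2 ⟨mem_powerset.2 hsub, mem_univ _⟩, ?_⟩
    ext1
    change insert (insert a ((P.part a).erase a)) (P.parts.erase (P.part a)) = P.parts
    rw [insert_erase haP, insert_erase hP]

/-- The number of pairs in `goodPairs` on `N` values, computed by removing the block of one value:
`m` is the number of its other members, which are chosen first, followed by the positions of the
block and the order of its values. -/
def goodPairCount : ℕ → ℕ
  | 0 => 1
  | N + 1 => ∑ m : Fin (N + 1), N.choose m * ((N + 1).choose (m + 1) *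
      nondescendingCount (m + 1) * goodPairCount (N - m))

lemma sum_finpartition_multinomial (s : Finset α) :
    ∑ P : Finpartition s, Nat.multinomial P.parts card * ∏ B ∈ P.parts, nondescendingCount #B =
      goodPairCount #s := by
  induction s using Finset.strongInduction with
  | H s ih =>
    rcases s.eq_empty_or_nonempty with rfl | ⟨a, has⟩
    · rw [← bot_eq_empty, Fintype.sum_unique, Finpartition.parts_eq_empty_iff.2 rfl,
        Nat.multinomial_empty, prod_empty, bot_eq_empty, card_empty, goodPairCount, mul_one]
    obtain ⟨t, ha, rfl⟩ : ∃ t, a ∉ t ∧ insert a t = s :=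
      ⟨s.erase a, notMem_erase a s, insert_erase has⟩
    have hterm (C : Finset α) (hC : C ∈ t.powerset) :
        ∑ Q : Finpartition (t \ C), Nat.multinomial (insert (insert a C) Q.parts) card *
            ∏ B ∈ insert (insert a C) Q.parts, nondescendingCount #B =
          (#t + 1).choose (#C + 1) * nondescendingCount (#C + 1) * goodPairCount (#t - #C) := by
      have hCt := mem_powerset.1 hC
      have hcard : #(insert a C) = #C + 1 := card_insert_of_notMem fun h => ha (hCt h)
      have hsub : t \ C ⊂ insert a t := sdiff_subset.trans_ssubset (ssubset_insert ha)
      rw [← card_sdiff_of_subset hCt, ← ih _ hsub, mul_sum]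
      refine sum_congr rfl fun Q _ => ?_
      have hQ := insert_notMem_parts (notMem_sdiff_of_notMem_left ha) Q C
      have hsum : #C + 1 + #(t \ C) = #t + 1 := by
        rw [add_right_comm, add_comm #C, card_sdiff_add_card_eq_card hCt]
      rw [Nat.multinomial_insert hQ, prod_insert hQ, Q.sum_card_parts, hcard, hsum,
        mul_mul_mul_comm]
    rw [sum_finpartition_insert ha fun p => Nat.multinomial p card *
        ∏ B ∈ p, nondescendingCount #B, sum_congr rfl hterm,
      sum_powerset_apply_card fun m => (#t + 1).choose (m + 1) * nondescendingCount (m + 1) *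
        goodPairCount (#t - m), sum_range, card_insert_of_notMem ha, goodPairCount]
    rfl

end Partitions

section GoodPairs

open Equiv Finset

lemma bijective_ker_part (α : Type*) [Fintype α] [DecidableEq α] :
    Function.Bijective fun P : Finpartition (univ : Finset α) => Setoid.ker P.part := by
  classical
  constructor
  · intro P P' h
    have hpart : P.part = P'.part := by
      ext a b
      rw [P.mem_part_iff_part_eq_part (mem_univ b) (mem_univ a),
        P'.mem_part_iff_part_eq_part (mem_univ b) (mem_univ a)]
      exact Setoid.ext_iff.1 h b a
    ext B
    exact ⟨fun hB => by
      obtain ⟨a, -, rfl⟩ := P.part_surjOn hB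
      exact hpart ▸ P'.part_mem.2 (mem_univ a), fun hB => by
      obtain ⟨a, -, rfl⟩ := P'.part_surjOn hB
      exact hpart ▸ P.part_mem.2 (mem_univ a)⟩
  · intro π
    refine ⟨Finpartition.ofSetoid π, Setoid.ext fun a b => ?_⟩
    rw [Setoid.ker_def, ← Finpartition.mem_part_iff_part_eq_part _ (mem_univ a) (mem_univ b),
      Finpartition.mem_part_ofSetoid_iff_rel]
    exact π.comm'

variable {α : Type*} [Fintype α] [LinearOrder α]

lemma isDescendingBlock_ker_part {P : Finpartition (univ : Finset α)} {τ : Perm α} {a : α} :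
    IsDescendingBlock (Setoid.ker P.part) τ a ↔
      1 < #(P.part a) ∧ StrictAntiOn τ.symm (P.part a) := by
  have hmem (b : α) : Setoid.ker P.part a b ↔ b ∈ P.part a := by
    rw [Setoid.ker_def, P.mem_part_iff_part_eq_part (mem_univ b) (mem_univ a), eq_comm]
  simp only [IsDescendingBlock, hmem]
  refine and_congr ?_ ⟨fun h b hb c hc => h b c hb hc, fun h b c hb hc => h hb hc⟩
  exact ⟨fun ⟨b, hb, hne⟩ => one_lt_card.2 ⟨b, hb, a, P.mem_part (mem_univ a), hne⟩,
    fun h => exists_mem_ne h a⟩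

open Classical in
lemma card_perm_not_isDescendingBlock (P : Finpartition (univ : Finset α)) :
    #{τ : Perm α | ∀ a, ¬ IsDescendingBlock (Setoid.ker P.part) τ a} =
      Nat.multinomial P.parts card * ∏ B ∈ P.parts, nondescendingCount #B := by
  let e₀ : (Σ B : P.parts, B.1) ≃ α :=
    P.equivSigmaParts.symm.trans (Equiv.subtypeUnivEquiv mem_univ)
  have hfactor : 0 < ∏ B ∈ P.parts, (#B).factorial := prod_pos fun B _ => Nat.factorial_pos _
  have hblocks : #{τ : Perm α | ∀ a, ¬ IsDescendingBlock (Setoid.ker P.part) τ a} =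
      #{e : (Σ B : P.parts, B.1) ≃ α |
        ∀ B, ¬ (1 < #B.1 ∧ StrictAnti (e ∘ Sigma.mk B))} := by
    refine card_equiv ((Equiv.inv (Perm α)).trans (e₀.symm.equivCongr (Equiv.refl α))) fun τ => ?_
    have hanti (B : P.parts) : StrictAntiOn τ.symm (B : Finset α) ↔
        StrictAnti ((e₀.trans τ.symm) ∘ Sigma.mk B) :=
      ⟨fun h b c hbc => h b.2 c.2 hbc, fun h b hb c hc hbc => @h ⟨b, hb⟩ ⟨c, hc⟩ hbc⟩
    simp only [mem_filter_univ, isDescendingBlock_ker_part]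
    refine ⟨fun h B => ?_, fun h a => ?_⟩
    · obtain ⟨a, -, ha⟩ := P.part_surjOn B.2
      exact (and_congr_right' (hanti B)).not.1 (ha ▸ h a)
    · have ha := P.part_mem.2 (mem_univ a)
      exact (and_congr_right' (hanti ⟨_, ha⟩)).not.2 (h ⟨_, ha⟩)
  have hspec : (Fintype.card α).factorial =
      (∏ B ∈ P.parts, (#B).factorial) * Nat.multinomial P.parts card := by
    rw [Nat.multinomial_spec, P.sum_card_parts, card_univ]
  have hcount := card_sigma_equiv_mul_prod_factorial e₀
    (P := fun B w => ¬ (1 < #B.1 ∧ StrictAnti w))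
    (c := fun B => nondescendingCount #B.1)
    fun B w hw => by
      convert card_perm_not_strictAnti_comp hw <;> exact (Fintype.card_coe B.1).symm
  simp only [hspec, Fintype.card_coe, prod_coe_sort P.parts fun B => (#B).factorial,
    prod_coe_sort P.parts fun B => nondescendingCount #B] at hcount
  refine Nat.eq_of_mul_eq_mul_right hfactor ?_
  rw [hblocks, mul_right_comm, mul_comm (Nat.multinomial _ _)]
  convert hcount

lemma card_goodPairs : Nat.card (goodPairs α) = goodPairCount (Fintype.card α) := by
  classical
  have := finite_setoid α
  have := Fintype.ofFinite (Setoid α)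
  rw [← card_univ, ← sum_finpartition_multinomial, ← sum_congr rfl fun P _ =>
      card_perm_not_isDescendingBlock P, (bijective_ker_part α).sum_comp fun π =>
      #{τ : Perm α | ∀ a, ¬ IsDescendingBlock π τ a}]
  refine (Nat.card_congr (subtypeProdEquivSigmaSubtype fun π τ =>
    ∀ a, ¬ IsDescendingBlock π τ a)).trans ?_
  rw [Nat.card_sigma]
  exact sum_congr rfl fun π _ => by rw [Nat.card_eq_fintype_card, Fintype.card_subtype]

end GoodPairs

theorem dim_braid_image_small_rank_general (n : ℕ) :
    Module.finrank Kv (BTC n) = goodPairCount (n + 1) := by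
  rw [BT.finrank_BTC_eq_card, card_goodPairs, Fintype.card_fin]

/-- The dimension of `𝒞_n(v)` over `ℂ(v)` equals
`3, 20, 217, 3364, 71098, 1960867` for `n = 1, 2, 3, 4, 5, 6`. -/
theorem dim_braid_image_small_rank :
    Module.finrank Kv ↥(BTC 1) = 3 ∧
    Module.finrank Kv ↥(BTC 2) = 20 ∧
    Module.finrank Kv ↥(BTC 3) = 217 ∧
    Module.finrank Kv ↥(BTC 4) = 3364 ∧
    Module.finrank Kv ↥(BTC 5) = 71098 ∧
    Module.finrank Kv ↥(BTC 6) = 1960867 := by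
  simp [dim_braid_image_small_rank_general, goodPairCount, Fin.sum_univ_succ,
    nondescendingCount, Nat.choose, Nat.factorial]
end
end

section
/- Let I ⊆ {1,…,n} have contiguous blocks B_1,…,B_k. For every w ∈ S_{n+1} and every choice of reflections (transpositions) r_1,…,r_k with r_j ∈ W_{B_j}, the element g_w · (1 + g_{r_1}) ⋯ (1 + g_{r_k}) · ∏_{i∈I} e_i of ℰ_n(v) lies in the subalgebra 𝒞_n(v) generated by g_1,…,g_n. -/
noncomputable section

open scoped Classical

/-- `B` is a contiguous block of `I ⊆ {1, …, n}` (subsets of `{1, …, n}` are modelled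
as `Finset (Fin n)`): a maximal subset of `I` consisting of consecutive integers. -/
def IsBlock {n : ℕ} (I B : Finset (Fin n)) : Prop :=
  ∃ a b : Fin n, a ≤ b ∧ B = Finset.Icc a b ∧ B ⊆ I ∧
    (∀ c : Fin n, (c : ℕ) + 1 = (a : ℕ) → c ∉ I) ∧
    (∀ c : Fin n, (b : ℕ) + 1 = (c : ℕ) → c ∉ I)

/-- The set of contiguous blocks of `I`. -/
noncomputable def blocksOf {n : ℕ} (I : Finset (Fin n)) : Finset (Finset (Fin n)) :=
  I.powerset.filter (fun B => IsBlock I B)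

/-- `n_i(I)`: the number of contiguous blocks of `I` of size `i`. -/
noncomputable def nBlocks {n : ℕ} (I : Finset (Fin n)) (i : ℕ) : ℕ :=
  ((blocksOf I).filter (fun B => B.card = i)).card

/-- `N_I = (n+1 − Σ_i (i+1)·n_i(I))! · ∏_i ( n_i(I)! · ((i+1)!)^{n_i(I)} )`. -/
noncomputable def NIval {n : ℕ} (I : Finset (Fin n)) : ℕ :=
  Nat.factorial (n + 1 - ∑ i ∈ Finset.range (n + 1), (i + 1) * nBlocks I i) *
    ∏ i ∈ Finset.range (n + 1),
      Nat.factorial (nBlocks I i) * Nat.factorial (i + 1) ^ nBlocks I i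

/-- `j` is a descent of the permutation `w` of `{1, …, n+1}` (positions are indexed
by `Fin (n+1)`, the simple reflections `s_1, …, s_n` by `Fin n`):  `w(j) > w(j+1)`. -/
def IsDescent {n : ℕ} (w : Equiv.Perm (Fin (n + 1))) (j : Fin n) : Prop :=
  w j.succ < w j.castSucc

/-- `D_I`: the number of permutations `w` of `{1, …, n+1}` such that every
contiguous block of `I` contains a descent of `w`. -/
noncomputable def DIval {n : ℕ} (I : Finset (Fin n)) : ℕ :=
  (Finset.univ.filter (fun w : Equiv.Perm (Fin (n + 1)) =>
    ∀ B ∈ blocksOf I, ∃ j ∈ B, IsDescent w j)).card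

/-- The adjacent transposition `s_j = (j, j+1)` as a permutation of `Fin (n+1)`. -/
def sTrans {n : ℕ} (j : Fin n) : Equiv.Perm (Fin (n + 1)) :=
  Equiv.swap j.castSucc j.succ

/-- `l` is a reduced expression for `w`: the corresponding product of adjacent
transpositions is `w`, and `l` has minimal length among all such words. -/
def IsReducedWord {n : ℕ} (w : Equiv.Perm (Fin (n + 1))) (l : List (Fin n)) : Prop :=
  (l.map sTrans).prod = w ∧
    ∀ l' : List (Fin n), (l'.map sTrans).prod = w → l.length ≤ l'.length

/-!
Write `e_S` for the product of the `e_i` over `i ∈ S` and `𝒞` for the algebra generated by the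
`g_i`. The quadratic relation puts `(1 + g_m) e_m` in `𝒞`. If `j` is a neighbour of `i ∈ S`, then
`e_S ((1 + g_j) e_j - g_j) e_S = e_{S ∪ {j}}`, so sandwiching the element `(1 + g_j) e_j - g_j`
of `𝒞` between two copies of `(1 + g_m) e_S` gives `(v² + 1) (1 + g_m) e_{S ∪ {j}}`. Growing an
interval around `m` in this way, `(1 + g_m) e_B ∈ 𝒞` whenever `m` lies in the interval `B`: modulo
`𝒞`, each such `g_m` acts on `e_B` as `-1`. Hence a word `g_{m_1} ⋯ g_{m_ℓ}` in the letters of `B`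
acts as `(-1)^ℓ`. By the exchange condition, the reduced words of an element of `W_B` use only
letters of `B`. Finally, `g_t` commutes with `e_B` for all `t ∈ I` and all blocks `B` of `I`, so the
factors belonging to the different blocks can be collected.
-/

section ReducedWords

variable {n : ℕ}

theorem sTrans_lt_sTrans {j : Fin n} {a b : Fin (n + 1)} (hab : a < b)
    (hj : ¬(a = j.castSucc ∧ b = j.succ)) : sTrans j a < sTrans j b := by
  simp only [sTrans, Equiv.swap_apply_def, Fin.ext_iff, Fin.val_castSucc, Fin.val_succ] at hj ⊢
  grind [Fin.val_castSucc]

theorem exists_shorter_word_of_inversion {a b : Fin (n + 1)} (hab : a < b) {l : List (Fin n)}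
    (hl : (l.map sTrans).prod⁻¹ b < (l.map sTrans).prod⁻¹ a) :
    ∃ l' : List (Fin n), l'.length < l.length ∧
      (l'.map sTrans).prod = Equiv.swap a b * (l.map sTrans).prod := by
  induction l generalizing a b with
  | nil => exact absurd hl (lt_asymm hab)
  | cons j l ih =>
    rw [List.map_cons, List.prod_cons] at hl ⊢
    by_cases hj : a = j.castSucc ∧ b = j.succ
    · obtain ⟨rfl, rfl⟩ := hj
      exact ⟨l, by simp, by simp [sTrans]⟩
    · have hl_tail : (l.map sTrans).prod⁻¹ (sTrans j b) < (l.map sTrans).prod⁻¹ (sTrans j a) := by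
        simpa [mul_inv_rev, sTrans] using hl
      obtain ⟨l', hlen, hprod⟩ := ih (sTrans_lt_sTrans hab hj) hl_tail
      refine ⟨j :: l', by simpa using hlen, ?_⟩
      rw [List.map_cons, List.prod_cons, hprod, ← mul_assoc, ← mul_assoc,
        Equiv.mul_swap_eq_swap_mul]
      simp [sTrans]

theorem sign_prod_map_sTrans (l : List (Fin n)) :
    Equiv.Perm.sign (l.map sTrans).prod = (-1) ^ l.length := by
  have hswap : ∀ p ∈ l.map sTrans, p.IsSwap := by
    rintro _ hp
    obtain ⟨j, -, rfl⟩ := List.mem_map.1 hp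
    exact ⟨_, _, Fin.castSucc_lt_succ.ne, rfl⟩
  simpa using Equiv.Perm.sign_prod_list_swap hswap

open scoped Pointwise

theorem sTrans_mem_stabilizer_Iic {j m : Fin n} (hjm : j ≠ m) :
    sTrans j ∈ MulAction.stabilizer (Equiv.Perm (Fin (n + 1))) (Set.Iic m.castSucc) := by
  rw [MulAction.mem_stabilizer_set]
  intro x
  have hjm' : (j : ℕ) ≠ m := Fin.val_ne_of_ne hjm
  simp only [Equiv.Perm.smul_def, sTrans, Equiv.swap_apply_def, Set.mem_Iic, Fin.le_def,
    Fin.ext_iff, Fin.val_castSucc, Fin.val_succ]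
  split_ifs <;> simp only [Fin.val_castSucc, Fin.val_succ] <;> omega

theorem IsReducedWord.notMem_of_mem_stabilizer_Iic {m : Fin n} {r : Equiv.Perm (Fin (n + 1))}
    {l : List (Fin n)} (hl : IsReducedWord r l)
    (hr : r ∈ MulAction.stabilizer (Equiv.Perm (Fin (n + 1))) (Set.Iic m.castSucc)) :
    m ∉ l := by
  intro hm
  obtain ⟨l₁, l₂, rfl, hm₁⟩ := List.eq_append_cons_of_mem hm
  obtain ⟨rfl, hmin⟩ := hl
  simp only [List.map_append, List.map_cons, List.prod_append, List.prod_cons] at hr hmin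
  have hl₁ : (l₁.map sTrans).prod ∈
      MulAction.stabilizer (Equiv.Perm (Fin (n + 1))) (Set.Iic m.castSucc) := by
    refine Subgroup.list_prod_mem _ fun p hp ↦ ?_
    obtain ⟨j, hj, rfl⟩ := List.mem_map.1 hp
    exact sTrans_mem_stabilizer_Iic (ne_of_mem_of_not_mem hj hm₁)
  have hsuffix (x : Fin (n + 1)) :
      (sTrans m * (l₂.map sTrans).prod)⁻¹ x ≤ m.castSucc ↔ x ≤ m.castSucc :=
    MulAction.mem_stabilizer_set.1 (inv_mem ((Subgroup.mul_mem_cancel_left _ hl₁).1 hr)) x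
  have hinv : (l₂.map sTrans).prod⁻¹ m.succ < (l₂.map sTrans).prod⁻¹ m.castSucc := by
    have hle := (hsuffix m.castSucc).2 le_rfl
    have hlt := not_le.1 (mt (hsuffix m.succ).1 Fin.castSucc_lt_succ.not_ge)
    simpa [sTrans] using hle.trans_lt hlt
  obtain ⟨l', hlen, hprod⟩ := exists_shorter_word_of_inversion Fin.castSucc_lt_succ hinv
  have hle := hmin (l₁ ++ l') (by simp [hprod, sTrans])
  simp only [List.length_append, List.length_cons] at hle
  omega

theorem IsReducedWord.mem_of_mem_closure {B : Finset (Fin n)} {r : Equiv.Perm (Fin (n + 1))}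
    {l : List (Fin n)} (hl : IsReducedWord r l)
    (hr : r ∈ Subgroup.closure {p : Equiv.Perm (Fin (n + 1)) | ∃ m ∈ B, p = sTrans m})
    {i : Fin n} (hi : i ∈ l) : i ∈ B := by
  by_contra hiB
  refine hl.notMem_of_mem_stabilizer_Iic ((Subgroup.closure_le _).2 ?_ hr) hi
  rintro _ ⟨j, hj, rfl⟩
  exact sTrans_mem_stabilizer_Iic (ne_of_mem_of_not_mem hj hiB)

end ReducedWords

section Blocks

variable {n : ℕ}

theorem Icc_eq_insert_left {a a' b : Fin n} (ha : (a : ℕ) + 1 = a') (hab : a ≤ b) :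
    Finset.Icc a b = insert a (Finset.Icc a' b) := by
  ext x
  simp only [Finset.mem_insert, Finset.mem_Icc, Fin.le_def, Fin.ext_iff] at hab ⊢
  omega

theorem Icc_eq_insert_right {a b b' : Fin n} (hb : (b' : ℕ) + 1 = b) (hab : a ≤ b) :
    Finset.Icc a b = insert b (Finset.Icc a b') := by
  ext x
  simp only [Finset.mem_insert, Finset.mem_Icc, Fin.le_def, Fin.ext_iff] at hab ⊢
  omega

theorem IsBlock.subset {I B : Finset (Fin n)} (hB : IsBlock I B) : B ⊆ I := by
  obtain ⟨_, _, _, _, hBI, _⟩ := hB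
  exact hBI

theorem mem_blocksOf {I B : Finset (Fin n)} : B ∈ blocksOf I ↔ IsBlock I B := by
  simpa [blocksOf] using IsBlock.subset

theorem IsBlock.mem_or_two_le_dist {I B : Finset (Fin n)} (hB : IsBlock I B) {t : Fin n}
    (ht : t ∈ I) : t ∈ B ∨ ∀ j ∈ B, 2 ≤ Nat.dist j t := by
  obtain ⟨a, b, -, rfl, -, ha, hb⟩ := hB
  have hta : (t : ℕ) + 1 ≠ a := fun h ↦ ha t h ht
  have htb : (b : ℕ) + 1 ≠ t := fun h ↦ hb t h ht
  simp only [Finset.mem_Icc, Fin.le_def, Nat.dist]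
  grind

theorem exists_isBlock_mem {I : Finset (Fin n)} {i : Fin n} (hi : i ∈ I) :
    ∃ B, IsBlock I B ∧ i ∈ B := by
  obtain ⟨B, hB⟩ := (I.powerset.filter fun B ↦ i ∈ B ∧ ∃ a b, B = Finset.Icc a b).exists_maximal
    ⟨{i}, by simpa [hi] using ⟨i, i, (Finset.Icc_self i).symm⟩⟩
  simp only [Finset.mem_filter, Finset.mem_powerset] at hB
  obtain ⟨⟨hBI, hiB, a, b, rfl⟩, hmax⟩ := hB
  have hIcc_sub {c d : Fin n} (hI : Finset.Icc c d ⊆ I) (hsub : Finset.Icc a b ⊆ Finset.Icc c d) :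
      Finset.Icc c d ⊆ Finset.Icc a b :=
    hmax ⟨hI, hsub hiB, c, d, rfl⟩ hsub
  have hab : a ≤ b := Finset.nonempty_Icc.1 ⟨i, hiB⟩
  refine ⟨_, ⟨a, b, hab, rfl, hBI, fun c hc hcI ↦ ?_, fun c hc hcI ↦ ?_⟩, hiB⟩
  · have hca : c < a := Fin.lt_def.2 (by omega)
    have hIcc := Icc_eq_insert_left hc (hca.le.trans hab)
    have hsub := hIcc_sub (hIcc ▸ Finset.insert_subset hcI hBI) (hIcc ▸ Finset.subset_insert _ _)
    exact hca.not_ge (Finset.mem_Icc.1 (hsub (Finset.left_mem_Icc.2 (hca.le.trans hab)))).1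
  · have hbc : b < c := Fin.lt_def.2 (by omega)
    have hIcc := Icc_eq_insert_right hc (hab.trans hbc.le)
    have hsub := hIcc_sub (hIcc ▸ Finset.insert_subset hcI hBI) (hIcc ▸ Finset.subset_insert _ _)
    exact hbc.not_ge (Finset.mem_Icc.1 (hsub (Finset.right_mem_Icc.2 (hab.trans hbc.le)))).2

theorem univ_biUnion_eq_of_blocks {I : Finset (Fin n)} {κ : Type*} [Fintype κ]
    {B : κ → Finset (Fin n)} (hBmem : ∀ j, B j ∈ blocksOf I)
    (hBsurj : ∀ b ∈ blocksOf I, ∃ j, B j = b) : Finset.univ.biUnion B = I := by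
  refine Finset.Subset.antisymm
    (Finset.biUnion_subset.2 fun j _ ↦ (mem_blocksOf.1 (hBmem j)).subset) fun i hi ↦ ?_
  obtain ⟨C, hC, hiC⟩ := exists_isBlock_mem hi
  obtain ⟨j, rfl⟩ := hBsurj C (mem_blocksOf.2 hC)
  exact Finset.mem_biUnion.2 ⟨j, Finset.mem_univ j, hiC⟩

end Blocks

section Products

theorem list_prod_map_mul_of_commute {M κ : Type*} [Monoid M] {x y : κ → M} (js : List κ)
    (hxy : ∀ j j', Commute (x j) (y j')) :
    (js.map fun j ↦ x j * y j).prod = (js.map x).prod * (js.map y).prod := by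
  induction js with
  | nil => simp
  | cons j js ih =>
    have hcomm : Commute (js.map x).prod (y j) :=
      Commute.list_prod_left _ _ (List.forall_mem_map.2 fun j' _ ↦ hxy j' j)
    simp only [List.map_cons, List.prod_cons, ih]
    rw [hcomm.symm.mul_mul_mul_comm]

theorem one_sub_word_mul_mem {K A ι : Type*} [CommRing K] [Ring A] [Algebra K A] {g : ι → A} {x : A}
    {l : List ι} (hl : ∀ i ∈ l, (1 + g i) * x ∈ Algebra.adjoin K (Set.range g)) :
    (1 - (-1 : ℤˣ) ^ l.length • (l.map g).prod) * x ∈ Algebra.adjoin K (Set.range g) := by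
  induction l with
  | nil => simp
  | cons i l ih =>
    rw [List.forall_mem_cons] at hl
    have hstep : (1 - (-1 : ℤˣ) ^ (i :: l).length • ((i :: l).map g).prod) * x =
        (1 + g i) * x - g i * ((1 - (-1 : ℤˣ) ^ l.length • (l.map g).prod) * x) := by
      rw [List.length_cons, pow_succ, mul_neg_one, Units.neg_smul, List.map_cons, List.prod_cons,
        ← mul_smul_comm]
      noncomm_ring
    rw [hstep]
    exact sub_mem hl.1 (mul_mem (Algebra.subset_adjoin ⟨i, rfl⟩) (ih hl.2))

/-- The product `e_S` of the `e_i` over `i ∈ S`, taken in increasing order of the indices. -/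
def tieProd {A ι : Type*} [Monoid A] [LinearOrder ι] (e : ι → A) (S : Finset ι) : A :=
  ((S.sort (· ≤ ·)).map e).prod

end Products

/-- Families `g`, `e` in a `K`-algebra satisfying those relations of the algebra of braids and ties
that involve the ties `e`, with a parameter `q` in place of `v²`; the relations among the `g` alone
are left out. -/
structure IsTiedFamily {K A : Type*} [CommRing K] [Ring A] [Algebra K A] {n : ℕ}
    (q : K) (g e : Fin n → A) : Prop where
  tie_commute_of_far : ∀ i j : Fin n, 2 ≤ Nat.dist i j → Commute (e i) (g j)
  tie_commute_tie : ∀ i j, Commute (e i) (e j)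
  isIdempotentElem_tie : ∀ i, IsIdempotentElem (e i)
  tie_commute_self : ∀ i, Commute (e i) (g i)
  tie_mul_tie_mul : ∀ i j : Fin n, Nat.dist i j = 1 → e i * e j * g j = e i * g j * e i
  tie_mul_mul_tie : ∀ i j : Fin n, Nat.dist i j = 1 → e i * g j * e i = g j * e i * e j
  mul_self : ∀ i, g i * g i = 1 + (q - 1) • (e i * (1 + g i))

namespace IsTiedFamily

variable {K A : Type*} [CommRing K] [Ring A] [Algebra K A] {n : ℕ} {q : K} {g e : Fin n → A}

theorem tieProd_insert (h : IsTiedFamily q g e) (i : Fin n) (S : Finset (Fin n)) :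
    tieProd e (insert i S) = e i * tieProd e S := by
  have hnew {T : Finset (Fin n)} (hi : i ∉ T) : tieProd e (insert i T) = e i * tieProd e T := by
    have hperm : ((insert i T).sort (· ≤ ·)).Perm (i :: T.sort (· ≤ ·)) := by
      rw [← Multiset.coe_eq_coe, ← Multiset.cons_coe]
      simp [Finset.insert_val_of_notMem hi]
    refine (hperm.map e).prod_eq' (List.pairwise_map.2 (List.pairwise_of_forall fun i j ↦ ?_))
    exact h.tie_commute_tie i j
  by_cases hi : i ∈ S
  · rw [← Finset.insert_erase hi, Finset.insert_idem, hnew (Finset.notMem_erase i S), ← mul_assoc,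
      (h.isIdempotentElem_tie i).eq]
  · exact hnew hi

theorem tieProd_union (h : IsTiedFamily q g e) (S T : Finset (Fin n)) :
    tieProd e (S ∪ T) = tieProd e S * tieProd e T := by
  induction S using Finset.induction_on with
  | empty => simp [tieProd]
  | insert i S _ ih => rw [Finset.insert_union, h.tieProd_insert, h.tieProd_insert, ih, mul_assoc]

theorem tie_mul_tieProd (h : IsTiedFamily q g e) {i : Fin n} {S : Finset (Fin n)} (hi : i ∈ S) :
    e i * tieProd e S = tieProd e S := by
  rw [← h.tieProd_insert, Finset.insert_eq_of_mem hi]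

theorem tie_commute_tieProd (h : IsTiedFamily q g e) (i : Fin n) (S : Finset (Fin n)) :
    Commute (e i) (tieProd e S) :=
  Commute.list_prod_right _ _ (List.forall_mem_map.2 fun j _ ↦ h.tie_commute_tie i j)

theorem isIdempotentElem_tieProd (h : IsTiedFamily q g e) (S : Finset (Fin n)) :
    IsIdempotentElem (tieProd e S) := by
  rw [IsIdempotentElem, ← h.tieProd_union, Finset.union_self]

theorem tieProd_biUnion (h : IsTiedFamily q g e) {κ : Type*} [DecidableEq κ]
    (B : κ → Finset (Fin n)) (js : List κ) :
    tieProd e (js.toFinset.biUnion B) = (js.map fun j ↦ tieProd e (B j)).prod := by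
  induction js with
  | nil => simp [tieProd]
  | cons j js ih => simp [Finset.biUnion_insert, h.tieProd_union, ih]

theorem commute_tieProd_of_far (h : IsTiedFamily q g e) {t : Fin n} {S : Finset (Fin n)}
    (ht : ∀ j ∈ S, 2 ≤ Nat.dist j t) : Commute (g t) (tieProd e S) :=
  Commute.list_prod_right _ _ <| List.forall_mem_map.2 fun j hj ↦
    (h.tie_commute_of_far j t (ht j ((Finset.mem_sort _).1 hj))).symm

theorem commute_tie_mul_tie (h : IsTiedFamily q g e) (m i : Fin n) :
    Commute (g m) (e m * e i) := by
  have hm : Commute (g m) (e m) := (h.tie_commute_self m).symm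
  rcases Nat.lt_trichotomy (Nat.dist i m) 1 with hd | hd | hd
  · obtain rfl : i = m := Fin.ext (Nat.eq_of_dist_eq_zero (Nat.lt_one_iff.1 hd))
    exact hm.mul_right hm
  · rw [(h.tie_commute_tie m i).eq, Commute, SemiconjBy, ← mul_assoc]
    exact ((h.tie_mul_tie_mul i m hd).trans (h.tie_mul_mul_tie i m hd)).symm
  · exact hm.mul_right (h.tie_commute_of_far i m hd).symm

theorem commute_tieProd_of_mem (h : IsTiedFamily q g e) {m : Fin n} {S : Finset (Fin n)}
    (hm : m ∈ S) : Commute (g m) (tieProd e S) := by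
  suffices hT : ∀ T : Finset (Fin n), Commute (g m) (e m * tieProd e T) by
    simpa only [h.tie_mul_tieProd hm] using hT S
  intro T
  induction T using Finset.induction_on with
  | empty => simpa [tieProd] using (h.tie_commute_self m).symm
  | insert i T _ ih =>
    have hsplit : e m * tieProd e (insert i T) = e m * e i * (e m * tieProd e T) := by
      rw [h.tieProd_insert, (h.tie_commute_tie m i).symm.mul_mul_mul_comm,
        (h.isIdempotentElem_tie m).eq]
    exact hsplit ▸ (h.commute_tie_mul_tie m i).mul_right ih

theorem one_add_mul_tie_mem (h : IsTiedFamily q g e) (hq : IsUnit (q - 1)) (i : Fin n) :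
    (1 + g i) * e i ∈ Algebra.adjoin K (Set.range g) := by
  have hg : g i ∈ Algebra.adjoin K (Set.range g) := Algebra.subset_adjoin ⟨i, rfl⟩
  have hquad : (q - 1) • ((1 + g i) * e i) = g i * g i - 1 := by
    rw [h.mul_self, add_sub_cancel_left,
      ((Commute.one_right _).add_right (h.tie_commute_self i)).eq]
  refine (Submodule.smul_mem_iff_of_isUnit
    (Subalgebra.toSubmodule (Algebra.adjoin K (Set.range g))) hq).1 ?_
  rw [hquad, Subalgebra.mem_toSubmodule]
  exact sub_mem (mul_mem hg hg) (one_mem _)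

theorem tie_mul_sub_mul_tie (h : IsTiedFamily q g e) {i j : Fin n} (hij : Nat.dist i j = 1) :
    e i * ((1 + g j) * e j - g j) * e i = e i * e j := by
  have hcomm := h.tie_commute_tie i j
  have hidem := h.isIdempotentElem_tie i
  have htie : e i * e j * e i = e i * e j := by rw [hcomm.eq, mul_assoc, hidem.eq]
  have hbraid : e i * (g j * e j) * e i = e i * g j * e i := by
    rw [← (h.tie_commute_self j).eq, ← mul_assoc, h.tie_mul_tie_mul i j hij, mul_assoc, hidem.eq]
  calc e i * ((1 + g j) * e j - g j) * e i
      = e i * e j * e i + e i * (g j * e j) * e i - e i * g j * e i := by noncomm_ring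
    _ = e i * e j := by rw [hbraid, htie, add_sub_cancel_right]

theorem tieProd_mul_sub_mul_tieProd (h : IsTiedFamily q g e) {i j : Fin n} {S : Finset (Fin n)}
    (hi : i ∈ S) (hij : Nat.dist i j = 1) :
    tieProd e S * ((1 + g j) * e j - g j) * tieProd e S = tieProd e (insert j S) := by
  have hi_left := h.tie_mul_tieProd hi
  have hi_right : tieProd e S * e i = tieProd e S := by
    rw [← (h.tie_commute_tieProd i S).eq, hi_left]
  calc tieProd e S * ((1 + g j) * e j - g j) * tieProd e S
      = tieProd e S * e i * ((1 + g j) * e j - g j) * (e i * tieProd e S) := by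
        rw [hi_right, hi_left]
    _ = tieProd e S * (e i * ((1 + g j) * e j - g j) * e i) * tieProd e S := by
        simp only [mul_assoc]
    _ = tieProd e S * e i * (e j * tieProd e S) := by
        rw [h.tie_mul_sub_mul_tie hij]
        simp only [mul_assoc]
    _ = tieProd e (insert j S) := by
        rw [hi_right, (h.tie_commute_tieProd j S).eq, ← mul_assoc,
          (h.isIdempotentElem_tieProd S).eq, ← (h.tie_commute_tieProd j S).eq, h.tieProd_insert]

theorem one_add_mul_tieProd_mul_one_add (h : IsTiedFamily q g e) {m : Fin n} {S : Finset (Fin n)}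
    (hm : m ∈ S) :
    (1 + g m) * tieProd e S * (1 + g m) = (q + 1) • ((1 + g m) * tieProd e S) := by
  have hquad : g m * g m * tieProd e S = tieProd e S + (q - 1) • ((1 + g m) * tieProd e S) := by
    rw [h.mul_self, ((Commute.one_right _).add_right (h.tie_commute_self m)).eq, add_mul, one_mul,
      smul_mul_assoc, mul_assoc, h.tie_mul_tieProd hm]
  calc (1 + g m) * tieProd e S * (1 + g m)
      = (1 + g m) * (1 + g m) * tieProd e S := by
        rw [mul_assoc, mul_assoc,
          ((Commute.one_left _).add_left (h.commute_tieProd_of_mem hm)).eq]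
    _ = (1 + g m) * tieProd e S + g m * tieProd e S + g m * g m * tieProd e S := by noncomm_ring
    _ = (q + 1) • ((1 + g m) * tieProd e S) := by
        rw [hquad, add_mul, one_mul]
        module

theorem one_add_mul_tieProd_insert_mem (h : IsTiedFamily q g e) (hq_sub : IsUnit (q - 1))
    (hq_add : IsUnit (q + 1)) {m i j : Fin n} {S : Finset (Fin n)} (hm : m ∈ S) (hi : i ∈ S)
    (hij : Nat.dist i j = 1)
    (hS : (1 + g m) * tieProd e S ∈ Algebra.adjoin K (Set.range g)) :
    (1 + g m) * tieProd e (insert j S) ∈ Algebra.adjoin K (Set.range g) := by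
  have hcomm : Commute (1 + g m) (tieProd e S) :=
    (Commute.one_left _).add_left (h.commute_tieProd_of_mem hm)
  have hsandwich : (1 + g m) * tieProd e S * ((1 + g j) * e j - g j) * ((1 + g m) * tieProd e S) =
      (q + 1) • ((1 + g m) * tieProd e (insert j S)) := by
    rw [← h.one_add_mul_tieProd_mul_one_add (Finset.mem_insert_of_mem hm),
      ← h.tieProd_mul_sub_mul_tieProd hi hij]
    nth_rw 2 [hcomm.eq]
    simp only [mul_assoc]
  refine (Submodule.smul_mem_iff_of_isUnit
    (Subalgebra.toSubmodule (Algebra.adjoin K (Set.range g))) hq_add).1 ?_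
  rw [← hsandwich, Subalgebra.mem_toSubmodule]
  exact mul_mem (mul_mem hS (sub_mem (h.one_add_mul_tie_mem hq_sub j)
    (Algebra.subset_adjoin ⟨j, rfl⟩))) hS

theorem one_add_mul_tieProd_Icc_mem (h : IsTiedFamily q g e) (hq_sub : IsUnit (q - 1))
    (hq_add : IsUnit (q + 1)) {m a b : Fin n} (hm : m ∈ Finset.Icc a b) :
    (1 + g m) * tieProd e (Finset.Icc a b) ∈ Algebra.adjoin K (Set.range g) := by
  obtain ⟨ham, hmb⟩ := Finset.mem_Icc.1 hm
  rcases ham.eq_or_lt with rfl | ham'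
  · rcases hmb.eq_or_lt with rfl | hmb'
    · simpa [tieProd] using h.one_add_mul_tie_mem hq_sub a
    · obtain ⟨b', hb'⟩ : ∃ b' : Fin n, (b' : ℕ) + 1 = b :=
        ⟨⟨b - 1, by omega⟩, Nat.sub_add_cancel (by omega)⟩
      have hm' : a ∈ Finset.Icc a b' := Finset.left_mem_Icc.2 (Fin.le_def.2 (by omega))
      rw [Icc_eq_insert_right hb' hmb]
      exact h.one_add_mul_tieProd_insert_mem hq_sub hq_add hm'
        (Finset.right_mem_Icc.2 (Finset.mem_Icc.1 hm').2) (by simp [Nat.dist, ← hb'])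
        (h.one_add_mul_tieProd_Icc_mem hq_sub hq_add hm')
  · obtain ⟨a', ha'⟩ : ∃ a' : Fin n, (a : ℕ) + 1 = a' := ⟨⟨a + 1, by omega⟩, rfl⟩
    have hm' : m ∈ Finset.Icc a' b := Finset.mem_Icc.2 ⟨Fin.le_def.2 (by omega), hmb⟩
    rw [Icc_eq_insert_left ha' (ham.trans hmb)]
    exact h.one_add_mul_tieProd_insert_mem hq_sub hq_add hm'
      (Finset.left_mem_Icc.2 (Finset.nonempty_Icc.1 ⟨m, hm'⟩)) (by simp [Nat.dist, ← ha'])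
      (h.one_add_mul_tieProd_Icc_mem hq_sub hq_add hm')
termination_by (b : ℕ) - a

theorem one_sub_word_mul_tieProd_mem (h : IsTiedFamily q g e) (hq_sub : IsUnit (q - 1))
    (hq_add : IsUnit (q + 1)) {I B : Finset (Fin n)} (hB : IsBlock I B) {l : List (Fin n)}
    (hl : ∀ i ∈ l, i ∈ B) :
    (1 - (-1 : ℤˣ) ^ l.length • (l.map g).prod) * tieProd e B ∈
      Algebra.adjoin K (Set.range g) := by
  obtain ⟨a, b, -, rfl, -⟩ := hB
  exact one_sub_word_mul_mem fun i hi ↦ h.one_add_mul_tieProd_Icc_mem hq_sub hq_add (hl i hi)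

theorem commute_tieProd_of_isBlock (h : IsTiedFamily q g e) {I B : Finset (Fin n)}
    (hB : IsBlock I B) {t : Fin n} (ht : t ∈ I) : Commute (g t) (tieProd e B) :=
  (hB.mem_or_two_le_dist ht).elim h.commute_tieProd_of_mem h.commute_tieProd_of_far

theorem list_prod_one_sub_words_mul_tieProd_mem (h : IsTiedFamily q g e) (hq_sub : IsUnit (q - 1))
    (hq_add : IsUnit (q + 1)) {I : Finset (Fin n)} {κ : Type*} [DecidableEq κ]
    {B : κ → Finset (Fin n)} (hB : ∀ j, IsBlock I (B j)) {l : κ → List (Fin n)}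
    (hl : ∀ j, ∀ i ∈ l j, i ∈ B j) (js : List κ) :
    (js.map fun j ↦ 1 - (-1 : ℤˣ) ^ (l j).length • ((l j).map g).prod).prod *
      tieProd e (js.toFinset.biUnion B) ∈ Algebra.adjoin K (Set.range g) := by
  have hcomm (j j' : κ) :
      Commute (1 - (-1 : ℤˣ) ^ (l j).length • ((l j).map g).prod) (tieProd e (B j')) := by
    refine (Commute.one_left _).sub_left (Commute.smul_left ?_ _)
    exact Commute.list_prod_left _ _ <| List.forall_mem_map.2 fun t ht ↦
      h.commute_tieProd_of_isBlock (hB j') ((hB j).subset (hl j t ht))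
  rw [h.tieProd_biUnion, ← list_prod_map_mul_of_commute js hcomm]
  exact list_prod_mem <| List.forall_mem_map.2 fun j _ ↦
    h.one_sub_word_mul_tieProd_mem hq_sub hq_add (hB j) (hl j)

end IsTiedFamily

theorem spanning_element_mem_braid_image_general {K A : Type*} [CommRing K] [Ring A] [Algebra K A]
    {n : ℕ} {q : K} {g e : Fin n → A} (h : IsTiedFamily q g e) (hq_sub : IsUnit (q - 1))
    (hq_add : IsUnit (q + 1)) (I : Finset (Fin n)) (k : ℕ) (B : Fin k → Finset (Fin n))
    (hBmem : ∀ j, B j ∈ blocksOf I) (hBsurj : ∀ b ∈ blocksOf I, ∃ j, B j = b)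
    (lw : List (Fin n)) (r : Fin k → Equiv.Perm (Fin (n + 1)))
    (hr : ∀ j, r j ∈
      Subgroup.closure {p : Equiv.Perm (Fin (n + 1)) | ∃ m ∈ B j, p = sTrans m})
    (lr : Fin k → List (Fin n)) (hlr : ∀ j, IsReducedWord (r j) (lr j)) :
    (lw.map g).prod *
        ((List.finRange k).map
          fun j ↦ 1 - Equiv.Perm.sign (r j) • ((lr j).map g).prod).prod *
        ((I.sort (· ≤ ·)).map e).prod ∈ Algebra.adjoin K (Set.range g) := by
  have hlw : (lw.map g).prod ∈ Algebra.adjoin K (Set.range g) :=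
    list_prod_mem (List.forall_mem_map.2 fun i _ ↦ Algebra.subset_adjoin ⟨i, rfl⟩)
  have hsign (j : Fin k) : Equiv.Perm.sign (r j) = (-1) ^ (lr j).length := by
    rw [← (hlr j).1, sign_prod_map_sTrans]
  have hwords := h.list_prod_one_sub_words_mul_tieProd_mem hq_sub hq_add
    (fun j ↦ mem_blocksOf.1 (hBmem j)) (fun j _ ↦ (hlr j).mem_of_mem_closure (hr j))
    (List.finRange k)
  rw [List.toFinset_finRange, univ_biUnion_eq_of_blocks hBmem hBsurj] at hwords
  simp only [hsign, mul_assoc]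
  exact mul_mem hlw hwords

theorem isTiedFamily_bg_be (n : ℕ) : IsTiedFamily (vv ^ 2) (bg n) (be n) where
  tie_commute_of_far i j hij := by
    simpa [bg, be] using! RingQuot.mkAlgHom_rel Kv (BTRel.eg_comm i j hij)
  tie_commute_tie i j := by
    simpa [be] using! RingQuot.mkAlgHom_rel Kv (BTRel.ee_comm i j)
  isIdempotentElem_tie i := by
    simpa [be] using! RingQuot.mkAlgHom_rel Kv (BTRel.e_idem i)
  tie_commute_self i := by
    simpa [bg, be] using! RingQuot.mkAlgHom_rel Kv (BTRel.eg_same i)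
  tie_mul_tie_mul i j hij := by
    simpa [bg, be] using RingQuot.mkAlgHom_rel Kv (BTRel.eeg₁ i j hij)
  tie_mul_mul_tie i j hij := by
    simpa [bg, be] using RingQuot.mkAlgHom_rel Kv (BTRel.eeg₂ i j hij)
  mul_self i := by
    simpa only [bg, be, map_mul, map_add, map_one, map_smul] using
      RingQuot.mkAlgHom_rel Kv (BTRel.quad i)

theorem isUnit_vv_sq_sub_C (c : ℂ) : IsUnit (vv ^ 2 - RatFunc.C c) := by
  have hpoly : (Polynomial.X ^ 2 - Polynomial.C c : Polynomial ℂ) ≠ 0 :=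
    Polynomial.X_pow_sub_C_ne_zero two_pos c
  simpa [vv] using RatFunc.algebraMap_ne_zero hpoly

/-- Let `I ⊆ {1,…,n}` have contiguous blocks `B_1, …, B_k`. For any
`w ∈ S_{n+1}` and transpositions `r_j ∈ W_{B_j}`, the element
`g_w · (1 + g_{r_1}) ⋯ (1 + g_{r_k}) · ∏_{i∈I} e_i` lies in `𝒞_n(v)`.
(Each `g_u` is expressed via an arbitrary reduced word for `u`.) -/
theorem spanning_element_mem_braid_image (n : ℕ) (hn : 1 ≤ n) (I : Finset (Fin n))
    (k : ℕ) (B : Fin k → Finset (Fin n))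
    (hBmem : ∀ j, B j ∈ blocksOf I) (hBinj : Function.Injective B)
    (hBsurj : ∀ b ∈ blocksOf I, ∃ j, B j = b)
    (w : Equiv.Perm (Fin (n + 1))) (lw : List (Fin n)) (hlw : IsReducedWord w lw)
    (r : Fin k → Equiv.Perm (Fin (n + 1)))
    (hr : ∀ j, (r j).IsSwap ∧
      r j ∈ Subgroup.closure {p : Equiv.Perm (Fin (n + 1)) | ∃ m ∈ B j, p = sTrans m})
    (lr : Fin k → List (Fin n)) (hlr : ∀ j, IsReducedWord (r j) (lr j)) :
    (lw.map (bg n)).prod *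
        ((List.finRange k).map (fun j => 1 + ((lr j).map (bg n)).prod)).prod *
        ((I.sort (· ≤ ·)).map (be n)).prod ∈ BTC n := by
  simpa [BTC, (hr _).1.sign_eq, Units.neg_smul] using
    spanning_element_mem_braid_image_general (isTiedFamily_bg_be n)
      (by simpa using isUnit_vv_sq_sub_C 1) (by simpa using isUnit_vv_sq_sub_C (-1))
      I k B hBmem hBsurj lw r (fun j ↦ (hr j).2) lr hlr
end
end
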